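/- arXiv:1906.01151 — 4 statements merged into one kernel-verified Lean document; each statement's English description precedes it below -/
import Mathlib

section
/- Let (q_n)_{n≥1} be an increasing sequence of positive integers satisfying Property D. Then for every α ∈ (0,1), the sequence (q_n) is α-separated: there exists m₀ ∈ ℕ such that for all integers m, n with m₀ ≤ m < n, whenever s, t ≥ 1 are positive integers with 1 ≤ |s q_m − t q_n| < q_m^α, then s > m^{12}. -/
/-!
Write `a = q m` and `b = q n`. If `s a` and `t b` are distinct but differ by less than `a ^ α`, then
`|log (s a) - log (t b)|` is at most `a ^ (α - 1)`. Splitting off the primes that divide `a b`, this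
difference is an integer linear form in the logarithms of at most `2 D` small primes and in one
further logarithm `log (U / V)` with `U ∣ s`, `V ∣ t`. The lower bound for such forms is the
Gel'fond-Baker method, arranged so that only square roots of rational numbers occur.

Eliminate one coefficient of the form, and let `φ` be an exponential polynomial, with integer
coefficients from Siegel's lemma, that vanishes to high order at the odd integers up to a bound. A
Schwarz lemma makes its derivatives tiny at the half-integers `s / 2` with `s` odd, in a longer
range. There the values are, up to an error controlled by the size of the form, algebraic numbers in
a multiquadratic field, so by Liouville's inequality they vanish. Since the square roots involved
are linearly independent over `ℚ`, the contribution of each parity class of exponents vanishes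
separately. One nonzero class survives as an auxiliary polynomial with exponents in a box of half
the side, half the order of vanishing and a longer range of nodes. After enough halvings the box is
a single point, which is impossible.
-/

open Function

section DividedDifferences

theorem dslope_sub_mul_add_const {𝕜 : Type*} [NontriviallyNormedField 𝕜] {G : 𝕜 → 𝕜} {s : 𝕜}
    (hG : DifferentiableAt 𝕜 G s) (a c z : 𝕜) :
    dslope (fun w => (w - a) * G w + c) s z = (z - a) * dslope G s z + G s := by
  rcases eq_or_ne z s with rfl | hz
  · have hderiv : HasDerivAt (fun w => (w - a) * G w + c) (1 * G z + (z - a) * deriv G z) z :=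
      (((hasDerivAt_id z).sub_const a).mul hG.hasDerivAt).add_const c
    rw [dslope_same, dslope_same, hderiv.deriv]
    ring
  · have hz' : z - s ≠ 0 := sub_ne_zero.2 hz
    rw [dslope_of_ne _ hz, dslope_of_ne _ hz, slope_def_field, slope_def_field]
    field_simp
    ring

theorem sub_mul_dslope_add {𝕜 : Type*} [NontriviallyNormedField 𝕜] (f : 𝕜 → 𝕜) (a z : 𝕜) :
    (z - a) * dslope f a z + f a = f z := by
  rw [← smul_eq_mul, sub_smul_dslope, sub_add_cancel]

variable {f : ℂ → ℂ}

theorem differentiable_dslope (hf : Differentiable ℂ f) (a : ℂ) :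
    Differentiable ℂ (dslope f a) := by
  rw [← differentiableOn_univ] at hf ⊢
  exact (Complex.differentiableOn_dslope Filter.univ_mem).2 hf

theorem differentiable_iterate_dslope (hf : Differentiable ℂ f) (a : ℂ) (k : ℕ) :
    Differentiable ℂ ((swap dslope a)^[k] f) := by
  induction k with
  | zero => exact hf
  | succ k ih =>
    rw [iterate_succ_apply']
    exact differentiable_dslope ih a

theorem iterate_dslope_succ_eq_sub_mul_add (hf : Differentiable ℂ f) (a s : ℂ) (k : ℕ) :
    (swap dslope s)^[k + 1] f = fun z =>
      (z - a) * (swap dslope s)^[k + 1] (dslope f a) z + (swap dslope s)^[k] (dslope f a) s := by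
  have hfa := differentiable_dslope hf a
  induction k with
  | zero =>
    ext z
    simp only [zero_add, iterate_one, iterate_zero, id]
    rw [← dslope_sub_mul_add_const (hfa s) a (f a)]
    simp only [sub_mul_dslope_add]
  | succ k ih =>
    ext z
    rw [iterate_succ_apply', ih, iterate_succ_apply' _ (k + 1) (dslope f a)]
    exact dslope_sub_mul_add_const (differentiable_iterate_dslope hfa s (k + 1) s) a _ z

theorem norm_iterate_dslope_dslope_le (hf : Differentiable ℂ f) {a s : ℂ} {μ : ℝ}
    (has : 2 ≤ ‖s - a‖) (ha : ‖f a‖ ≤ μ) {K : ℕ}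
    (hs : ∀ k < K, ‖(swap dslope s)^[k] f s‖ ≤ μ) :
    ∀ k < K, ‖(swap dslope s)^[k] (dslope f a) s‖ ≤ μ := by
  have norm_quotient_le (x y w : ℂ) (h : (s - a) * y + w = x) (hx : ‖x‖ ≤ μ) (hw : ‖w‖ ≤ μ) :
      ‖y‖ ≤ μ := by
    have : ‖s - a‖ * ‖y‖ ≤ μ + μ := by
      rw [← norm_mul, eq_sub_of_add_eq h]
      exact (norm_sub_le _ _).trans (add_le_add hx hw)
    nlinarith [norm_nonneg y]
  intro k
  induction k with
  | zero => exact fun hk => norm_quotient_le _ _ _ (sub_mul_dslope_add f a s) (hs 0 hk) ha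
  | succ k ih =>
    exact fun hk => norm_quotient_le _ _ _
      (congrFun (iterate_dslope_succ_eq_sub_mul_add hf a s k) s).symm (hs _ hk) (ih (by lia))

theorem iterate_dslope_eq_iteratedDeriv (hf : Differentiable ℂ f) (s : ℂ) (k : ℕ) :
    (swap dslope s)^[k] f s = iteratedDeriv k f s / k.factorial := by
  have h := HasFPowerSeriesAt.has_fpower_series_iterate_dslope_fslope k
    (hf.analyticAt s).hasFPowerSeriesAt
  rw [← h.coeff_zero 1, ← FormalMultilinearSeries.coeff,
    FormalMultilinearSeries.coeff_iterate_fslope, zero_add, FormalMultilinearSeries.coeff_ofScalars]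

theorem iterate_dslope_sum_exp {ι : Type*} (I : Finset ι) (c w : ι → ℂ) (s : ℂ) (k : ℕ) :
    (swap dslope s)^[k] (fun z => ∑ i ∈ I, c i * Complex.exp (w i * z)) s =
      ∑ i ∈ I, c i * Complex.exp (w i * s) * (w i ^ k / k.factorial) := by
  rw [iterate_dslope_eq_iteratedDeriv (by fun_prop), iteratedDeriv_fun_sum (by fun_prop),
    Finset.sum_div]
  refine Finset.sum_congr rfl fun i _ => ?_
  rw [iteratedDeriv_const_mul_field, iteratedDeriv_cexp_const_mul]
  ring

end DividedDifferences

section Schwarz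

variable {f : ℂ → ℂ} {A : Multiset ℂ} {μ : ℝ}

/-- `h` is Newton interpolation's quotient of `f` by the polynomial with root multiset `A`. -/
theorem exists_norm_sub_mul_prod_le (hf : Differentiable ℂ f) (hμ : 0 ≤ μ)
    (hsep : ∀ a ∈ A, ∀ b ∈ A, a ≠ b → 2 ≤ ‖a - b‖)
    (hA : ∀ a ∈ A, ∀ k < A.count a, ‖(swap dslope a)^[k] f a‖ ≤ μ) :
    ∃ h : ℂ → ℂ, Differentiable ℂ h ∧ ∀ (z : ℂ) (ρ : ℝ), 1 ≤ ρ → (∀ a ∈ A, ‖z - a‖ ≤ ρ) →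
      ‖f z - h z * (A.map (z - ·)).prod‖ ≤ μ * A.card * ρ ^ A.card := by
  induction A using Multiset.induction generalizing f with
  | empty => exact ⟨f, hf, fun z ρ _ _ => by simp⟩
  | cons a A ih =>
    have ha : ‖f a‖ ≤ μ := hA a (by simp) 0 (by simp)
    obtain ⟨h, hh, hle⟩ := ih (differentiable_dslope hf a)
      (fun x hx y hy => hsep x (by simp [hx]) y (by simp [hy])) (by
        intro s hs
        rcases eq_or_ne s a with rfl | hne
        · intro k hk
          rw [← iterate_succ_apply (swap dslope s)]
          exact hA s (by simp) (k + 1) (by simpa using hk)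
        · refine norm_iterate_dslope_dslope_le hf (hsep s (by simp [hs]) a (by simp) hne) ha
            fun k hk => hA s (by simp [hs]) k ?_
          rwa [Multiset.count_cons_of_ne hne])
    refine ⟨h, hh, fun z ρ hρ hz => ?_⟩
    calc ‖f z - h z * ((a ::ₘ A).map (z - ·)).prod‖
        = ‖f a + (z - a) * (dslope f a z - h z * (A.map (z - ·)).prod)‖ := by
          rw [← sub_mul_dslope_add f a z, Multiset.map_cons, Multiset.prod_cons]
          congr 1
          ring
      _ ≤ μ * ρ ^ (A.card + 1) + ρ * (μ * A.card * ρ ^ A.card) := by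
          refine norm_add_le_of_le (ha.trans (le_mul_of_one_le_right hμ (one_le_pow₀ hρ))) ?_
          rw [norm_mul]
          exact mul_le_mul (hz a (by simp)) (hle z ρ hρ fun x hx => hz x (by simp [hx]))
            (norm_nonneg _) (by linarith)
      _ = μ * (a ::ₘ A).card * ρ ^ (a ::ₘ A).card := by
          rw [Multiset.card_cons]
          push_cast
          ring

theorem norm_prod_map_sub_le {z : ℂ} {c : ℝ} (h : ∀ a ∈ A, ‖z - a‖ ≤ c) :
    ‖(A.map (z - ·)).prod‖ ≤ c ^ A.card := by
  induction A using Multiset.induction with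
  | empty => simp
  | cons a A ih =>
    have ha := h a (by simp)
    rw [Multiset.map_cons, Multiset.prod_cons, norm_mul, Multiset.card_cons, pow_succ']
    exact mul_le_mul ha (ih fun x hx => h x (by simp [hx])) (norm_nonneg _)
      ((norm_nonneg _).trans ha)

theorem pow_card_le_norm_prod_map_sub {z : ℂ} {c : ℝ} (hc : 0 ≤ c) (h : ∀ a ∈ A, c ≤ ‖z - a‖) :
    c ^ A.card ≤ ‖(A.map (z - ·)).prod‖ := by
  induction A using Multiset.induction with
  | empty => simp
  | cons a A ih =>
    rw [Multiset.map_cons, Multiset.prod_cons, norm_mul, Multiset.card_cons, pow_succ']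
    exact mul_le_mul (h a (by simp)) (ih fun x hx => h x (by simp [hx])) (by positivity)
      (norm_nonneg _)

theorem norm_le_of_norm_iterate_dslope_le {M r R : ℝ} (hf : Differentiable ℂ f) (hμ : 0 ≤ μ)
    (hr : 0 ≤ r) (hrR : r < R) (hR : 1 ≤ R + r)
    (hsep : ∀ a ∈ A, ∀ b ∈ A, a ≠ b → 2 ≤ ‖a - b‖) (hAr : ∀ a ∈ A, ‖a‖ ≤ r)
    (hA : ∀ a ∈ A, ∀ k < A.count a, ‖(swap dslope a)^[k] f a‖ ≤ μ)
    (hM : ∀ z : ℂ, ‖z‖ = R → ‖f z‖ ≤ M) {z : ℂ} (hz : ‖z‖ ≤ r) :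
    ‖f z‖ ≤ μ * A.card * (R + r) ^ A.card +
      (M + μ * A.card * (R + r) ^ A.card) * (2 * r / (R - r)) ^ A.card := by
  obtain ⟨h, hh, hle⟩ := exists_norm_sub_mul_prod_le hf hμ hsep hA
  set N := A.card
  set e := μ * N * (R + r) ^ N
  have hR0 : 0 < R - r := sub_pos.2 hrR
  have remainder_le (w : ℂ) (hw : ‖w‖ ≤ R) : ‖f w - h w * (A.map (w - ·)).prod‖ ≤ e :=
    hle w (R + r) hR fun a ha => norm_sub_le_of_le hw (hAr a ha)
  have quotient_le_on_circle (w : ℂ) (hw : w ∈ frontier (Metric.ball (0 : ℂ) R)) :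
      ‖h w‖ ≤ (M + e) / (R - r) ^ N := by
    rw [frontier_ball _ (by linarith)] at hw
    have hw : ‖w‖ = R := by simpa using hw
    rw [le_div_iff₀ (by positivity)]
    calc ‖h w‖ * (R - r) ^ N ≤ ‖h w‖ * ‖(A.map (w - ·)).prod‖ := by
          gcongr
          refine pow_card_le_norm_prod_map_sub hR0.le fun a ha => ?_
          linarith [hAr a ha, norm_sub_norm_le w a]
      _ = ‖f w - (f w - h w * (A.map (w - ·)).prod)‖ := by rw [← norm_mul, sub_sub_cancel]
      _ ≤ M + e := norm_sub_le_of_le (hM w hw) (remainder_le w hw.le)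
  have quotient_le : ‖h z‖ ≤ (M + e) / (R - r) ^ N := by
    refine Complex.norm_le_of_forall_mem_frontier_norm_le Metric.isBounded_ball
      hh.diffContOnCl quotient_le_on_circle (subset_closure ?_)
    simpa using hz.trans_lt hrR
  have prod_le : ‖(A.map (z - ·)).prod‖ ≤ (2 * r) ^ N :=
    norm_prod_map_sub_le fun a ha => (norm_sub_le_of_le hz (hAr a ha)).trans_eq (two_mul r).symm
  calc ‖f z‖ = ‖(f z - h z * (A.map (z - ·)).prod) + h z * (A.map (z - ·)).prod‖ := by
        rw [sub_add_cancel]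
    _ ≤ e + (M + e) / (R - r) ^ N * (2 * r) ^ N := by
        refine norm_add_le_of_le (remainder_le z (hz.trans hrR.le)) ?_
        rw [norm_mul]
        exact mul_le_mul quotient_le prod_le (norm_nonneg _) ((norm_nonneg _).trans quotient_le)
    _ = e + (M + e) * (2 * r / (R - r)) ^ N := by rw [div_pow]; ring

end Schwarz

section ExponentialSums

theorem norm_le_of_norm_iterate_dslope_le_of_real_nodes {f : ℂ → ℂ} {A : Finset ℝ} {T : ℕ}
    {μ M r : ℝ} (hf : Differentiable ℂ f) (hμ : 0 ≤ μ) (hr : 1 ≤ r)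
    (hsep : ∀ a ∈ A, ∀ b ∈ A, a ≠ b → 2 ≤ |a - b|) (hAr : ∀ a ∈ A, |a| ≤ r)
    (hA : ∀ a ∈ A, ∀ k < T, ‖(swap dslope (a : ℂ))^[k] f a‖ ≤ μ)
    (hM : ∀ z : ℂ, ‖z‖ = 9 * r → ‖f z‖ ≤ M) {z : ℂ} (hz : ‖z‖ ≤ r) :
    ‖f z‖ ≤ 2 * (μ * (A.card * T : ℕ) * (10 * r) ^ (A.card * T)) +
      M * (1 / 4) ^ (A.card * T) := by
  set nodes : Multiset ℂ := T • A.val.map (fun a : ℝ => (a : ℂ))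
  have mem_nodes {a : ℂ} (ha : a ∈ nodes) : ∃ x ∈ A, (x : ℂ) = a := by
    simpa using Multiset.mem_of_mem_nsmul ha
  have count_nodes (a : ℝ) (ha : a ∈ A) : nodes.count (a : ℂ) = T := by
    rw [Multiset.count_nsmul, Multiset.count_map_eq_count' _ _ Complex.ofReal_injective,
      Multiset.count_eq_one_of_mem A.nodup ha, mul_one]
  have card_nodes : nodes.card = A.card * T := by
    rw [Multiset.card_nsmul, Multiset.card_map, Finset.card_val, mul_comm]
  have schwarz := norm_le_of_norm_iterate_dslope_le (A := nodes) (r := r) (R := 9 * r) (z := z)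
    hf hμ (by linarith) (by linarith) (by linarith)
    (by
      intro a ha b hb hab
      obtain ⟨x, hx, rfl⟩ := mem_nodes ha
      obtain ⟨y, hy, rfl⟩ := mem_nodes hb
      rw [← Complex.ofReal_sub, Complex.norm_real]
      exact hsep x hx y hy (ne_of_apply_ne _ hab))
    (by
      intro a ha
      obtain ⟨x, hx, rfl⟩ := mem_nodes ha
      simpa using hAr x hx)
    (by
      intro a ha k hk
      obtain ⟨x, hx, rfl⟩ := mem_nodes ha
      exact hA x hx k (count_nodes x hx ▸ hk))
    hM hz
  rw [card_nodes, show 9 * r + r = 10 * r by ring,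
    show 2 * r / (9 * r - r) = 1 / 4 by field_simp; norm_num] at schwarz
  have : (1 / 4 : ℝ) ^ (A.card * T) ≤ 1 := pow_le_one₀ (by norm_num) (by norm_num)
  have : 0 ≤ μ * (A.card * T : ℕ) * (10 * r) ^ (A.card * T) := by positivity
  nlinarith

theorem abs_pow_sub_pow_div_factorial_le {x y d W : ℝ} (hx : |x| ≤ W) (hy : |y| ≤ W)
    (hd : |x - y| ≤ d) (k : ℕ) : |x ^ k - y ^ k| / k.factorial ≤ d * Real.exp W := by
  have hW : 0 ≤ W := (abs_nonneg _).trans hx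
  have hd0 : 0 ≤ d := (abs_nonneg _).trans hd
  rcases k with _ | k
  · simp only [pow_zero, sub_self, abs_zero, zero_div]
    positivity
  · rw [div_le_iff₀ (by positivity)]
    calc |x ^ (k + 1) - y ^ (k + 1)| ≤ |x - y| * (k + 1 : ℕ) * max |x| |y| ^ k :=
          abs_pow_sub_pow_le ..
      _ ≤ d * (k + 1 : ℕ) * W ^ k := by
          have := max_le hx hy
          gcongr
      _ ≤ d * (k + 1 : ℕ) * (Real.exp W * k.factorial) := by
          gcongr
          exact (div_le_iff₀ (by positivity)).1 (Real.pow_div_factorial_le_exp W hW k)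
      _ = d * Real.exp W * (k + 1).factorial := by
          rw [Nat.factorial_succ]
          push_cast
          ring

theorem sum_mul_le_sum_abs_mul {ι : Type*} {I : Finset ι} {c x : ι → ℝ} {X : ℝ}
    (hx : ∀ i ∈ I, |x i| ≤ X) : |∑ i ∈ I, c i * x i| ≤ (∑ i ∈ I, |c i|) * X := by
  rw [Finset.sum_mul]
  refine (Finset.abs_sum_le_sum_abs _ _).trans (Finset.sum_le_sum fun i hi => ?_)
  rw [abs_mul]
  exact mul_le_mul_of_nonneg_left (hx i hi) (abs_nonneg _)

variable {ι : Type*} {I : Finset ι} {c w ω : ι → ℝ} {Q W d : ℝ}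

theorem norm_iterate_dslope_sum_exp_le {s : ℝ} {k : ℕ} (hd0 : 0 ≤ d) (hc : ∑ i ∈ I, |c i| ≤ Q)
    (hw : ∀ i ∈ I, |w i| ≤ W) (hd : ∀ i ∈ I, |w i - ω i| ≤ d)
    (hzero : ∑ i ∈ I, c i * Real.exp (s * w i) * ω i ^ k = 0) :
    ‖(swap dslope (s : ℂ))^[k] (fun z => ∑ i ∈ I, (c i : ℂ) * Complex.exp (w i * z)) s‖ ≤
      Q * Real.exp (|s| * W) * (d * Real.exp (W + d)) := by
  have coeff_eq : (swap dslope (s : ℂ))^[k]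
      (fun z => ∑ i ∈ I, (c i : ℂ) * Complex.exp (w i * z)) s =
      ((∑ i ∈ I, c i * (Real.exp (s * w i) * ((w i ^ k - ω i ^ k) / k.factorial)) : ℝ) : ℂ) := by
    have : ∑ i ∈ I, c i * (Real.exp (s * w i) * ((w i ^ k - ω i ^ k) / k.factorial)) =
        ∑ i ∈ I, c i * Real.exp (s * w i) * (w i ^ k / k.factorial) := by
      rw [← sub_zero (∑ i ∈ I, c i * Real.exp _ * _), ← zero_div (k.factorial : ℝ), ← hzero,
        Finset.sum_div, ← Finset.sum_sub_distrib]
      exact Finset.sum_congr rfl fun i _ => by ring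
    rw [this, iterate_dslope_sum_exp]
    push_cast
    exact Finset.sum_congr rfl fun i _ => by rw [mul_comm (w i : ℂ)]
  rw [coeff_eq, Complex.norm_real, Real.norm_eq_abs, mul_assoc]
  refine (sum_mul_le_sum_abs_mul fun i hi => ?_).trans
    (mul_le_mul_of_nonneg_right hc (by positivity))
  rw [abs_mul, Real.abs_exp, abs_div, Nat.abs_cast]
  gcongr ?_ * ?_
  · refine Real.exp_le_exp.2 ((le_abs_self _).trans ?_)
    rw [abs_mul]
    exact mul_le_mul_of_nonneg_left (hw i hi) (abs_nonneg s)
  · refine abs_pow_sub_pow_div_factorial_le ((hw i hi).trans (by linarith)) ?_ (hd i hi) k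
    have := abs_sub_abs_le_abs_sub (ω i) (w i)
    rw [abs_sub_comm] at this
    linarith [hw i hi, hd i hi]

/-- The bound on `|z| ≤ r` given by the Schwarz lemma with `N` zeros for an exponential sum whose
coefficients have absolute sum at most `Q` and whose frequencies are at most `W`, when the
vanishing conditions involve frequencies perturbed by at most `d`. -/
noncomputable def interpolationError (N : ℕ) (r Q W d : ℝ) : ℝ :=
  2 * (Q * Real.exp (r * W) * (d * Real.exp (W + d)) * N * (10 * r) ^ N) +
    Q * Real.exp (9 * r * W) * (1 / 4) ^ N

theorem abs_sum_exp_le_interpolationError {A : Finset ℝ} {T : ℕ} {r z : ℝ} (hd0 : 0 ≤ d)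
    (hW : 0 ≤ W) (hc : ∑ i ∈ I, |c i| ≤ Q) (hw : ∀ i ∈ I, |w i| ≤ W)
    (hd : ∀ i ∈ I, |w i - ω i| ≤ d) (hr : 1 ≤ r)
    (hsep : ∀ a ∈ A, ∀ b ∈ A, a ≠ b → 2 ≤ |a - b|) (hAr : ∀ a ∈ A, |a| ≤ r)
    (hzero : ∀ a ∈ A, ∀ k < T, ∑ i ∈ I, c i * Real.exp (a * w i) * ω i ^ k = 0) (hz : |z| ≤ r) :
    |∑ i ∈ I, c i * Real.exp (z * w i)| ≤ interpolationError (A.card * T) r Q W d := by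
  set f : ℂ → ℂ := fun z => ∑ i ∈ I, (c i : ℂ) * Complex.exp (w i * z)
  have hf : Differentiable ℂ f := by fun_prop
  have hQ : 0 ≤ Q := (Finset.sum_nonneg fun _ _ => abs_nonneg _).trans hc
  set μ := Q * Real.exp (r * W) * (d * Real.exp (W + d))
  have hfz : f z = ((∑ i ∈ I, c i * Real.exp (z * w i) : ℝ) : ℂ) := by
    push_cast
    exact Finset.sum_congr rfl fun i _ => by rw [mul_comm (z : ℂ)]
  have growth (u : ℂ) (hu : ‖u‖ = 9 * r) : ‖f u‖ ≤ Q * Real.exp (9 * r * W) := by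
    refine le_trans (norm_sum_le_of_le I fun i hi => ?_)
      ((Finset.sum_mul I (|c ·|) _).symm.trans_le (mul_le_mul_of_nonneg_right hc (by positivity)))
    rw [norm_mul, Complex.norm_real, Real.norm_eq_abs]
    refine mul_le_mul_of_nonneg_left ?_ (abs_nonneg _)
    refine (Complex.norm_exp_le_exp_norm _).trans (Real.exp_le_exp.2 ?_)
    rw [norm_mul, Complex.norm_real, Real.norm_eq_abs, hu, mul_comm]
    exact mul_le_mul_of_nonneg_left (hw i hi) (by linarith)
  have taylor_le (a : ℝ) (ha : a ∈ A) (k : ℕ) (hk : k < T) :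
      ‖(swap dslope (a : ℂ))^[k] f a‖ ≤ μ := by
    refine (norm_iterate_dslope_sum_exp_le hd0 hc hw hd (hzero a ha k hk)).trans ?_
    change _ ≤ Q * Real.exp (r * W) * _
    gcongr
    exact hAr a ha
  have schwarz := norm_le_of_norm_iterate_dslope_le_of_real_nodes hf (show 0 ≤ μ by positivity) hr
    hsep hAr taylor_le growth (z := z) (by rwa [Complex.norm_real])
  rwa [hfz, Complex.norm_real, Real.norm_eq_abs] at schwarz

end ExponentialSums

section SquareRoots

variable {F : Type*} [Field F]

/-- The field obtained from a subfield `K` by adjoining an element `r` whose square lies in `K`,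
realised as the set of all `y + r z` with `y, z ∈ K`. -/
def adjoinSquareRoot (K : Subfield F) (r : F) (hr : r ^ 2 ∈ K) : Subfield F where
  carrier := {x | ∃ y ∈ K, ∃ z ∈ K, x = y + r * z}
  mul_mem' := by
    rintro _ _ ⟨y, hy, z, hz, rfl⟩ ⟨y', hy', z', hz', rfl⟩
    exact ⟨y * y' + r ^ 2 * (z * z'),
      K.add_mem (K.mul_mem hy hy') (K.mul_mem hr (K.mul_mem hz hz')),
      y * z' + z * y', K.add_mem (K.mul_mem hy hz') (K.mul_mem hz hy'), by ring⟩
  one_mem' := ⟨1, K.one_mem, 0, K.zero_mem, by ring⟩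
  add_mem' := by
    rintro _ _ ⟨y, hy, z, hz, rfl⟩ ⟨y', hy', z', hz', rfl⟩
    exact ⟨y + y', K.add_mem hy hy', z + z', K.add_mem hz hz', by ring⟩
  zero_mem' := ⟨0, K.zero_mem, 0, K.zero_mem, by ring⟩
  neg_mem' := by
    rintro _ ⟨y, hy, z, hz, rfl⟩
    exact ⟨-y, K.neg_mem hy, -z, K.neg_mem hz, by ring⟩
  inv_mem' := by
    rintro _ ⟨y, hy, z, hz, rfl⟩
    by_cases hrK : r ∈ K
    · exact ⟨_, K.inv_mem (K.add_mem hy (K.mul_mem hrK hz)), 0, K.zero_mem, by ring⟩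
    by_cases hx : y + r * z = 0
    · exact ⟨0, K.zero_mem, 0, K.zero_mem, by rw [hx]; simp⟩
    have hconj : y - r * z ≠ 0 := by
      intro h
      rcases eq_or_ne z 0 with rfl | hz0
      · exact hx (by simpa using h)
      · exact hrK (by rw [← div_eq_of_eq_mul hz0 (sub_eq_zero.1 h)]; exact K.div_mem hy hz)
    have hnorm : y ^ 2 - r ^ 2 * z ^ 2 ∈ K :=
      K.sub_mem (pow_mem hy 2) (K.mul_mem hr (pow_mem hz 2))
    refine ⟨y * (y ^ 2 - r ^ 2 * z ^ 2)⁻¹, K.mul_mem hy (K.inv_mem hnorm),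
      -z * (y ^ 2 - r ^ 2 * z ^ 2)⁻¹, K.mul_mem (K.neg_mem hz) (K.inv_mem hnorm), ?_⟩
    have hne : y ^ 2 - r ^ 2 * z ^ 2 ≠ 0 := by
      convert mul_ne_zero hx hconj using 1
      ring
    field_simp
    ring

variable {ι : Type*} {k K : Subfield F} {r : ι → F}

theorem exists_mul_prod_mem_of_mem_adjoinSquareRoot [DecidableEq ι] (h2 : (2 : F) ≠ 0)
    {s : Finset ι} {i : ι} (hi : i ∉ s) (hkK : k ≤ K) (hri : r i ^ 2 ∈ k) (hriK : r i ∉ K)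
    (hK : ∀ x ∈ K, x ^ 2 ∈ k → ∃ I ⊆ s, x * ∏ j ∈ I, r j ∈ k) {x : F}
    (hx : x ∈ adjoinSquareRoot K (r i) (hkK hri)) (hx2 : x ^ 2 ∈ k) :
    ∃ I ⊆ insert i s, x * ∏ j ∈ I, r j ∈ k := by
  obtain ⟨y, hy, z, hz, rfl⟩ := hx
  by_cases hz0 : z = 0
  · subst hz0
    rw [mul_zero, add_zero] at hx2 ⊢
    obtain ⟨I, hI, h⟩ := hK y hy hx2
    exact ⟨I, hI.trans (Finset.subset_insert i s), h⟩
  by_cases hy0 : y = 0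
  · subst hy0
    rw [zero_add] at hx2 ⊢
    obtain ⟨I, hI, h⟩ := hK (r i ^ 2 * z) (K.mul_mem (hkK hri) hz)
      (by convert k.mul_mem hri hx2 using 1; ring)
    refine ⟨insert i I, Finset.insert_subset_insert i hI, ?_⟩
    rw [Finset.prod_insert fun h => hi (hI h)]
    convert h using 1
    ring
  have root_eq : r i = ((y + r i * z) ^ 2 - y ^ 2 - r i ^ 2 * z ^ 2) / (2 * y * z) := by
    field_simp
    ring
  refine absurd ?_ hriK
  rw [root_eq]
  exact K.div_mem (K.sub_mem (K.sub_mem (hkK hx2) (pow_mem hy 2))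
    (K.mul_mem (hkK hri) (pow_mem hz 2))) (K.mul_mem (K.mul_mem (ofNat_mem K 2) hy) hz)

/-- Kummer theory in exponent two. -/
theorem exists_subfield_forall_exists_mul_prod_mem (h2 : (2 : F) ≠ 0) (hr : ∀ i, r i ^ 2 ∈ k)
    (s : Finset ι) :
    ∃ K : Subfield F, k ≤ K ∧ (∀ i ∈ s, r i ∈ K) ∧
      ∀ x ∈ K, x ^ 2 ∈ k → ∃ I ⊆ s, x * ∏ i ∈ I, r i ∈ k := by
  classical
  induction s using Finset.induction_on with
  | empty => exact ⟨k, le_rfl, by simp, fun x hx _ => ⟨∅, subset_rfl, by simpa using hx⟩⟩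
  | insert i s hi ih =>
    obtain ⟨K, hkK, hrK, hK⟩ := ih
    by_cases hriK : r i ∈ K
    · refine ⟨K, hkK, by simpa [hriK] using hrK, fun x hx hx2 => ?_⟩
      obtain ⟨I, hI, h⟩ := hK x hx hx2
      exact ⟨I, hI.trans (Finset.subset_insert i s), h⟩
    · have K_le {x : F} (hx : x ∈ K) : x ∈ adjoinSquareRoot K (r i) (hkK (hr i)) :=
        ⟨x, hx, 0, K.zero_mem, by ring⟩
      refine ⟨adjoinSquareRoot K (r i) (hkK (hr i)), fun x hx => K_le (hkK hx), ?_, fun x =>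
        exists_mul_prod_mem_of_mem_adjoinSquareRoot h2 hi hkK (hr i) hriK hK⟩
      rintro j hj
      rcases Finset.mem_insert.1 hj with rfl | hj
      · exact ⟨0, K.zero_mem, 1, K.one_mem, by ring⟩
      · exact K_le (hrK j hj)

theorem sum_powerset_insert_mul_prod [DecidableEq ι] {R : Type*} [CommRing R] {s : Finset ι}
    {i : ι} (hi : i ∉ s) (c : Finset ι → R) (r : ι → R) :
    ∑ I ∈ (insert i s).powerset, c I * ∏ j ∈ I, r j =
      ∑ I ∈ s.powerset, c I * ∏ j ∈ I, r j +
        r i * ∑ I ∈ s.powerset, c (insert i I) * ∏ j ∈ I, r j := by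
  rw [Finset.sum_powerset_insert hi, Finset.mul_sum]
  congr 1
  refine Finset.sum_congr rfl fun I hI => ?_
  rw [Finset.prod_insert fun h => hi (Finset.mem_powerset.1 hI h)]
  ring

theorem eq_zero_of_sum_powerset_mul_prod_eq_zero (h2 : (2 : F) ≠ 0) (hr : ∀ i, r i ^ 2 ∈ k)
    {s : Finset ι} (hs : ∀ I ⊆ s, I.Nonempty → ∏ i ∈ I, r i ∉ k) {c : Finset ι → F}
    (hc : ∀ I, c I ∈ k) (h : ∑ I ∈ s.powerset, c I * ∏ i ∈ I, r i = 0) :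
    ∀ I ⊆ s, c I = 0 := by
  classical
  induction s using Finset.induction_on generalizing c with
  | empty => simpa using h
  | insert i s hi ih =>
    obtain ⟨K, hkK, hrK, hK⟩ := exists_subfield_forall_exists_mul_prod_mem h2 hr s
    have root_notMem : r i ∉ K := by
      intro hri
      obtain ⟨I, hI, hmem⟩ := hK _ hri (hr i)
      rw [← Finset.prod_insert fun h => hi (hI h)] at hmem
      exact hs _ (Finset.insert_subset_insert i hI) (Finset.insert_nonempty i I) hmem
    have sum_mem (c : Finset ι → F) (hc : ∀ I, c I ∈ k) :
        ∑ I ∈ s.powerset, c I * ∏ j ∈ I, r j ∈ K :=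
      K.sum_mem fun I hI => K.mul_mem (hkK (hc I))
        (K.prod_mem fun j hj => hrK j (Finset.mem_powerset.1 hI hj))
    have ih := fun c hc => ih (c := c) (fun I hI => hs I (hI.trans (Finset.subset_insert i s))) hc
    rw [sum_powerset_insert_mul_prod hi] at h
    have sum_insert_eq_zero : ∑ I ∈ s.powerset, c (insert i I) * ∏ j ∈ I, r j = 0 := by
      by_contra hne
      refine root_notMem ?_
      rw [← div_eq_of_eq_mul hne (neg_eq_of_add_eq_zero_right h)]
      exact K.div_mem (K.neg_mem (sum_mem c hc)) (sum_mem _ fun I => hc _)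
    rw [sum_insert_eq_zero, mul_zero, add_zero] at h
    intro I hI
    by_cases hiI : i ∈ I
    · rw [← Finset.insert_erase hiI]
      exact ih _ (fun I => hc _) sum_insert_eq_zero _ (Finset.subset_insert_iff.1 hI)
    · exact ih _ hc h I ((Finset.subset_insert_iff_of_notMem hiI).1 hI)

theorem eq_zero_of_sum_intCast_mul_prod_eq_zero [Fintype ι] {a : ι → ℕ} {r : ι → ℝ}
    (hr : ∀ i, r i ^ 2 = a i) (ha : ∀ I : Finset ι, I.Nonempty → ¬ IsSquare (∏ i ∈ I, a i))
    {c : Finset ι → ℤ} (h : ∑ I, (c I : ℝ) * ∏ i ∈ I, r i = 0) (I : Finset ι) : c I = 0 := by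
  have prod_notMem (I : Finset ι) (hI : I.Nonempty) :
      ∏ i ∈ I, r i ∉ (algebraMap ℚ ℝ).fieldRange := by
    rintro ⟨q, hq⟩
    refine ha I hI (Rat.isSquare_natCast_iff.1 ⟨q, ?_⟩)
    have : ((∏ i ∈ I, a i : ℕ) : ℝ) = (q : ℝ) * q := by
      rw [← eq_ratCast (algebraMap ℚ ℝ) q, hq, ← sq, ← Finset.prod_pow]
      push_cast [hr]
      rfl
    exact_mod_cast this
  have := eq_zero_of_sum_powerset_mul_prod_eq_zero (k := (algebraMap ℚ ℝ).fieldRange) (r := r)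
    (s := Finset.univ) (c := fun I => (c I : ℝ)) two_ne_zero
    (fun i => by rw [hr]; exact natCast_mem _ _)
    (fun I _ => prod_notMem I) (fun I => intCast_mem _ _) (by simpa using h) I
    (Finset.subset_univ I)
  exact_mod_cast this

end SquareRoots

section Liouville

variable {ι : Type*} {s : Finset ι} {r : ι → ℝ} {a : ι → ℕ} {A H H' x x' : ℝ}

/-- `x` is a combination of the products of distinct `r i`, `i ∈ s`, with integer coefficients of
absolute value at most `H`. When the `r i` are square roots of integers, this is the notion of
height in the multiquadratic field they generate for which Liouville's inequality is stated. -/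
def IsMultiquadratic (s : Finset ι) (r : ι → ℝ) (H x : ℝ) : Prop :=
  ∃ c : Finset ι → ℤ, (∀ I, |(c I : ℝ)| ≤ H) ∧ x = ∑ I ∈ s.powerset, (c I : ℝ) * ∏ i ∈ I, r i

namespace IsMultiquadratic

theorem nonneg (h : IsMultiquadratic s r H x) : 0 ≤ H := by
  obtain ⟨c, hc, -⟩ := h
  exact (abs_nonneg _).trans (hc ∅)

theorem mono (hH : H ≤ H') (h : IsMultiquadratic s r H x) : IsMultiquadratic s r H' x := by
  obtain ⟨c, hc, hx⟩ := h
  exact ⟨c, fun I => (hc I).trans hH, hx⟩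

theorem add (h : IsMultiquadratic s r H x) (h' : IsMultiquadratic s r H' x') :
    IsMultiquadratic s r (H + H') (x + x') := by
  obtain ⟨c, hc, rfl⟩ := h
  obtain ⟨c', hc', rfl⟩ := h'
  refine ⟨c + c', fun I => ?_, ?_⟩
  · push_cast [Pi.add_apply]
    exact (abs_add_le _ _).trans (add_le_add (hc I) (hc' I))
  · simp only [Pi.add_apply, Int.cast_add, add_mul, Finset.sum_add_distrib]

theorem intCast_mul (k : ℤ) (h : IsMultiquadratic s r H x) :
    IsMultiquadratic s r (|(k : ℝ)| * H) (k * x) := by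
  obtain ⟨c, hc, rfl⟩ := h
  refine ⟨fun I => k * c I, fun I => ?_, ?_⟩
  · push_cast
    rw [abs_mul]
    exact mul_le_mul_of_nonneg_left (hc I) (abs_nonneg _)
  · simp only [Int.cast_mul, mul_assoc, Finset.mul_sum]

theorem abs_le (hr : ∀ i, |r i| ≤ A) (h : IsMultiquadratic s r H x) :
    |x| ≤ (1 + A) ^ s.card * H := by
  obtain ⟨c, hc, rfl⟩ := h
  have hH : 0 ≤ H := (abs_nonneg _).trans (hc ∅)
  calc |∑ I ∈ s.powerset, (c I : ℝ) * ∏ i ∈ I, r i|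
      ≤ ∑ I ∈ s.powerset, H * ∏ i ∈ I, |r i| := by
        refine (Finset.abs_sum_le_sum_abs _ _).trans (Finset.sum_le_sum fun I _ => ?_)
        rw [abs_mul, Finset.abs_prod]
        exact mul_le_mul_of_nonneg_right (hc I) (by positivity)
    _ = (∏ i ∈ s, (1 + |r i|)) * H := by rw [← Finset.mul_sum, Finset.prod_one_add, mul_comm]
    _ ≤ (1 + A) ^ s.card * H := by
        gcongr
        rw [← Finset.prod_const]
        exact Finset.prod_le_prod (fun i _ => by positivity) fun i _ => by linarith [hr i]

theorem empty_iff : IsMultiquadratic ∅ r H x ↔ ∃ c : ℤ, |(c : ℝ)| ≤ H ∧ x = c := by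
  constructor
  · rintro ⟨c, hc, rfl⟩
    exact ⟨c ∅, hc ∅, by simp⟩
  · rintro ⟨c, hc, rfl⟩
    exact ⟨fun _ => c, fun _ => hc, by simp⟩

theorem insert_iff [DecidableEq ι] {i : ι} (hi : i ∉ s) :
    IsMultiquadratic (insert i s) r H x ↔
      ∃ y z, IsMultiquadratic s r H y ∧ IsMultiquadratic s r H z ∧ x = y + r i * z := by
  constructor
  · rintro ⟨c, hc, rfl⟩
    exact ⟨_, _, ⟨c, hc, rfl⟩, ⟨fun I => c (insert i I), fun I => hc _, rfl⟩,
      sum_powerset_insert_mul_prod hi (fun I => (c I : ℝ)) r⟩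
  · rintro ⟨_, _, ⟨c, hc, rfl⟩, ⟨c', hc', rfl⟩, rfl⟩
    refine ⟨fun I => if i ∈ I then c' (I.erase i) else c I, fun I => ?_, ?_⟩
    · beta_reduce
      split_ifs
      exacts [hc' _, hc _]
    · rw [sum_powerset_insert_mul_prod hi
        (fun I => ((if i ∈ I then c' (I.erase i) else c I : ℤ) : ℝ))]
      congr 1
      · refine Finset.sum_congr rfl fun I hI => ?_
        rw [if_neg fun h => hi (Finset.mem_powerset.1 hI h)]
      · congr 1
        refine Finset.sum_congr rfl fun I hI => ?_
        rw [if_pos (Finset.mem_insert_self i I),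
          Finset.erase_insert fun h => hi (Finset.mem_powerset.1 hI h)]

theorem mul (hr : ∀ i, r i ^ 2 = a i) (ha : ∀ i, (a i : ℝ) ≤ A) (hA : 0 ≤ A)
    (h : IsMultiquadratic s r H x) (h' : IsMultiquadratic s r H' x') :
    IsMultiquadratic s r ((2 * (1 + A)) ^ s.card * (H * H')) (x * x') := by
  classical
  induction s using Finset.induction_on generalizing x x' with
  | empty =>
    rw [empty_iff] at h h' ⊢
    obtain ⟨c, hc, rfl⟩ := h
    obtain ⟨c', hc', rfl⟩ := h'
    refine ⟨c * c', ?_, by push_cast; rfl⟩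
    push_cast
    rw [abs_mul, Finset.card_empty, pow_zero, one_mul]
    exact mul_le_mul hc hc' (abs_nonneg _) ((abs_nonneg _).trans hc)
  | insert i s hi ih =>
    rw [insert_iff hi] at h h' ⊢
    obtain ⟨y, z, hy, hz, rfl⟩ := h
    obtain ⟨y', z', hy', hz', rfl⟩ := h'
    have hH := mul_nonneg hy.nonneg hy'.nonneg
    have hC : 0 ≤ (2 * (1 + A)) ^ s.card * (H * H') := by positivity
    rw [Finset.card_insert_of_notMem hi, pow_succ]
    refine ⟨y * y' + ((a i : ℤ) : ℝ) * (z * z'), y * z' + z * y',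
      ((ih hy hy').add ((ih hz hz').intCast_mul (a i))).mono ?_,
      ((ih hy hz').add (ih hz hy')).mono ?_, ?_⟩
    · have : |((a i : ℤ) : ℝ)| ≤ A := by simpa using ha i
      nlinarith [mul_le_mul_of_nonneg_right this hC, mul_nonneg hA hC]
    · nlinarith [mul_nonneg hA hC]
    · push_cast
      rw [← hr i]
      ring

theorem conj_mul (hr : ∀ i, r i ^ 2 = a i) (ha : ∀ i, (a i : ℝ) ≤ H) (hH : 2 ≤ H) (i : ι)
    {y z : ℝ} (hy : IsMultiquadratic s r H y) (hz : IsMultiquadratic s r H z) :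
    IsMultiquadratic s r (H ^ (3 * s.card + 4)) ((y + r i * z) * (y - r i * z)) := by
  have hH0 : 0 ≤ H := by linarith
  have norm_eq : y * y + ((-(a i : ℤ) : ℤ) : ℝ) * (z * z) = (y + r i * z) * (y - r i * z) := by
    push_cast
    rw [← hr i]
    ring
  have abs_le : |((-(a i : ℤ) : ℤ) : ℝ)| ≤ H := by
    push_cast
    rw [abs_neg, Nat.abs_cast]
    exact ha i
  rw [← norm_eq]
  refine ((hy.mul hr ha hH0 hy).add ((hz.mul hr ha hH0 hz).intCast_mul _)).mono ?_
  calc _ ≤ (2 * (1 + H)) ^ s.card * (H * H) + H * ((2 * (1 + H)) ^ s.card * (H * H)) := by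
        gcongr
    _ = (2 * (1 + H)) ^ s.card * ((H * H) * (1 + H)) := by ring
    _ ≤ (H ^ 3) ^ s.card * ((H * H) * H ^ 2) := by
        gcongr
        · nlinarith [sq_nonneg (H - 2)]
        · nlinarith
    _ = H ^ (3 * s.card + 4) := by ring

end IsMultiquadratic

/-- The exponent in Liouville's inequality for the field generated by `n` square roots: passing to
the norm of an element over the field generated by `n` of `n + 1` square roots replaces its height
`H` by `H ^ (3 * n + 4)`, and the conjugate is at most `H ^ (2 * n + 3)`. -/
def liouvilleExponent : ℕ → ℕ
  | 0 => 0
  | n + 1 => 2 * n + 3 + (3 * n + 4) * liouvilleExponent n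

theorem IsMultiquadratic.one_le_abs_mul_pow (hr : ∀ i, r i ^ 2 = a i) (ha : ∀ i, (a i : ℝ) ≤ H)
    (hH : 2 ≤ H) (h : IsMultiquadratic s r H x) (hx : x ≠ 0) :
    1 ≤ |x| * H ^ liouvilleExponent s.card := by
  classical
  induction s using Finset.induction_on generalizing H x with
  | empty =>
    obtain ⟨c, -, rfl⟩ := empty_iff.1 h
    rw [Finset.card_empty, liouvilleExponent, pow_zero, mul_one]
    exact_mod_cast Int.one_le_abs (Int.cast_ne_zero.1 hx)
  | insert i s hi ih =>
    have h' := h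
    obtain ⟨y, z, hy, hz, rfl⟩ := (insert_iff hi).1 h
    have hH1 : 1 ≤ H := by linarith
    rw [Finset.card_insert_of_notMem hi, liouvilleExponent]
    set n := s.card
    set E := liouvilleExponent n
    by_cases hconj : y - r i * z = 0
    · have hxy : y + r i * z = 2 * y := by linarith
      have hy0 : y ≠ 0 := by simpa [hxy] using hx
      rw [hxy, abs_mul, abs_two]
      calc 1 ≤ |y| * H ^ E := ih ha hH hy hy0
        _ ≤ 2 * |y| * H ^ (2 * n + 3 + (3 * n + 4) * E) := by
          gcongr
          · linarith [abs_nonneg y]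
          · nlinarith
    · have abs_conj_le : |y - r i * z| ≤ H ^ (2 * n + 3) := by
        have abs_root_le (j : ι) : |r j| ≤ H :=
          abs_le_of_sq_le_sq (by rw [hr j]; nlinarith [ha j]) (by linarith)
        have hz' : IsMultiquadratic s r H (-z) := by simpa using hz.intCast_mul (-1)
        have := ((insert_iff hi).2 ⟨y, -z, hy, hz', rfl⟩).abs_le abs_root_le
        rw [mul_neg, ← sub_eq_add_neg, Finset.card_insert_of_notMem hi] at this
        calc |y - r i * z| ≤ (1 + H) ^ (n + 1) * H := this
          _ ≤ (H ^ 2) ^ (n + 1) * H := by gcongr; nlinarith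
          _ = H ^ (2 * n + 3) := by ring
      have H_le : H ≤ H ^ (3 * n + 4) := le_self_pow₀ hH1 (by lia)
      have norm_ge := ih (fun j => (ha j).trans H_le) (hH.trans H_le) (hy.conj_mul hr ha hH i hz)
        (mul_ne_zero hx hconj)
      rw [abs_mul, ← pow_mul] at norm_ge
      calc 1 ≤ |y + r i * z| * |y - r i * z| * H ^ ((3 * n + 4) * E) := norm_ge
        _ ≤ |y + r i * z| * H ^ (2 * n + 3) * H ^ ((3 * n + 4) * E) := by gcongr
        _ = |y + r i * z| * H ^ (2 * n + 3 + (3 * n + 4) * E) := by ring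

end Liouville

section Polynomials

variable {σ τ R : Type*} [CommSemiring R]

theorem totalDegree_bind₁_le {f : σ → MvPolynomial τ R} (hf : ∀ i, (f i).totalDegree ≤ 1)
    (P : MvPolynomial σ R) : (MvPolynomial.bind₁ f P).totalDegree ≤ P.totalDegree := by
  rw [MvPolynomial.bind₁, MvPolynomial.aeval_def, MvPolynomial.eval₂_eq]
  refine MvPolynomial.totalDegree_finsetSum_le fun t ht => ?_
  refine (MvPolynomial.totalDegree_mul _ _).trans ?_
  rw [MvPolynomial.algebraMap_eq, MvPolynomial.totalDegree_C, zero_add]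
  refine (MvPolynomial.totalDegree_finsetProd _ _).trans ?_
  refine (Finset.sum_le_sum fun i _ => ?_).trans (MvPolynomial.le_totalDegree ht)
  refine (MvPolynomial.totalDegree_pow _ _).trans ?_
  exact (Nat.mul_le_mul_left _ (hf i)).trans (mul_one _).le

theorem sum_mul_eval_eq_zero [Fintype σ] {A : Finset τ} {c : τ → R} {g : τ → σ → R} {T : ℕ}
    (h : ∀ t : σ →₀ ℕ, t.degree < T → ∑ l ∈ A, c l * ∏ j, g l j ^ t j = 0)
    {P : MvPolynomial σ R} (hP : P.totalDegree < T) :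
    ∑ l ∈ A, c l * MvPolynomial.eval (g l) P = 0 := by
  simp only [MvPolynomial.eval_eq', Finset.mul_sum]
  rw [Finset.sum_comm]
  refine Finset.sum_eq_zero fun t ht => ?_
  rw [← mul_zero (P.coeff t), ← h t ((MvPolynomial.le_totalDegree ht).trans_lt hP),
    Finset.mul_sum]
  exact Finset.sum_congr rfl fun l _ => mul_left_comm _ _ _

end Polynomials

/-- The first `n` odd natural numbers, the interpolation nodes of the descent. -/
noncomputable def oddNodes (n : ℕ) : Finset ℝ :=
  (Finset.range n).image fun i => ((2 * i + 1 : ℕ) : ℝ)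

theorem mem_oddNodes {n : ℕ} {a : ℝ} :
    a ∈ oddNodes n ↔ ∃ i < n, ((2 * i + 1 : ℕ) : ℝ) = a := by
  simp only [oddNodes, Finset.mem_image, Finset.mem_range]

theorem card_oddNodes (n : ℕ) : (oddNodes n).card = n := by
  rw [oddNodes, Finset.card_image_of_injective, Finset.card_range]
  exact fun i j hij => by have := Nat.cast_injective hij; omega

theorem two_le_abs_sub_of_mem_oddNodes {n : ℕ} {a b : ℝ} (ha : a ∈ oddNodes n)
    (hb : b ∈ oddNodes n) (hab : a ≠ b) : 2 ≤ |a - b| := by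
  obtain ⟨i, -, rfl⟩ := mem_oddNodes.1 ha
  obtain ⟨j, -, rfl⟩ := mem_oddNodes.1 hb
  have hij : (i : ℤ) - j ≠ 0 := fun h => hab (by rw [show i = j by omega])
  have h1 : (1 : ℝ) ≤ |(i : ℝ) - j| := by exact_mod_cast Int.one_le_abs hij
  rw [show ((2 * i + 1 : ℕ) : ℝ) - ((2 * j + 1 : ℕ) : ℝ) = 2 * ((i : ℝ) - j) by
    push_cast; ring, abs_mul, abs_two]
  linarith

theorem abs_le_of_mem_oddNodes {n : ℕ} {a : ℝ} (ha : a ∈ oddNodes n) : |a| ≤ 2 * n := by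
  obtain ⟨i, hi, rfl⟩ := mem_oddNodes.1 ha
  rw [Nat.abs_cast]
  exact_mod_cast (by omega : 2 * i + 1 ≤ 2 * n)

/-- A linear form `∑ i, coeff i * log (num i / den i)` in logarithms of positive rationals, with a
distinguished nonzero coefficient and bounds `height i` for the logarithmic heights. -/
structure LogLinearForm (ι : Type*) where
  num : ι → ℕ
  den : ι → ℕ
  coeff : ι → ℤ
  pivot : ι
  height : ι → ℝ
  num_pos : ∀ i, 0 < num i
  den_pos : ∀ i, 0 < den i
  coeff_pivot_ne_zero : coeff pivot ≠ 0
  one_le_height : ∀ i, 1 ≤ height i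
  log_num_le_height : ∀ i, Real.log (num i) ≤ height i
  log_den_le_height : ∀ i, Real.log (den i) ≤ height i

namespace LogLinearForm

variable {ι : Type*} (F : LogLinearForm ι)

/-- The logarithm of the `i`-th rational. -/
noncomputable def log (i : ι) : ℝ := Real.log (F.num i) - Real.log (F.den i)

/-- The square root of `num i * den i`, which generates the same quadratic field as the square
root of the `i`-th rational. -/
noncomputable def sqrt (i : ι) : ℝ := √((F.num i * F.den i : ℕ) : ℝ)

/-- Multiplicative independence of the rationals modulo squares. -/
def SquareIndependent : Prop :=
  ∀ I : Finset ι, I.Nonempty → ¬ IsSquare (∏ i ∈ I, F.num i * F.den i)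

/-- The minors `coeff pivot * l j - coeff j * l pivot`. Multiplication by them is differentiation
along the hyperplane with normal vector `coeff`. -/
def crossForm (l : ι → ℕ) (j : {i // i ≠ F.pivot}) : ℤ :=
  F.coeff F.pivot * l j - F.coeff j * l F.pivot

theorem num_le_exp_height (i : ι) : (F.num i : ℝ) ≤ Real.exp (F.height i) :=
  (Real.log_le_iff_le_exp (Nat.cast_pos.2 (F.num_pos i))).1 (F.log_num_le_height i)

theorem den_le_exp_height (i : ι) : (F.den i : ℝ) ≤ Real.exp (F.height i) :=
  (Real.log_le_iff_le_exp (Nat.cast_pos.2 (F.den_pos i))).1 (F.log_den_le_height i)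

theorem height_nonneg (i : ι) : 0 ≤ F.height i := zero_le_one.trans (F.one_le_height i)

theorem abs_log_le_height (i : ι) : |F.log i| ≤ F.height i :=
  abs_sub_le_of_nonneg_of_le (Real.log_natCast_nonneg _) (F.log_num_le_height i)
    (Real.log_natCast_nonneg _) (F.log_den_le_height i)

theorem sqrt_sq (i : ι) : F.sqrt i ^ 2 = ((F.num i * F.den i : ℕ) : ℝ) :=
  Real.sq_sqrt (Nat.cast_nonneg _)

theorem sqrt_eq_exp (i : ι) :
    F.sqrt i = Real.exp ((Real.log (F.num i) + Real.log (F.den i)) / 2) := by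
  have hu : (0 : ℝ) < F.num i := Nat.cast_pos.2 (F.num_pos i)
  have hv : (0 : ℝ) < F.den i := Nat.cast_pos.2 (F.den_pos i)
  rw [← Real.log_mul hu.ne' hv.ne', Real.exp_half, Real.exp_log (by positivity), sqrt,
    Nat.cast_mul]

theorem abs_crossForm_le {l : ι → ℕ} {B R : ℝ} (hB : ∀ i, |(F.coeff i : ℝ)| ≤ B)
    (hl : ∀ i, (l i : ℝ) ≤ R) (j : {i // i ≠ F.pivot}) : |(F.crossForm l j : ℝ)| ≤ 2 * (B * R) := by
  have h (i i' : ι) : |(F.coeff i : ℝ) * l i'| ≤ B * R := by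
    rw [abs_mul, Nat.abs_cast]
    exact mul_le_mul (hB i) (hl i') (Nat.cast_nonneg _) ((abs_nonneg _).trans (hB i))
  rw [crossForm]
  push_cast
  linarith [abs_sub (F.coeff F.pivot * l j : ℝ) (F.coeff j * l F.pivot), h F.pivot j, h j F.pivot]

variable [Fintype ι]

/-- The value `∑ i, coeff i * log (num i / den i)`. -/
noncomputable def value : ℝ := ∑ i, F.coeff i * F.log i

/-- The logarithm of `∏ i, (num i / den i) ^ l i`. -/
noncomputable def logMonomial (l : ι → ℕ) : ℝ := ∑ i, l i * F.log i

theorem abs_logMonomial_le {L l : ι → ℕ} (hl : l ≤ L) :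
    |F.logMonomial l| ≤ ∑ i, L i * F.height i := by
  refine (Finset.abs_sum_le_sum_abs _ _).trans (Finset.sum_le_sum fun i _ => ?_)
  rw [abs_mul, Nat.abs_cast]
  have hli : (l i : ℝ) ≤ L i := Nat.cast_le.2 (hl i)
  gcongr
  exact F.abs_log_le_height i

theorem prod_den_pow_le {M : ι → ℕ} :
    ∏ i, (F.den i : ℝ) ^ M i ≤ Real.exp (∑ i, M i * F.height i) := by
  rw [Real.exp_sum]
  refine Finset.prod_le_prod (fun _ _ => by positivity) fun i _ => ?_
  rw [Real.exp_nat_mul]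
  have := F.den_le_exp_height i
  gcongr

theorem prod_den_pow_pos {M : ι → ℕ} : 0 < ∏ i, (F.den i : ℝ) ^ M i :=
  Finset.prod_pos fun i _ => pow_pos (Nat.cast_pos.2 (F.den_pos i)) _

/-- The integral part of `∏ i, den i ^ M i * (num i / den i) ^ (l i * k / 2)`. -/
def clearedMonomial (M l : ι → ℕ) (k : ℕ) : ℕ :=
  ∏ i, ((F.num i * F.den i) ^ (l i * k / 2) * F.den i ^ (M i - l i * k))

theorem prod_den_pow_mul_exp_half_logMonomial {M l : ι → ℕ} {k : ℕ}
    (hM : ∀ i, l i * k ≤ M i) :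
    (∏ i, (F.den i : ℝ) ^ M i) * Real.exp (k / 2 * F.logMonomial l) =
      F.clearedMonomial M l k * ∏ i with Odd (l i * k), F.sqrt i := by
  have factor (n A : ℕ) (hn : n ≤ A) (x y : ℝ) :
      Real.exp y ^ A * Real.exp (n / 2 * (x - y)) =
        (Real.exp x * Real.exp y) ^ (n / 2) * Real.exp y ^ (A - n) *
          Real.exp ((x + y) / 2) ^ (n % 2) := by
    have hdiv : (n : ℝ) = 2 * (n / 2 : ℕ) + (n % 2 : ℕ) := mod_cast (Nat.div_add_mod n 2).symm
    rw [← Real.exp_add x y]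
    simp only [← Real.exp_nat_mul, ← Real.exp_add]
    rw [Nat.cast_sub hn]
    congr 1
    linear_combination (1 / 2 * (x - y) + y) * hdiv
  rw [logMonomial, Finset.mul_sum, Real.exp_sum, ← Finset.prod_mul_distrib, clearedMonomial,
    Nat.cast_prod, Finset.prod_filter, ← Finset.prod_mul_distrib]
  refine Finset.prod_congr rfl fun i _ => ?_
  have key := factor (l i * k) (M i) (hM i) (Real.log (F.num i)) (Real.log (F.den i))
  rw [Real.exp_log (Nat.cast_pos.2 (F.num_pos i)), Real.exp_log (Nat.cast_pos.2 (F.den_pos i)),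
    ← F.sqrt_eq_exp] at key
  push_cast at key ⊢
  rw [log, show (k : ℝ) / 2 * (l i * (Real.log (F.num i) - Real.log (F.den i))) =
    l i * k / 2 * (Real.log (F.num i) - Real.log (F.den i)) by ring, key]
  split_ifs with hodd
  · rw [Nat.odd_iff.1 hodd, pow_one]
  · rw [Nat.not_odd_iff.1 hodd, pow_zero]

theorem clearedMonomial_le {M l : ι → ℕ} {k : ℕ} (hM : ∀ i, l i * k ≤ M i) :
    (F.clearedMonomial M l k : ℝ) ≤ Real.exp (∑ i, M i * F.height i) := by
  rw [clearedMonomial, Nat.cast_prod, Real.exp_sum]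
  refine Finset.prod_le_prod (fun _ _ => by positivity) fun i _ => ?_
  have hu := F.num_le_exp_height i
  have hv := F.den_le_exp_height i
  have hexp : 2 * (l i * k / 2) + (M i - l i * k) ≤ M i := by have := hM i; omega
  push_cast
  calc ((F.num i : ℝ) * F.den i) ^ (l i * k / 2) * (F.den i : ℝ) ^ (M i - l i * k)
      ≤ (Real.exp (F.height i) * Real.exp (F.height i)) ^ (l i * k / 2) *
          Real.exp (F.height i) ^ (M i - l i * k) := by gcongr
    _ = Real.exp (F.height i) ^ (2 * (l i * k / 2) + (M i - l i * k)) := by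
        rw [pow_add, pow_mul, sq]
    _ ≤ Real.exp (F.height i) ^ M i :=
        pow_le_pow_right₀ (Real.one_le_exp (F.height_nonneg i)) hexp
    _ = _ := by rw [← Real.exp_nat_mul]

theorem sum_mul_height_le {L : ι → ℕ} {W : ℝ} (hW : ∑ i, L i * F.height i ≤ W) (k : ℕ) :
    ∑ i, ((k * L i : ℕ) : ℝ) * F.height i ≤ k * W := by
  simp only [Nat.cast_mul, mul_assoc, ← Finset.mul_sum]
  gcongr

variable [DecidableEq ι]

/-- The linear polynomial in the cross forms which agrees with `logMonomial` up to a multiple of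
`value`. -/
noncomputable def directionPoly : MvPolynomial {i // i ≠ F.pivot} ℝ :=
  ∑ j : {i // i ≠ F.pivot}, MvPolynomial.C (F.log j / F.coeff F.pivot) * MvPolynomial.X j

theorem totalDegree_directionPoly_le : F.directionPoly.totalDegree ≤ 1 := by
  refine MvPolynomial.totalDegree_finsetSum_le fun j _ => ?_
  exact (MvPolynomial.totalDegree_mul _ _).trans (by simp)

theorem logMonomial_sub_eval_directionPoly (l : ι → ℕ) :
    F.logMonomial l - MvPolynomial.eval (fun j => (F.crossForm l j : ℝ)) F.directionPoly =
      l F.pivot * F.value / F.coeff F.pivot := by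
  have hb : (F.coeff F.pivot : ℝ) ≠ 0 := Int.cast_ne_zero.2 F.coeff_pivot_ne_zero
  rw [eq_div_iff hb, sub_mul, logMonomial, value, directionPoly, map_sum, Finset.sum_mul,
    Finset.sum_mul, Fintype.sum_eq_add_sum_subtype_ne _ F.pivot,
    Fintype.sum_eq_add_sum_subtype_ne (fun i => (F.coeff i : ℝ) * F.log i) F.pivot, mul_add,
    Finset.mul_sum, add_sub_assoc, ← Finset.sum_sub_distrib]
  congr 1
  · ring
  · refine Finset.sum_congr rfl fun j _ => ?_
    simp only [crossForm, map_mul, MvPolynomial.eval_C, MvPolynomial.eval_X]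
    push_cast
    field_simp
    ring

theorem abs_logMonomial_sub_eval_directionPoly_le {L l : ι → ℕ} (hl : l ≤ L) :
    |F.logMonomial l - MvPolynomial.eval (fun j => (F.crossForm l j : ℝ)) F.directionPoly| ≤
      L F.pivot * |F.value| := by
  rw [logMonomial_sub_eval_directionPoly, abs_div, abs_mul, Nat.abs_cast]
  have hb : (1 : ℝ) ≤ |(F.coeff F.pivot : ℝ)| := mod_cast Int.one_le_abs F.coeff_pivot_ne_zero
  have hlp : (l F.pivot : ℝ) ≤ L F.pivot := Nat.cast_le.2 (hl _)
  exact (div_le_self (by positivity) hb).trans (by gcongr)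

/-- The auxiliary exponential polynomial `z ↦ ∑ l, p l * (∏ i, (num i / den i) ^ l i) ^ z` over the
exponents `l ≤ L`, with weights `P` in the cross forms which play the role of derivatives. -/
noncomputable def auxSum (L : ι → ℕ) (p : (ι → ℕ) → ℤ) (P : MvPolynomial {i // i ≠ F.pivot} ℝ)
    (z : ℝ) : ℝ :=
  ∑ l ∈ Finset.Iic L, p l * MvPolynomial.eval (fun j => (F.crossForm l j : ℝ)) P *
    Real.exp (z * F.logMonomial l)

/-- Vanishing to order `T` at the first `S` odd integers. -/
def AuxVanishes (L : ι → ℕ) (p : (ι → ℕ) → ℤ) (T S : ℕ) : Prop :=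
  ∀ P : MvPolynomial {i // i ≠ F.pivot} ℝ, P.totalDegree < T → ∀ s : ℕ, Odd s → s < 2 * S →
    F.auxSum L p P s = 0

theorem abs_auxSum_le {L : ι → ℕ} {p : (ι → ℕ) → ℤ} {T S : ℕ} (hS : 1 ≤ S)
    (hv : F.AuxVanishes L p (2 * T) S) {P : MvPolynomial {i // i ≠ F.pivot} ℝ}
    (hP : P.totalDegree < T) {Q W d : ℝ}
    (hQ : ∑ l ∈ Finset.Iic L,
      |p l * MvPolynomial.eval (fun j => (F.crossForm l j : ℝ)) P| ≤ Q)
    (hW : ∑ i, L i * F.height i ≤ W) (hd : L F.pivot * |F.value| ≤ d)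
    {z : ℝ} (hz : |z| ≤ 2 * S) :
    |F.auxSum L p P z| ≤ interpolationError (S * T) (2 * S) Q W d := by
  have hW0 : 0 ≤ W :=
    (Finset.sum_nonneg fun i _ => mul_nonneg (Nat.cast_nonneg _) (F.height_nonneg i)).trans hW
  have hd0 : 0 ≤ d := le_trans (by positivity) hd
  have hzero : ∀ a ∈ oddNodes S, ∀ k < T, ∑ l ∈ Finset.Iic L,
      (p l * MvPolynomial.eval (fun j => (F.crossForm l j : ℝ)) P) *
        Real.exp (a * F.logMonomial l) *
        MvPolynomial.eval (fun j => (F.crossForm l j : ℝ)) F.directionPoly ^ k = 0 := by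
    intro a ha k hk
    obtain ⟨i, hi, rfl⟩ := mem_oddNodes.1 ha
    have hdeg : (P * F.directionPoly ^ k).totalDegree < 2 * T := by
      have h1 := MvPolynomial.totalDegree_mul P (F.directionPoly ^ k)
      have h2 := MvPolynomial.totalDegree_pow F.directionPoly k
      have h3 := Nat.mul_le_mul_left k F.totalDegree_directionPoly_le
      omega
    rw [← hv _ hdeg (2 * i + 1) ⟨i, rfl⟩ (by omega), auxSum]
    refine Finset.sum_congr rfl fun l _ => ?_
    rw [map_mul, map_pow]
    ring
  have hmain := abs_sum_exp_le_interpolationError hd0 hW0 hQ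
    (fun l hl => (F.abs_logMonomial_le (Finset.mem_Iic.1 hl)).trans hW)
    (fun l hl => (F.abs_logMonomial_sub_eval_directionPoly_le (Finset.mem_Iic.1 hl)).trans hd)
    (by have : (1 : ℝ) ≤ S := Nat.one_le_cast.2 hS
        linarith)
    (fun a ha b hb => two_le_abs_sub_of_mem_oddNodes ha hb)
    (fun a ha => abs_le_of_mem_oddNodes ha) hzero hz
  rwa [card_oddNodes] at hmain

end LogLinearForm

section Parity

variable {ι : Type*} [DecidableEq ι]

/-- The exponent vector `2 * l` raised by one at the indices in `I`. -/
def oddLift (I : Finset ι) (l : ι → ℕ) (i : ι) : ℕ := 2 * l i + if i ∈ I then 1 else 0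

theorem oddLift_half_le {I : Finset ι} {L l : ι → ℕ} (h : oddLift I l ≤ L) (i : ι) :
    l i ≤ L i / 2 := by
  have := h i
  simp only [oddLift] at this
  omega

variable [Fintype ι]

/-- The set of indices at which the exponent vector `l` is odd, which encodes its parity class. -/
def oddSupport (l : ι → ℕ) : Finset ι := Finset.univ.filter fun i => Odd (l i)

omit [DecidableEq ι] in
theorem mem_oddSupport {l : ι → ℕ} {i : ι} : i ∈ oddSupport l ↔ Odd (l i) := by
  simp [oddSupport]

theorem oddSupport_oddLift (I : Finset ι) (l : ι → ℕ) : oddSupport (oddLift I l) = I := by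
  ext i
  rw [mem_oddSupport, oddLift]
  split_ifs with hi <;> simp [hi]

theorem oddLift_oddSupport_half (l : ι → ℕ) : oddLift (oddSupport l) (fun i => l i / 2) = l := by
  funext i
  simp only [oddLift, mem_oddSupport, Nat.odd_iff]
  split_ifs <;> omega

theorem sum_oddSupport_eq {R : Type*} [AddCommMonoid R] {L : ι → ℕ} (f : (ι → ℕ) → R)
    (hf : ∀ l, ¬ l ≤ L → f l = 0) (I : Finset ι) :
    ∑ l ∈ Finset.Iic L with oddSupport l = I, f l =
      ∑ l ∈ Finset.Iic (fun i => L i / 2), f (oddLift I l) := by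
  have hlift {l : ι → ℕ} (hl : oddSupport l = I) : oddLift I (fun i => l i / 2) = l := by
    rw [← hl, oddLift_oddSupport_half]
  refine Finset.sum_of_injOn (fun l i => l i / 2) ?_ ?_ ?_ ?_
  · intro l hl l' hl' heq
    rw [Finset.mem_coe, Finset.mem_filter] at hl hl'
    rw [← hlift hl.2, ← hlift hl'.2]
    exact congrArg _ heq
  · intro l hl
    rw [Finset.mem_coe, Finset.mem_filter, Finset.mem_Iic] at hl
    exact Finset.mem_coe.2 (Finset.mem_Iic.2 fun i => Nat.div_le_div_right (hl.1 i))
  · intro l _ hl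
    refine hf _ fun hle => hl ⟨oddLift I l, ?_, ?_⟩
    · rw [Finset.mem_coe, Finset.mem_filter, Finset.mem_Iic]
      exact ⟨hle, oddSupport_oddLift I l⟩
    · funext i
      simp only [oddLift]
      split_ifs <;> omega
  · intro l hl
    rw [hlift (Finset.mem_filter.1 hl).2]

end Parity

namespace LogLinearForm

section OddLift

variable {ι : Type*} [DecidableEq ι] {F : LogLinearForm ι}

theorem crossForm_oddLift (I : Finset ι) (l : ι → ℕ) (j : {i // i ≠ F.pivot}) :
    F.crossForm (oddLift I l) j = F.crossForm (oddLift I 0) j + 2 * F.crossForm l j := by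
  simp only [crossForm, oddLift, Pi.zero_apply]
  push_cast
  ring

theorem exists_eval_crossForm_oddLift (I : Finset ι) (P : MvPolynomial {i // i ≠ F.pivot} ℝ) :
    ∃ P' : MvPolynomial {i // i ≠ F.pivot} ℝ, P'.totalDegree ≤ P.totalDegree ∧
      ∀ l : ι → ℕ, MvPolynomial.eval (fun j => (F.crossForm (oddLift I l) j : ℝ)) P' =
        MvPolynomial.eval (fun j => (F.crossForm l j : ℝ)) P := by
  set f : {i // i ≠ F.pivot} → MvPolynomial {i // i ≠ F.pivot} ℝ := fun j =>
    MvPolynomial.C (1 / 2) * MvPolynomial.X j -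
      MvPolynomial.C ((F.crossForm (oddLift I 0) j : ℝ) / 2) with hf
  have hdeg (j) : (f j).totalDegree ≤ 1 :=
    (MvPolynomial.totalDegree_sub_C_le _ _).trans
      ((MvPolynomial.totalDegree_mul _ _).trans (by simp))
  refine ⟨MvPolynomial.bind₁ f P, totalDegree_bind₁_le hdeg P, fun l => ?_⟩
  rw [MvPolynomial.eval, MvPolynomial.eval₂Hom_bind₁]
  congr 2
  funext j
  simp only [hf, map_sub, map_mul, MvPolynomial.eval₂Hom_C, MvPolynomial.eval₂Hom_X',
    RingHom.id_apply, crossForm_oddLift I l]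
  push_cast
  ring

end OddLift

variable {ι : Type*} [Fintype ι] [DecidableEq ι] (F : LogLinearForm ι)

/-- The coefficient of `∏ i ∈ I, sqrt i` in the cleared sum with weights `g` at `k / 2`. -/
def classCoeff (L M : ι → ℕ) (g : (ι → ℕ) → ℤ) (k : ℕ) (I : Finset ι) : ℤ :=
  ∑ l ∈ Finset.Iic L with oddSupport l = I, g l * F.clearedMonomial M l k

theorem prod_den_pow_mul_class_sum {L M : ι → ℕ} {k : ℕ} (hk : Odd k)
    (hM : ∀ i, L i * k ≤ M i) (g : (ι → ℕ) → ℤ) (I : Finset ι) :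
    (∏ i, (F.den i : ℝ) ^ M i) * ∑ l ∈ Finset.Iic L with oddSupport l = I,
      g l * Real.exp (k / 2 * F.logMonomial l) =
      F.classCoeff L M g k I * ∏ i ∈ I, F.sqrt i := by
  rw [classCoeff, Int.cast_sum, Finset.mul_sum, Finset.sum_mul]
  refine Finset.sum_congr rfl fun l hl => ?_
  rw [Finset.mem_filter, Finset.mem_Iic] at hl
  have key := F.prod_den_pow_mul_exp_half_logMonomial (M := M) (l := l) (k := k)
    fun i => (Nat.mul_le_mul_right k (hl.1 i)).trans (hM i)
  have hI : Finset.univ.filter (fun i => Odd (l i * k)) = I := by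
    simp only [Nat.odd_mul, hk, and_true]
    exact hl.2
  rw [hI] at key
  push_cast
  linear_combination (g l : ℝ) * key

theorem prod_den_pow_mul_sum {L M : ι → ℕ} {k : ℕ} (hk : Odd k)
    (hM : ∀ i, L i * k ≤ M i) (g : (ι → ℕ) → ℤ) :
    (∏ i, (F.den i : ℝ) ^ M i) * ∑ l ∈ Finset.Iic L,
      g l * Real.exp (k / 2 * F.logMonomial l) =
      ∑ I, F.classCoeff L M g k I * ∏ i ∈ I, F.sqrt i := by
  simp only [← F.prod_den_pow_mul_class_sum hk hM, ← Finset.mul_sum]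
  rw [Finset.sum_fiberwise]

theorem abs_classCoeff_le {L M : ι → ℕ} {k : ℕ} (hM : ∀ i, L i * k ≤ M i) {g : (ι → ℕ) → ℤ}
    {Y : ℝ} (hg : ∀ l ≤ L, |(g l : ℝ)| ≤ Y) (I : Finset ι) :
    |(F.classCoeff L M g k I : ℝ)| ≤
      (Finset.Iic L).card * Y * Real.exp (∑ i, M i * F.height i) := by
  have hY : 0 ≤ Y := (abs_nonneg _).trans (hg L le_rfl)
  rw [classCoeff, Int.cast_sum]
  refine (Finset.abs_sum_le_sum_abs _ _).trans ?_
  calc ∑ l ∈ Finset.Iic L with oddSupport l = I, |((g l * F.clearedMonomial M l k : ℤ) : ℝ)|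
      ≤ ∑ l ∈ Finset.Iic L, |((g l * F.clearedMonomial M l k : ℤ) : ℝ)| :=
        Finset.sum_le_sum_of_subset_of_nonneg (Finset.filter_subset _ _) fun _ _ _ => abs_nonneg _
    _ ≤ ∑ _l ∈ Finset.Iic L, Y * Real.exp (∑ i, M i * F.height i) := by
        refine Finset.sum_le_sum fun l hl => ?_
        rw [Finset.mem_Iic] at hl
        have hgl := hg l hl
        have hcl := F.clearedMonomial_le (M := M) (l := l) (k := k)
          fun i => (Nat.mul_le_mul_right k (hl i)).trans (hM i)
        push_cast
        rw [abs_mul, Nat.abs_cast]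
        gcongr
    _ = _ := by rw [Finset.sum_const, nsmul_eq_mul, mul_assoc]

/-- Nontrivial integer coefficients `p`, supported on the exponents `l ≤ L` and of size at most
`X`, whose auxiliary function vanishes to order `T` at the first `S` odd integers. -/
structure IsAuxiliary (L : ι → ℕ) (T S : ℕ) (X : ℝ) (p : (ι → ℕ) → ℤ) : Prop where
  abs_le : ∀ l, |(p l : ℝ)| ≤ X
  eq_zero_of_not_le : ∀ l, ¬ l ≤ L → p l = 0
  exists_ne_zero : ∃ l, p l ≠ 0
  vanishes : F.AuxVanishes L p T S

/-- The size conditions under which the Liouville bound beats the interpolation error, so that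
zeros of order `2 * T` at the odd integers below `2 * S` force zeros of order `T` at their halves
below `4 * S`. -/
structure StepBounds (L : ι → ℕ) (T S : ℕ) (X G Q W d H : ℝ) : Prop where
  one_le_nodes : 1 ≤ S
  one_le_crossForm_bound : 1 ≤ G
  abs_crossForm_le : ∀ l ≤ L, ∀ j, |(F.crossForm l j : ℝ)| ≤ G
  card_mul_le : (Finset.Iic L).card * (X * G ^ T) ≤ Q
  sum_mul_height_le : ∑ i, L i * F.height i ≤ W
  pivot_mul_value_le : L F.pivot * |F.value| ≤ d
  mul_exp_le : Q * Real.exp (4 * S * W) ≤ H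
  num_mul_den_le : ∀ i, ((F.num i * F.den i : ℕ) : ℝ) ≤ H
  two_le : 2 ≤ H
  interpolationError_lt : Real.exp (4 * S * W) * interpolationError (S * T) (2 * S) Q W d *
    H ^ liouvilleExponent (Fintype.card ι) < 1

variable {F} {L : ι → ℕ} {T S : ℕ} {X G Q W d H : ℝ} {p : (ι → ℕ) → ℤ}

theorem abs_prod_crossForm_pow_le {l : ι → ℕ} (hG1 : 1 ≤ G)
    (hG : ∀ j, |(F.crossForm l j : ℝ)| ≤ G) {t : {i // i ≠ F.pivot} →₀ ℕ} {n : ℕ}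
    (ht : t.degree ≤ n) : |∏ j, (F.crossForm l j : ℝ) ^ t j| ≤ G ^ n := by
  rw [Finset.abs_prod]
  calc ∏ j, |(F.crossForm l j : ℝ) ^ t j| ≤ ∏ j, G ^ t j := by
        refine Finset.prod_le_prod (fun _ _ => abs_nonneg _) fun j _ => ?_
        rw [abs_pow]
        have := hG j
        gcongr
    _ = G ^ t.degree := by rw [Finset.prod_pow_eq_pow_sum, Finsupp.degree_eq_sum]
    _ ≤ G ^ n := pow_le_pow_right₀ hG1 ht

theorem abs_mul_prod_crossForm_pow_le (hb : F.StepBounds L T S X G Q W d H)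
    (hp : F.IsAuxiliary L (2 * T) S X p) {t : {i // i ≠ F.pivot} →₀ ℕ} (ht : t.degree < T)
    {l : ι → ℕ} (hl : l ≤ L) :
    |((p l * ∏ j, F.crossForm l j ^ t j : ℤ) : ℝ)| ≤ X * G ^ T := by
  push_cast
  rw [abs_mul]
  exact mul_le_mul (hp.abs_le l)
    (abs_prod_crossForm_pow_le hb.one_le_crossForm_bound (hb.abs_crossForm_le l hl) ht.le)
    (abs_nonneg _) ((abs_nonneg _).trans (hp.abs_le l))

theorem abs_sum_exp_half_le (hb : F.StepBounds L T S X G Q W d H)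
    (hp : F.IsAuxiliary L (2 * T) S X p) {t : {i // i ≠ F.pivot} →₀ ℕ} (ht : t.degree < T)
    {k : ℕ} (hk : k < 4 * S) :
    |∑ l ∈ Finset.Iic L, ((p l * ∏ j, F.crossForm l j ^ t j : ℤ) : ℝ) *
      Real.exp (k / 2 * F.logMonomial l)| ≤ interpolationError (S * T) (2 * S) Q W d := by
  have hmon (l : ι → ℕ) : (p l : ℝ) *
      MvPolynomial.eval (fun j => (F.crossForm l j : ℝ)) (MvPolynomial.monomial t 1) =
        ((p l * ∏ j, F.crossForm l j ^ t j : ℤ) : ℝ) := by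
    rw [MvPolynomial.eval_monomial, one_mul, Finsupp.prod_fintype _ _ (by simp)]
    push_cast
    rfl
  have hk2 : |(k : ℝ) / 2| ≤ 2 * S := by
    rw [abs_of_nonneg (by positivity), div_le_iff₀ two_pos]
    have : (k : ℝ) ≤ ((4 * S : ℕ) : ℝ) := Nat.cast_le.2 hk.le
    push_cast at this
    linarith
  have hQ : ∑ l ∈ Finset.Iic L, |(p l : ℝ) *
      MvPolynomial.eval (fun j => (F.crossForm l j : ℝ)) (MvPolynomial.monomial t 1)| ≤ Q := by
    refine le_trans ?_ hb.card_mul_le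
    rw [← nsmul_eq_mul]
    refine Finset.sum_le_card_nsmul _ _ _ fun l hl => ?_
    rw [hmon]
    exact abs_mul_prod_crossForm_pow_le hb hp ht (Finset.mem_Iic.1 hl)
  have hsmall := F.abs_auxSum_le hb.one_le_nodes hp.vanishes
    (by rwa [MvPolynomial.totalDegree_monomial _ one_ne_zero]) hQ hb.sum_mul_height_le
    hb.pivot_mul_value_le hk2
  simpa only [auxSum, hmon] using hsmall

/-- Taking parity classes separates the conjugates: the total sum vanishes by Liouville's
inequality, hence each class does by the independence of the square roots. -/
theorem class_sum_prod_crossForm_eq_zero (hF : F.SquareIndependent)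
    (hb : F.StepBounds L T S X G Q W d H) (hp : F.IsAuxiliary L (2 * T) S X p)
    {t : {i // i ≠ F.pivot} →₀ ℕ} (ht : t.degree < T) {k : ℕ} (hk : Odd k) (hk4 : k < 4 * S)
    (I : Finset ι) :
    ∑ l ∈ Finset.Iic L with oddSupport l = I,
      ((p l * ∏ j, F.crossForm l j ^ t j : ℤ) : ℝ) * Real.exp (k / 2 * F.logMonomial l) = 0 := by
  set g : (ι → ℕ) → ℤ := fun l => p l * ∏ j, F.crossForm l j ^ t j
  set M : ι → ℕ := fun i => 4 * S * L i
  set V : ℝ := ∏ i, (F.den i : ℝ) ^ M i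
  have hM (i) : L i * k ≤ M i := by
    rw [mul_comm]
    exact Nat.mul_le_mul_right _ hk4.le
  have hMW : Real.exp (∑ i, M i * F.height i) ≤ Real.exp (4 * S * W) :=
    Real.exp_le_exp.2 (by exact_mod_cast F.sum_mul_height_le hb.sum_mul_height_le (4 * S))
  have hH (J : Finset ι) : |(F.classCoeff L M g k J : ℝ)| ≤ H := by
    have hcoeff := F.abs_classCoeff_le hM
      (fun l hl => abs_mul_prod_crossForm_pow_le hb hp ht hl) J
    have hY := (abs_nonneg _).trans (abs_mul_prod_crossForm_pow_le hb hp ht le_rfl)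
    have hQ0 : 0 ≤ Q := (by positivity : 0 ≤ (Finset.Iic L).card * (X * G ^ T)).trans
      hb.card_mul_le
    have hQ := hb.card_mul_le
    exact (hcoeff.trans (by gcongr)).trans hb.mul_exp_le
  have htotal := F.prod_den_pow_mul_sum hk hM g
  have hzero : V * ∑ l ∈ Finset.Iic L, g l * Real.exp (k / 2 * F.logMonomial l) = 0 := by
    by_contra hne
    have hliouville := IsMultiquadratic.one_le_abs_mul_pow F.sqrt_sq hb.num_mul_den_le hb.two_le
      ⟨F.classCoeff L M g k, hH, by rw [htotal, Finset.powerset_univ]⟩ hne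
    rw [abs_mul, abs_of_pos F.prod_den_pow_pos, Finset.card_univ] at hliouville
    refine absurd (hliouville.trans ?_) (not_le.2 hb.interpolationError_lt)
    have hV : V ≤ _ := F.prod_den_pow_le.trans hMW
    have hsmall := abs_sum_exp_half_le hb hp ht hk4
    have hH0 : 0 ≤ H := zero_le_two.trans hb.two_le
    gcongr
  have hcoeff := eq_zero_of_sum_intCast_mul_prod_eq_zero F.sqrt_sq hF (htotal.symm.trans hzero) I
  have hclass := F.prod_den_pow_mul_class_sum hk hM g I
  rw [hcoeff, Int.cast_zero, zero_mul] at hclass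
  exact (mul_eq_zero.1 hclass).resolve_left F.prod_den_pow_pos.ne'

theorem class_sum_eq_zero (hF : F.SquareIndependent)
    (hb : F.StepBounds L T S X G Q W d H) (hp : F.IsAuxiliary L (2 * T) S X p)
    {P : MvPolynomial {i // i ≠ F.pivot} ℝ} (hP : P.totalDegree < T) {k : ℕ} (hk : Odd k)
    (hk4 : k < 4 * S) (I : Finset ι) :
    ∑ l ∈ Finset.Iic L with oddSupport l = I, p l * Real.exp (k / 2 * F.logMonomial l) *
      MvPolynomial.eval (fun j => (F.crossForm l j : ℝ)) P = 0 := by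
  refine sum_mul_eval_eq_zero (T := T) (fun t ht => ?_) hP
  rw [← class_sum_prod_crossForm_eq_zero hF hb hp ht hk hk4 I]
  refine Finset.sum_congr rfl fun l _ => ?_
  push_cast
  ring

theorem logMonomial_oddLift (I : Finset ι) (l : ι → ℕ) :
    F.logMonomial (oddLift I l) = F.logMonomial (oddLift I 0) + 2 * F.logMonomial l := by
  simp only [logMonomial, oddLift, Finset.mul_sum, ← Finset.sum_add_distrib, Pi.zero_apply]
  refine Finset.sum_congr rfl fun i _ => ?_
  push_cast
  ring

theorem class_sum_eq_exp_mul_auxSum (hp : ∀ l, ¬ l ≤ L → p l = 0) (I : Finset ι)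
    {P P' : MvPolynomial {i // i ≠ F.pivot} ℝ}
    (hP : ∀ l, MvPolynomial.eval (fun j => (F.crossForm (oddLift I l) j : ℝ)) P' =
      MvPolynomial.eval (fun j => (F.crossForm l j : ℝ)) P) (z : ℝ) :
    ∑ l ∈ Finset.Iic L with oddSupport l = I, p l * Real.exp (z / 2 * F.logMonomial l) *
        MvPolynomial.eval (fun j => (F.crossForm l j : ℝ)) P' =
      Real.exp (z / 2 * F.logMonomial (oddLift I 0)) *
        F.auxSum (fun i => L i / 2) (fun l => p (oddLift I l)) P z := by
  rw [sum_oddSupport_eq _ (fun l hl => by rw [hp l hl]; simp), auxSum, Finset.mul_sum]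
  refine Finset.sum_congr rfl fun l _ => ?_
  rw [hP, logMonomial_oddLift, mul_add, Real.exp_add,
    show z / 2 * (2 * F.logMonomial l) = z * F.logMonomial l by ring]
  ring

theorem IsAuxiliary.exists_half (hF : F.SquareIndependent)
    (hb : F.StepBounds L T S X G Q W d H) (hp : F.IsAuxiliary L (2 * T) S X p) :
    ∃ p', F.IsAuxiliary (fun i => L i / 2) T (2 * S) X p' := by
  obtain ⟨l₀, hl₀⟩ := hp.exists_ne_zero
  set I := oddSupport l₀
  refine ⟨fun l => p (oddLift I l), fun l => hp.abs_le _, fun l hl => ?_, ⟨fun i => l₀ i / 2, ?_⟩,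
    fun P hP s hs hs4 => ?_⟩
  · exact hp.eq_zero_of_not_le _ fun h => hl (oddLift_half_le h)
  · rwa [oddLift_oddSupport_half]
  · obtain ⟨P', hdeg, hP'⟩ := exists_eval_crossForm_oddLift I P
    have hclass := class_sum_eq_zero hF hb hp (hdeg.trans_lt hP) hs (by omega) I
    rw [class_sum_eq_exp_mul_auxSum hp.eq_zero_of_not_le I hP'] at hclass
    exact (mul_eq_zero.1 hclass).resolve_left (Real.exp_ne_zero _)

end LogLinearForm

section Siegel

attribute [local instance] Matrix.seminormedAddCommGroup

theorem exists_int_vec_of_two_mul_card_le {α β : Type*} [Fintype α] [Fintype β]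
    (A : Matrix α β ℤ) (hα : 0 < Fintype.card α) (hβ : 2 * Fintype.card α ≤ Fintype.card β)
    {R : ℝ} (hR : 1 ≤ R) (hA : ∀ i j, |(A i j : ℝ)| ≤ R) :
    ∃ t : β → ℤ, t ≠ 0 ∧ A.mulVec t = 0 ∧ ∀ j, |(t j : ℝ)| ≤ Fintype.card β * R := by
  obtain ⟨t, ht, hAt, hnorm⟩ := Int.Matrix.exists_ne_zero_int_vec_norm_le A (by omega) hα
  refine ⟨t, ht, hAt, fun j => ?_⟩
  have htj : |(t j : ℝ)| ≤ ‖t‖ := (Int.norm_eq_abs _).symm.trans_le (norm_le_pi_norm t j)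
  have hAR : max 1 ‖A‖ ≤ R := max_le hR <| (Matrix.norm_le_iff (zero_le_one.trans hR)).2
    fun i j => (Int.norm_eq_abs _).trans_le (hA i j)
  have hα' : (1 : ℝ) ≤ Fintype.card α := Nat.one_le_cast.2 hα
  have hβ' : 2 * (Fintype.card α : ℝ) ≤ Fintype.card β := mod_cast hβ
  have hbase : 1 ≤ (Fintype.card β : ℝ) * max 1 ‖A‖ :=
    one_le_mul_of_one_le_of_one_le (by linarith) (le_max_left _ _)
  calc |(t j : ℝ)| ≤ _ := htj.trans hnorm
    _ ≤ ((Fintype.card β : ℝ) * max 1 ‖A‖) ^ (1 : ℝ) := by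
        refine Real.rpow_le_rpow_of_exponent_le hbase ?_
        rw [div_le_one (by linarith)]
        linarith
    _ = (Fintype.card β : ℝ) * max 1 ‖A‖ := Real.rpow_one _
    _ ≤ _ := by gcongr

end Siegel

namespace LogLinearForm

theorem mul_two_mul_le {ι : Type*} {L l : ι → ℕ} {S : ℕ} (hl : l ≤ L) {s : ℕ} (hs : s < 2 * S)
    (i : ι) : l i * (2 * s) ≤ 4 * S * L i := by
  rw [mul_comm]
  exact Nat.mul_le_mul (by omega) (hl i)

theorem prod_den_pow_mul_exp_logMonomial {ι : Type*} [Fintype ι] {F : LogLinearForm ι}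
    {L l : ι → ℕ} {S : ℕ} (hl : l ≤ L) {s : ℕ} (hs : s < 2 * S) :
    (∏ i, (F.den i : ℝ) ^ (4 * S * L i)) * Real.exp (s * F.logMonomial l) =
      F.clearedMonomial (fun i => 4 * S * L i) l (2 * s) := by
  have h := F.prod_den_pow_mul_exp_half_logMonomial (mul_two_mul_le hl hs)
  have heven (i : ι) : ¬ Odd (l i * (2 * s)) :=
    Nat.not_odd_iff_even.2 ((even_two_mul s).mul_left (l i))
  rw [Finset.filter_false_of_mem fun i _ => heven i, Finset.prod_empty, mul_one] at h
  rw [← h]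
  push_cast
  congr 2
  ring

variable {ι : Type*} [Fintype ι] [DecidableEq ι] (F : LogLinearForm ι)

/-- The matrix of the linear system which expresses that all derivatives of the auxiliary function
of order less than `T` in each direction vanish at the first `S` odd integers. -/
def siegelMatrix (L : ι → ℕ) (T S : ℕ) :
    Matrix (Fin S × ({i // i ≠ F.pivot} → Fin T)) (Finset.Iic L) ℤ := fun a l =>
  (∏ j, F.crossForm l j ^ (a.2 j : ℕ)) *
    F.clearedMonomial (fun i => 4 * S * L i) l (2 * (2 * a.1 + 1))

variable {F} {L : ι → ℕ} {T S : ℕ} {G W : ℝ}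

theorem abs_siegelMatrix_le (hG1 : 1 ≤ G) (hG : ∀ l ≤ L, ∀ j, |(F.crossForm l j : ℝ)| ≤ G)
    (hW : ∑ i, L i * F.height i ≤ W) (a : Fin S × ({i // i ≠ F.pivot} → Fin T))
    (l : Finset.Iic L) :
    |(F.siegelMatrix L T S a l : ℝ)| ≤
      G ^ (Fintype.card {i // i ≠ F.pivot} * T) * Real.exp (4 * S * W) := by
  have hl : (l : ι → ℕ) ≤ L := Finset.mem_Iic.1 l.2
  set t : {i // i ≠ F.pivot} →₀ ℕ := Finsupp.equivFunOnFinite.symm fun j => (a.2 j : ℕ)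
  have ht : t.degree ≤ Fintype.card {i // i ≠ F.pivot} * T := by
    rw [Finsupp.degree_eq_sum]
    exact (Finset.sum_le_card_nsmul _ _ _ fun j _ => (a.2 j).2.le).trans_eq (by simp)
  have hcleared : (F.clearedMonomial (fun i => 4 * S * L i) l (2 * (2 * a.1 + 1)) : ℝ) ≤
      Real.exp (4 * S * W) :=
    (F.clearedMonomial_le (mul_two_mul_le hl (by omega))).trans <| Real.exp_le_exp.2 <| by
      exact_mod_cast F.sum_mul_height_le hW (4 * S)
  rw [siegelMatrix]
  push_cast
  rw [abs_mul, Nat.abs_cast]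
  exact mul_le_mul (abs_prod_crossForm_pow_le hG1 (hG l hl) ht) hcleared (Nat.cast_nonneg _)
    (pow_nonneg (zero_le_one.trans hG1) _)

theorem auxVanishes_of_siegelMatrix_mulVec_eq_zero {p : (ι → ℕ) → ℤ}
    (hp : (F.siegelMatrix L T S).mulVec (fun l => p l) = 0) : F.AuxVanishes L p T S := by
  intro P hP s hs hsS
  suffices h : ∑ l ∈ Finset.Iic L, p l * Real.exp (s * F.logMonomial l) *
      MvPolynomial.eval (fun j => (F.crossForm l j : ℝ)) P = 0 by
    rw [← h, auxSum]
    exact Finset.sum_congr rfl fun l _ => by ring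
  refine sum_mul_eval_eq_zero (T := T) (fun t ht => ?_) hP
  obtain ⟨i, rfl⟩ := hs
  rw [Finsupp.degree_eq_sum] at ht
  have htT (j) : t j < T :=
    (Finset.single_le_sum (fun _ _ => Nat.zero_le _) (Finset.mem_univ j)).trans_lt ht
  have hrow := congrFun hp (⟨i, by omega⟩, fun j => ⟨t j, htT j⟩)
  rw [Matrix.mulVec, dotProduct, Pi.zero_apply] at hrow
  refine (mul_eq_zero.1 (?_ : (∏ i, (F.den i : ℝ) ^ (4 * S * L i)) * _ = 0)).resolve_left
    F.prod_den_pow_pos.ne'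
  rw [← Int.cast_zero (R := ℝ), ← hrow, Finset.mul_sum, ← Finset.sum_coe_sort]
  push_cast
  refine Finset.sum_congr rfl fun l _ => ?_
  have hcleared := prod_den_pow_mul_exp_logMonomial (F := F) (Finset.mem_Iic.1 l.2) hsS
  rw [siegelMatrix]
  push_cast at hcleared ⊢
  rw [← hcleared]
  ring

theorem exists_isAuxiliary (hT : 1 ≤ T) (hS : 1 ≤ S)
    (hcard : 2 * (S * T ^ Fintype.card {i // i ≠ F.pivot}) ≤ (Finset.Iic L).card) (hG1 : 1 ≤ G)
    (hG : ∀ l ≤ L, ∀ j, |(F.crossForm l j : ℝ)| ≤ G) (hW : ∑ i, L i * F.height i ≤ W) :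
    ∃ p, F.IsAuxiliary L T S ((Finset.Iic L).card *
      (G ^ (Fintype.card {i // i ≠ F.pivot} * T) * Real.exp (4 * S * W))) p := by
  have hcardβ : Fintype.card (Finset.Iic L) = (Finset.Iic L).card := Fintype.card_coe _
  have hcardα : Fintype.card (Fin S × ({i // i ≠ F.pivot} → Fin T)) =
      S * T ^ Fintype.card {i // i ≠ F.pivot} := by simp
  have hW0 : 0 ≤ W :=
    (Finset.sum_nonneg fun i _ => mul_nonneg (Nat.cast_nonneg _) (F.height_nonneg i)).trans hW
  have hR : 1 ≤ G ^ (Fintype.card {i // i ≠ F.pivot} * T) * Real.exp (4 * S * W) :=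
    one_le_mul_of_one_le_of_one_le (one_le_pow₀ hG1) (Real.one_le_exp (by positivity))
  obtain ⟨t, ht, hAt, htle⟩ := exists_int_vec_of_two_mul_card_le (F.siegelMatrix L T S)
    (by rw [hcardα]; positivity) (by rwa [hcardα, hcardβ]) hR (abs_siegelMatrix_le hG1 hG hW)
  rw [hcardβ] at htle
  set p : (ι → ℕ) → ℤ := extend Subtype.val t 0
  have hval (l : Finset.Iic L) : p l = t l := Subtype.val_injective.extend_apply t 0 l
  have hsupp (l : ι → ℕ) (hl : ¬ l ≤ L) : p l = 0 :=
    extend_apply' t (0 : (ι → ℕ) → ℤ) l fun ⟨l', hl'⟩ => hl (hl' ▸ Finset.mem_Iic.1 l'.2)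
  refine ⟨p, fun l => ?_, hsupp, ?_, ?_⟩
  · by_cases hl : l ≤ L
    · exact hval ⟨l, Finset.mem_Iic.2 hl⟩ ▸ htle _
    · rw [hsupp l hl, Int.cast_zero, abs_zero]
      positivity
  · obtain ⟨l, hl⟩ := ne_iff.1 ht
    exact ⟨l, (hval l).trans_ne hl⟩
  · refine auxVanishes_of_siegelMatrix_mulVec_eq_zero ?_
    simpa only [hval] using hAt

end LogLinearForm

theorem exp_neg_two_le : Real.exp (-2) ≤ 1 / 4 := by
  rw [Real.exp_neg, one_div]
  gcongr
  rw [show (2 : ℝ) = 1 + 1 by norm_num, Real.exp_add]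
  nlinarith [Real.exp_one_gt_d9]

theorem exp_mul_interpolationError_mul_lt_one {E N : ℕ} {r W Y d ℓ : ℝ} (hℓ : 1 ≤ ℓ)
    (hY : 0 ≤ Y) (hr : 0 ≤ r) (hrW : r * W ≤ 2 * Y) (hWY : W ≤ Y)
    (hN : (40 + 22 * E) * Y + 2 ≤ N) (hrℓ : 10 * r ≤ Real.exp (3 * ℓ)) (hd0 : 0 ≤ d)
    (hd : d ≤ Real.exp (2 * ℓ - 16 * ℓ * N)) :
    Real.exp (2 * (r * W)) * interpolationError N r (Real.exp (18 * Y)) W d *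
      Real.exp (22 * Y) ^ E < 1 := by
  have hEY : 0 ≤ E * Y := by positivity
  have hN2 : (2 : ℝ) ≤ N := by nlinarith
  have hℓN : ℓ * 2 ≤ ℓ * N := by gcongr
  have hNℓN : (N : ℝ) ≤ ℓ * N := le_mul_of_one_le_left (by positivity) hℓ
  have hd1 : d ≤ 1 := hd.trans (Real.exp_le_one_iff.2 (by linarith))
  have hNexp : (N : ℝ) ≤ Real.exp N := by linarith [Real.add_one_le_exp (N : ℝ)]
  have hrN : (10 * r) ^ N ≤ Real.exp (N * (3 * ℓ)) := by
    rw [Real.exp_nat_mul]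
    gcongr
  have hquarter : ((1 : ℝ) / 4) ^ N ≤ Real.exp (-N) := by
    rw [← mul_neg_one, Real.exp_nat_mul]
    gcongr
    rw [Real.exp_neg, one_div]
    gcongr
    linarith [Real.exp_one_lt_d9]
  have hzeros : Real.exp (2 * (r * W)) * (Real.exp (18 * Y) * Real.exp (r * W) *
      (d * Real.exp (W + d)) * N * (10 * r) ^ N) * Real.exp (22 * Y) ^ E ≤ Real.exp (-2) := by
    calc _ ≤ Real.exp (2 * (2 * Y)) * (Real.exp (18 * Y) * Real.exp (2 * Y) *
        (Real.exp (2 * ℓ - 16 * ℓ * N) * Real.exp (Y + 1)) * Real.exp N *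
          Real.exp (N * (3 * ℓ))) * Real.exp (22 * Y) ^ E := by gcongr
      _ = Real.exp (2 * (2 * Y) + (18 * Y + 2 * Y + (2 * ℓ - 16 * ℓ * N + (Y + 1)) + N +
          N * (3 * ℓ)) + E * (22 * Y)) := by simp only [Real.exp_add, Real.exp_nat_mul]
      _ ≤ _ := Real.exp_le_exp.2 (by linarith)
  have hgrowth : Real.exp (2 * (r * W)) * (Real.exp (18 * Y) * Real.exp (9 * r * W) *
      (1 / 4) ^ N) * Real.exp (22 * Y) ^ E ≤ Real.exp (-2) := by
    calc _ ≤ Real.exp (2 * (2 * Y)) * (Real.exp (18 * Y) * Real.exp (9 * (2 * Y)) *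
        Real.exp (-N)) * Real.exp (22 * Y) ^ E := by
          rw [mul_assoc 9]
          gcongr
      _ = Real.exp (2 * (2 * Y) + (18 * Y + 9 * (2 * Y) + -N) + E * (22 * Y)) := by
          simp only [Real.exp_add, Real.exp_nat_mul]
      _ ≤ _ := Real.exp_le_exp.2 (by linarith)
  calc _ = 2 * (Real.exp (2 * (r * W)) * (Real.exp (18 * Y) * Real.exp (r * W) *
        (d * Real.exp (W + d)) * N * (10 * r) ^ N) * Real.exp (22 * Y) ^ E) +
      Real.exp (2 * (r * W)) * (Real.exp (18 * Y) * Real.exp (9 * r * W) *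
        (1 / 4) ^ N) * Real.exp (22 * Y) ^ E := by
          rw [interpolationError]
          ring
    _ < 1 := by linarith [exp_neg_two_le]

namespace LogLinearForm

variable {ι : Type*}

/-- The exponents allowed in the auxiliary function at the start of the descent. -/
noncomputable def descentBox (F : LogLinearForm ι) (K J : ℕ) (i : ι) : ℕ :=
  ⌊(2 : ℝ) ^ J / (K * F.height i)⌋₊

theorem descentBox_mul_height_le (F : LogLinearForm ι) (K J : ℕ) (i : ι) :
    F.descentBox K J i * F.height i ≤ 2 ^ J / K := by
  have hh : 0 < F.height i := zero_lt_one.trans_le (F.one_le_height i)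
  calc F.descentBox K J i * F.height i ≤ 2 ^ J / (K * F.height i) * F.height i := by
        gcongr
        exact Nat.floor_le (by positivity)
    _ = 2 ^ J / K := by field_simp

variable [Fintype ι]

/-- The logarithmic size of the quantities which occur in the descent. -/
noncomputable def descentScale (ι : Type*) [Fintype ι] (J ℓ : ℕ) : ℝ :=
  Fintype.card ι * (ℓ * 2 ^ J)

theorem mul_two_pow_le_descentScale (F : LogLinearForm ι) (J ℓ : ℕ) :
    ℓ * 2 ^ J ≤ descentScale ι J ℓ :=
  le_mul_of_one_le_left (by positivity)
    (Nat.one_le_cast.2 (Fintype.card_pos_iff.2 ⟨F.pivot⟩))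

theorem le_descentScale (F : LogLinearForm ι) (J ℓ : ℕ) : ℓ ≤ descentScale ι J ℓ :=
  (le_mul_of_one_le_right (Nat.cast_nonneg _) (one_le_pow₀ one_le_two)).trans
    (F.mul_two_pow_le_descentScale J ℓ)

theorem sum_descentBox_mul_height_le (F : LogLinearForm ι) (J k : ℕ) {K ℓ : ℕ} (hℓ : 0 < ℓ) :
    ∑ i, ((F.descentBox K J i / 2 ^ k : ℕ) : ℝ) * F.height i ≤
      descentScale ι J ℓ / (2 ^ k * (K * ℓ) : ℕ) := by
  have hterm (i : ι) : ((F.descentBox K J i / 2 ^ k : ℕ) : ℝ) * F.height i ≤ 2 ^ J / K / 2 ^ k := by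
    have hdiv : ((F.descentBox K J i / 2 ^ k : ℕ) : ℝ) ≤ F.descentBox K J i / 2 ^ k :=
      mod_cast Nat.cast_div_le (α := ℝ)
    calc ((F.descentBox K J i / 2 ^ k : ℕ) : ℝ) * F.height i
        ≤ F.descentBox K J i / 2 ^ k * F.height i :=
          mul_le_mul_of_nonneg_right hdiv (F.height_nonneg i)
      _ = F.descentBox K J i * F.height i / 2 ^ k := by ring
      _ ≤ _ := by
          gcongr
          exact F.descentBox_mul_height_le K J i
  refine (Finset.sum_le_card_nsmul _ _ _ fun i _ => hterm i).trans_eq ?_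
  have hℓ' : (ℓ : ℝ) ≠ 0 := Nat.cast_ne_zero.2 hℓ.ne'
  rw [Finset.card_univ, nsmul_eq_mul, descentScale]
  push_cast
  field_simp

/-- The size conditions under which the descent runs for `J` steps, starting from zeros of order
`2 ^ J` at `K * ℓ` odd integers. -/
structure DescentBounds (F : LogLinearForm ι) (K J ℓ : ℕ) : Prop where
  const_le : 2 * ((40 + 22 * liouvilleExponent (Fintype.card ι)) * Fintype.card ι + 2) ≤ K
  one_le : 1 ≤ ℓ
  abs_coeff_le : ∀ i, |(F.coeff i : ℝ)| ≤ Real.exp ℓ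
  prod_height_le : 2 * (K : ℝ) ^ (Fintype.card ι + 1) * ℓ * ∏ i, F.height i ≤ 2 ^ J
  two_pow_le : (2 : ℝ) ^ J ≤ Real.exp (2 * ℓ)
  mul_le_exp : 20 * (K : ℝ) * ℓ ≤ Real.exp ℓ

namespace DescentBounds

variable {F : LogLinearForm ι} {K J ℓ : ℕ}

theorem four_le (h : F.DescentBounds K J ℓ) : 4 ≤ K := by
  have := h.const_le
  omega

theorem one_le_cast (h : F.DescentBounds K J ℓ) : (1 : ℝ) ≤ ℓ := Nat.one_le_cast.2 h.one_le

theorem one_le_mul_two_pow (h : F.DescentBounds K J ℓ) : (1 : ℝ) ≤ ℓ * 2 ^ J :=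
  one_le_mul_of_one_le_of_one_le h.one_le_cast (one_le_pow₀ one_le_two)

theorem one_le_descentScale (h : F.DescentBounds K J ℓ) : 1 ≤ descentScale ι J ℓ :=
  h.one_le_cast.trans (F.le_descentScale J ℓ)

theorem height_le_descentScale (h : F.DescentBounds K J ℓ) (i : ι) :
    F.height i ≤ descentScale ι J ℓ := by
  classical
  have hprod : F.height i ≤ ∏ i, F.height i := by
    rw [← Finset.mul_prod_erase _ _ (Finset.mem_univ i)]
    exact le_mul_of_one_le_right (F.height_nonneg i)
      (Finset.one_le_prod fun j _ => F.one_le_height j)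
  have hK : (1 : ℝ) ≤ K ^ (Fintype.card ι + 1) :=
    one_le_pow₀ (Nat.one_le_cast.2 (by linarith [h.four_le]))
  calc F.height i ≤ 1 * ∏ i, F.height i := by rwa [one_mul]
    _ ≤ 2 * (K : ℝ) ^ (Fintype.card ι + 1) * ℓ * ∏ i, F.height i := by
        gcongr
        · exact Finset.prod_nonneg fun i _ => F.height_nonneg i
        · nlinarith [h.one_le_cast]
    _ ≤ 2 ^ J := h.prod_height_le
    _ ≤ ℓ * 2 ^ J := le_mul_of_one_le_left (by positivity) h.one_le_cast
    _ ≤ _ := F.mul_two_pow_le_descentScale J ℓ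

theorem descentBox_lt (h : F.DescentBounds K J ℓ) (i : ι) : F.descentBox K J i < 2 ^ J := by
  have hK : (1 : ℝ) < K := Nat.one_lt_cast.2 (by linarith [h.four_le])
  have hlt : (F.descentBox K J i : ℝ) < 2 ^ J := calc
    _ ≤ F.descentBox K J i * F.height i :=
      le_mul_of_one_le_right (Nat.cast_nonneg _) (F.one_le_height i)
    _ ≤ 2 ^ J / K := F.descentBox_mul_height_le K J i
    _ < 2 ^ J := div_lt_self (by positivity) hK
  exact_mod_cast hlt

theorem descentBox_div_le (h : F.DescentBounds K J ℓ) (k : ℕ) (i : ι) :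
    ((F.descentBox K J i / 2 ^ k : ℕ) : ℝ) ≤ 2 ^ J := by
  exact_mod_cast (Nat.div_le_self _ _).trans (h.descentBox_lt i).le

theorem two_le_exp (h : F.DescentBounds K J ℓ) : 2 ≤ Real.exp ℓ := by
  linarith [Real.add_one_le_exp (ℓ : ℝ), h.one_le_cast]

theorem abs_crossForm_le (h : F.DescentBounds K J ℓ) (k : ℕ) {l : ι → ℕ}
    (hl : l ≤ fun i => F.descentBox K J i / 2 ^ k) (j : {i // i ≠ F.pivot}) :
    |(F.crossForm l j : ℝ)| ≤ Real.exp (4 * ℓ) := by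
  have hl' (i : ι) : (l i : ℝ) ≤ 2 ^ J := (Nat.cast_le.2 (hl i)).trans (h.descentBox_div_le k i)
  calc |(F.crossForm l j : ℝ)| ≤ 2 * (Real.exp ℓ * 2 ^ J) :=
        F.abs_crossForm_le h.abs_coeff_le hl' j
    _ ≤ Real.exp ℓ * (Real.exp ℓ * Real.exp (2 * ℓ)) := by
        have := h.two_le_exp
        have := h.two_pow_le
        gcongr
    _ = Real.exp (4 * ℓ) := by
        rw [← Real.exp_add, ← Real.exp_add]
        ring_nf

theorem nodes_pos (h : F.DescentBounds K J ℓ) (k : ℕ) : 0 < 2 ^ k * (K * ℓ) := by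
  have := h.four_le
  have := h.one_le
  positivity

theorem nodes_mul_weight (h : F.DescentBounds K J ℓ) (k : ℕ) :
    ((2 ^ k * (K * ℓ) : ℕ) : ℝ) * (descentScale ι J ℓ / (2 ^ k * (K * ℓ) : ℕ)) =
      descentScale ι J ℓ :=
  mul_div_cancel₀ _ (Nat.cast_ne_zero.2 (h.nodes_pos k).ne')

theorem num_mul_den_le (h : F.DescentBounds K J ℓ) (i : ι) :
    ((F.num i * F.den i : ℕ) : ℝ) ≤ Real.exp (22 * descentScale ι J ℓ) := by
  have hexp := Real.exp_le_exp.2 (h.height_le_descentScale i)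
  push_cast
  calc (F.num i : ℝ) * F.den i
      ≤ Real.exp (descentScale ι J ℓ) * Real.exp (descentScale ι J ℓ) := by
        gcongr
        · exact (F.num_le_exp_height i).trans hexp
        · exact (F.den_le_exp_height i).trans hexp
    _ = Real.exp (2 * descentScale ι J ℓ) := by rw [← Real.exp_add, two_mul]
    _ ≤ _ := Real.exp_le_exp.2 (by linarith [h.one_le_descentScale])

theorem two_mul_zeros {k : ℕ} (hk : k < J) :
    2 * ((2 ^ k * (K * ℓ) * 2 ^ (J - (k + 1)) : ℕ) : ℝ) = K * (ℓ * 2 ^ J) := by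
  obtain ⟨j, rfl⟩ := Nat.exists_eq_add_of_lt hk
  rw [show k + j + 1 - (k + 1) = j by omega]
  push_cast
  ring

theorem exp_mul_interpolationError_mul_lt_one (h : F.DescentBounds K J ℓ)
    (hvalue : |F.value| ≤ Real.exp (-(8 * K * ℓ ^ 2 * 2 ^ J))) {k : ℕ} (hk : k < J) :
    Real.exp (4 * (2 ^ k * (K * ℓ) : ℕ) * (descentScale ι J ℓ / (2 ^ k * (K * ℓ) : ℕ))) *
      interpolationError (2 ^ k * (K * ℓ) * 2 ^ (J - (k + 1))) (2 * (2 ^ k * (K * ℓ) : ℕ))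
        (Real.exp (18 * descentScale ι J ℓ)) (descentScale ι J ℓ / (2 ^ k * (K * ℓ) : ℕ))
        (2 ^ J * |F.value|) *
      Real.exp (22 * descentScale ι J ℓ) ^ liouvilleExponent (Fintype.card ι) < 1 := by
  have hSW := h.nodes_mul_weight k
  have hN := two_mul_zeros (K := K) (ℓ := ℓ) hk
  set S : ℕ := 2 ^ k * (K * ℓ) with hS
  set N : ℕ := S * 2 ^ (J - (k + 1))
  set Y := descentScale ι J ℓ with hY
  have hY0 : 0 ≤ Y := zero_le_one.trans h.one_le_descentScale
  have hS1 : (1 : ℝ) ≤ S := Nat.one_le_cast.2 (h.nodes_pos k)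
  have hkJ : (2 : ℝ) ^ k ≤ Real.exp (2 * ℓ) :=
    (pow_le_pow_right₀ one_le_two hk.le).trans h.two_pow_le
  have hzeros : (40 + 22 * liouvilleExponent (Fintype.card ι)) * Y + 2 ≤ N := by
    have hK : 2 * ((40 + 22 * (liouvilleExponent (Fintype.card ι) : ℝ)) * Fintype.card ι + 2) ≤
        K := mod_cast h.const_le
    have := mul_le_mul_of_nonneg_right hK (zero_le_one.trans h.one_le_mul_two_pow)
    rw [hY, descentScale]
    linarith [h.one_le_mul_two_pow]
  have hradius : 10 * (2 * (S : ℝ)) ≤ Real.exp (3 * ℓ) := calc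
    10 * (2 * (S : ℝ)) = 2 ^ k * (20 * K * ℓ) := by
      rw [hS]
      push_cast
      ring
    _ ≤ Real.exp (2 * ℓ) * Real.exp ℓ := by
      gcongr
      exact h.mul_le_exp
    _ = _ := by
      rw [← Real.exp_add]
      ring_nf
  have hdefect : 2 ^ J * |F.value| ≤ Real.exp (2 * ℓ - 16 * ℓ * N) := calc
    2 ^ J * |F.value| ≤ Real.exp (2 * ℓ) * Real.exp (-(8 * K * ℓ ^ 2 * 2 ^ J)) := by
      gcongr
      exact h.two_pow_le
    _ = _ := by
      rw [← Real.exp_add]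
      congr 1
      linear_combination 8 * ℓ * hN
  rw [show 4 * S * (Y / S) = 2 * (2 * S * (Y / S)) by ring]
  exact _root_.exp_mul_interpolationError_mul_lt_one h.one_le_cast hY0 (by positivity)
    (by rw [mul_assoc, hSW]) (div_le_self hY0 hS1) hzeros hradius (by positivity) hdefect

variable [DecidableEq ι]

theorem card_Iic_le (h : F.DescentBounds K J ℓ) (k : ℕ) :
    ((Finset.Iic fun i => F.descentBox K J i / 2 ^ k).card : ℝ) ≤
      Real.exp (3 * descentScale ι J ℓ) := by
  have hfactor (i : ι) : ((F.descentBox K J i / 2 ^ k + 1 : ℕ) : ℝ) ≤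
      Real.exp (3 * (ℓ * 2 ^ J)) := by
    push_cast
    calc ((F.descentBox K J i / 2 ^ k : ℕ) : ℝ) + 1 ≤ 2 ^ J + 2 ^ J :=
          add_le_add (h.descentBox_div_le k i) (one_le_pow₀ one_le_two)
      _ = 2 * 2 ^ J := by ring
      _ ≤ Real.exp ℓ * Real.exp (2 * ℓ) := by
          have := h.two_le_exp
          have := h.two_pow_le
          gcongr
      _ = Real.exp (3 * (ℓ * 1)) := by
          rw [← Real.exp_add]
          ring_nf
      _ ≤ _ := by
          gcongr
          exact one_le_pow₀ one_le_two
  rw [Pi.card_Iic, Nat.cast_prod]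
  simp only [Nat.card_Iic]
  refine (Finset.prod_le_prod (fun _ _ => Nat.cast_nonneg _) fun i _ => hfactor i).trans_eq ?_
  rw [Finset.prod_const, Finset.card_univ, ← Real.exp_nat_mul, descentScale]
  ring_nf

theorem two_mul_card_equations_le (h : F.DescentBounds K J ℓ) :
    2 * (K * ℓ * (2 ^ J) ^ Fintype.card {i // i ≠ F.pivot}) ≤
      (Finset.Iic (F.descentBox K J)).card := by
  have hcard : Fintype.card {i // i ≠ F.pivot} + 1 = Fintype.card ι := by
    have : 0 < Fintype.card ι := Fintype.card_pos_iff.2 ⟨F.pivot⟩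
    have : Fintype.card {i // i ≠ F.pivot} = Fintype.card ι - 1 := Set.card_ne_eq F.pivot
    omega
  have hK : (0 : ℝ) < K := Nat.cast_pos.2 (by linarith [h.four_le])
  have hprod : 0 < ∏ i, F.height i :=
    Finset.prod_pos fun i _ => zero_lt_one.trans_le (F.one_le_height i)
  suffices hreal : 2 * (K * ℓ * ((2 : ℝ) ^ J) ^ Fintype.card {i // i ≠ F.pivot}) ≤
      ∏ i, (2 : ℝ) ^ J / (K * F.height i) by
    have hfloor : ∏ i, (2 : ℝ) ^ J / (K * F.height i) ≤ ((Finset.Iic (F.descentBox K J)).card) := by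
      rw [Pi.card_Iic, Nat.cast_prod]
      refine Finset.prod_le_prod (fun i _ => ?_) fun i _ => ?_
      · have := F.height_nonneg i
        positivity
      · rw [Nat.card_Iic, descentBox]
        push_cast
        exact (Nat.lt_floor_add_one _).le
    exact_mod_cast hreal.trans hfloor
  rw [Finset.prod_div_distrib, Finset.prod_mul_distrib, Finset.prod_const, Finset.prod_const,
    Finset.card_univ, le_div_iff₀ (by positivity)]
  calc 2 * (K * ℓ * ((2 : ℝ) ^ J) ^ Fintype.card {i // i ≠ F.pivot}) *
        ((K : ℝ) ^ Fintype.card ι * ∏ i, F.height i)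
      = ((2 : ℝ) ^ J) ^ Fintype.card {i // i ≠ F.pivot} *
          (2 * (K : ℝ) ^ (Fintype.card ι + 1) * ℓ * ∏ i, F.height i) := by ring
    _ ≤ ((2 : ℝ) ^ J) ^ Fintype.card {i // i ≠ F.pivot} * 2 ^ J := by
        gcongr
        exact h.prod_height_le
    _ = ((2 : ℝ) ^ J) ^ Fintype.card ι := by rw [← pow_succ, hcard]

theorem card_mul_le (h : F.DescentBounds K J ℓ) (k : ℕ) :
    (Finset.Iic fun i => F.descentBox K J i / 2 ^ k).card *
      (Real.exp (11 * descentScale ι J ℓ) * Real.exp (4 * ℓ) ^ 2 ^ (J - (k + 1))) ≤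
        Real.exp (18 * descentScale ι J ℓ) := by
  have hpow : Real.exp (4 * ℓ) ^ 2 ^ (J - (k + 1)) ≤ Real.exp (4 * descentScale ι J ℓ) := by
    rw [← Real.exp_nat_mul, Real.exp_le_exp]
    have : (2 : ℝ) ^ (J - (k + 1)) ≤ 2 ^ J := pow_le_pow_right₀ one_le_two (Nat.sub_le _ _)
    push_cast
    calc (2 : ℝ) ^ (J - (k + 1)) * (4 * ℓ) ≤ 2 ^ J * (4 * ℓ) := by gcongr
      _ = 4 * (ℓ * 2 ^ J) := by ring
      _ ≤ _ := by
          have := F.mul_two_pow_le_descentScale J ℓ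
          gcongr
  calc _ ≤ Real.exp (3 * descentScale ι J ℓ) *
        (Real.exp (11 * descentScale ι J ℓ) * Real.exp (4 * descentScale ι J ℓ)) := by
          gcongr
          exact h.card_Iic_le k
    _ = Real.exp (18 * descentScale ι J ℓ) := by
        rw [← Real.exp_add, ← Real.exp_add]
        ring_nf

theorem stepBounds (h : F.DescentBounds K J ℓ)
    (hvalue : |F.value| ≤ Real.exp (-(8 * K * ℓ ^ 2 * 2 ^ J))) {k : ℕ} (hk : k < J) :
    F.StepBounds (fun i => F.descentBox K J i / 2 ^ k) (2 ^ (J - (k + 1))) (2 ^ k * (K * ℓ))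
      (Real.exp (11 * descentScale ι J ℓ)) (Real.exp (4 * ℓ)) (Real.exp (18 * descentScale ι J ℓ))
      (descentScale ι J ℓ / (2 ^ k * (K * ℓ) : ℕ)) (2 ^ J * |F.value|)
      (Real.exp (22 * descentScale ι J ℓ)) where
  one_le_nodes := h.nodes_pos k
  one_le_crossForm_bound := Real.one_le_exp (by positivity)
  abs_crossForm_le _ hl := h.abs_crossForm_le k hl
  card_mul_le := h.card_mul_le k
  sum_mul_height_le := F.sum_descentBox_mul_height_le J k h.one_le
  pivot_mul_value_le := mul_le_mul_of_nonneg_right (h.descentBox_div_le k _) (abs_nonneg _)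
  mul_exp_le := by
    rw [mul_assoc 4, h.nodes_mul_weight, ← Real.exp_add]
    ring_nf
    rfl
  num_mul_den_le := h.num_mul_den_le
  two_le := by
    linarith [Real.add_one_le_exp (22 * descentScale ι J ℓ), h.one_le_descentScale]
  interpolationError_lt := h.exp_mul_interpolationError_mul_lt_one hvalue hk

theorem exists_isAuxiliary_initial (h : F.DescentBounds K J ℓ) :
    ∃ p, F.IsAuxiliary (F.descentBox K J) (2 ^ J) (K * ℓ) (Real.exp (11 * descentScale ι J ℓ))
      p := by
  have hweight := F.sum_descentBox_mul_height_le J 0 (K := K) h.one_le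
  have hnodes := h.nodes_mul_weight 0
  have hcross (l : ι → ℕ) := h.abs_crossForm_le 0 (l := l)
  have hcard := h.card_Iic_le 0
  simp only [pow_zero, Nat.div_one, one_mul] at hweight hcross hcard hnodes
  have hnodes_pos : 0 < K * ℓ := by
    have := h.nodes_pos 0
    rwa [pow_zero, one_mul] at this
  obtain ⟨p, hp⟩ := exists_isAuxiliary Nat.one_le_two_pow hnodes_pos h.two_mul_card_equations_le
    (Real.one_le_exp (by positivity)) hcross hweight
  refine ⟨p, fun l => (hp.abs_le l).trans ?_, hp.eq_zero_of_not_le, hp.exists_ne_zero, hp.vanishes⟩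
  have hderiv : Real.exp (4 * ℓ) ^ (Fintype.card {i // i ≠ F.pivot} * 2 ^ J) ≤
      Real.exp (4 * descentScale ι J ℓ) := by
    have hcard_le : (Fintype.card {i // i ≠ F.pivot} : ℝ) ≤ Fintype.card ι :=
      Nat.cast_le.2 (Fintype.card_subtype_le _)
    rw [← Real.exp_nat_mul, Real.exp_le_exp, descentScale]
    push_cast
    calc (Fintype.card {i // i ≠ F.pivot} : ℝ) * 2 ^ J * (4 * ℓ)
        ≤ Fintype.card ι * 2 ^ J * (4 * ℓ) := by gcongr
      _ = _ := by ring
  rw [mul_assoc 4, hnodes]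
  calc _ ≤ Real.exp (3 * descentScale ι J ℓ) *
        (Real.exp (4 * descentScale ι J ℓ) * Real.exp (4 * descentScale ι J ℓ)) := by gcongr
    _ = Real.exp (11 * descentScale ι J ℓ) := by
        rw [← Real.exp_add, ← Real.exp_add]
        ring_nf

theorem exists_isAuxiliary (hF : F.SquareIndependent) (h : F.DescentBounds K J ℓ)
    (hvalue : |F.value| ≤ Real.exp (-(8 * K * ℓ ^ 2 * 2 ^ J))) {k : ℕ} (hk : k ≤ J) :
    ∃ p, F.IsAuxiliary (fun i => F.descentBox K J i / 2 ^ k) (2 ^ (J - k)) (2 ^ k * (K * ℓ))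
      (Real.exp (11 * descentScale ι J ℓ)) p := by
  induction k with
  | zero => simpa using h.exists_isAuxiliary_initial
  | succ k ih =>
    obtain ⟨p, hp⟩ := ih (by omega)
    rw [show J - k = J - (k + 1) + 1 by omega, pow_succ'] at hp
    simpa only [Nat.div_div_eq_div_mul, ← pow_succ, pow_succ', mul_assoc] using
      hp.exists_half hF (h.stepBounds hvalue hk)

omit [DecidableEq ι] in
theorem lt_abs_value (hF : F.SquareIndependent) (h : F.DescentBounds K J ℓ) :
    Real.exp (-(8 * K * ℓ ^ 2 * 2 ^ J)) < |F.value| := by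
  classical
  by_contra! hvalue
  obtain ⟨p, hp⟩ := h.exists_isAuxiliary hF hvalue le_rfl
  have hbox : (fun i => F.descentBox K J i / 2 ^ J) = 0 :=
    funext fun i => Nat.div_eq_of_lt (h.descentBox_lt i)
  have hIic : Finset.Iic (0 : ι → ℕ) = {0} := Finset.Iic_bot
  obtain ⟨l, hl⟩ := hp.exists_ne_zero
  have hl0 : l = 0 := le_zero_iff.1 <| by
    by_contra hl0
    exact hl (hp.eq_zero_of_not_le l (by rwa [hbox]))
  have hvanish := hp.vanishes 1 (by simp) 1 odd_one (by have := h.nodes_pos J; omega)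
  rw [hbox, auxSum, hIic, Finset.sum_singleton, map_one, mul_one] at hvanish
  refine hl (hl0 ▸ ?_)
  simpa using hvanish

end DescentBounds

end LogLinearForm

theorem eventually_mul_natCast_le_exp (c : ℝ) :
    ∀ᶠ ℓ : ℕ in Filter.atTop, c * ℓ ≤ Real.exp ℓ := by
  have hlim := (Real.tendsto_exp_div_pow_atTop 1).comp (tendsto_natCast_atTop_atTop (R := ℝ))
  filter_upwards [hlim.eventually_ge_atTop c, Filter.eventually_gt_atTop 0] with ℓ hle hpos
  rw [comp_apply, pow_one] at hle
  exact (le_div_iff₀ (Nat.cast_pos.2 hpos)).1 hle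

namespace LogLinearForm

theorem exp_neg_mul_prod_height_le_abs_value {ι : Type*} [Fintype ι] {F : LogLinearForm ι}
    {N K ℓ : ℕ} (hF : F.SquareIndependent) (hN : Fintype.card ι ≤ N)
    (hK : 2 * ((40 + 22 * liouvilleExponent (Fintype.card ι)) * Fintype.card ι + 2) ≤ K)
    (hℓ : 1 ≤ ℓ) (hcoeff : ∀ i, |(F.coeff i : ℝ)| ≤ Real.exp ℓ)
    (hheight : ∏ i, F.height i ≤ Real.exp ℓ) (hKℓ : 4 * (K : ℝ) ^ (N + 1) * ℓ ≤ Real.exp ℓ)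
    (h20 : 20 * (K : ℝ) * ℓ ≤ Real.exp ℓ) :
    Real.exp (-(32 * K ^ (N + 2) * ℓ ^ 3 * ∏ i, F.height i)) ≤ |F.value| := by
  have hK1 : (1 : ℝ) ≤ K := Nat.one_le_cast.2 (by omega)
  have hprod : 1 ≤ ∏ i, F.height i := Finset.one_le_prod fun i _ => F.one_le_height i
  have hstart : 1 ≤ 2 * (K : ℝ) ^ (N + 1) * ℓ * ∏ i, F.height i :=
    one_le_mul_of_one_le_of_one_le (one_le_mul_of_one_le_of_one_le
      (by linarith [one_le_pow₀ (n := N + 1) hK1]) (Nat.one_le_cast.2 hℓ)) hprod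
  obtain ⟨J, hJle, hJlt⟩ := exists_nat_pow_near hstart (one_lt_two (α := ℝ))
  have hJ : (2 : ℝ) ^ (J + 1) ≤ 4 * (K : ℝ) ^ (N + 1) * ℓ * ∏ i, F.height i := by
    rw [pow_succ]
    linarith
  have hdescent : F.DescentBounds K (J + 1) ℓ :=
    { const_le := hK
      one_le := hℓ
      abs_coeff_le := hcoeff
      prod_height_le := by
        refine le_trans ?_ hJlt.le
        gcongr
      two_pow_le := by
        refine hJ.trans ?_
        rw [two_mul, Real.exp_add]
        gcongr
      mul_le_exp := h20 }
  refine le_trans (Real.exp_le_exp.2 (neg_le_neg ?_)) (hdescent.lt_abs_value hF).le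
  calc 8 * K * (ℓ : ℝ) ^ 2 * 2 ^ (J + 1)
      ≤ 8 * K * (ℓ : ℝ) ^ 2 * (4 * (K : ℝ) ^ (N + 1) * ℓ * ∏ i, F.height i) := by gcongr
    _ = _ := by ring

theorem exists_exp_neg_le_abs_value (N : ℕ) :
    ∃ C : ℝ, 0 < C ∧ ∀ᶠ ℓ : ℕ in Filter.atTop, ∀ (ι : Type*) [Fintype ι] (F : LogLinearForm ι),
      Fintype.card ι ≤ N → F.SquareIndependent → (∀ i, |(F.coeff i : ℝ)| ≤ Real.exp ℓ) →
      ∏ i, F.height i ≤ Real.exp ℓ →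
      Real.exp (-(C * ℓ ^ 3 * ∏ i, F.height i)) ≤ |F.value| := by
  set c : ℕ → ℕ := fun n => 2 * ((40 + 22 * liouvilleExponent n) * n + 2)
  set K := ∑ n ∈ Finset.range (N + 1), c n
  have hK {n : ℕ} (hn : n ≤ N) : c n ≤ K :=
    Finset.single_le_sum (fun _ _ => Nat.zero_le _) (Finset.mem_range.2 (by omega))
  have hK0 : 0 < K := Nat.lt_of_lt_of_le (by positivity) (hK (Nat.zero_le N))
  refine ⟨32 * K ^ (N + 2), by positivity, ?_⟩
  filter_upwards [eventually_mul_natCast_le_exp (4 * K ^ (N + 1)),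
    eventually_mul_natCast_le_exp (20 * K), Filter.eventually_ge_atTop 1]
    with ℓ hKℓ h20 hℓ ι _ F hN hF hcoeff hheight
  exact exp_neg_mul_prod_height_le_abs_value hF hN (hK hN) hℓ hcoeff hheight hKℓ h20

end LogLinearForm

theorem not_isSquare_prod_of_prime {ι : Type*} {I : Finset ι} {f : ι → ℕ} {i : ι}
    (hi : i ∈ I) (hp : (f i).Prime) (hne : ∀ j ∈ I, j ≠ i → ¬ f i ∣ f j) :
    ¬ IsSquare (∏ j ∈ I, f j) := by
  classical
  rintro ⟨r, hr⟩
  rw [← Finset.mul_prod_erase I f hi] at hr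
  obtain ⟨r', rfl⟩ : f i ∣ r := or_self_iff.1 (hp.dvd_mul.1 (hr ▸ dvd_mul_right _ _))
  have hrest : ∏ j ∈ I.erase i, f j = f i * (r' * r') :=
    Nat.eq_of_mul_eq_mul_left hp.pos (by rw [hr]; ring)
  obtain ⟨j, hj, hdvd⟩ := hp.prime.exists_mem_finset_dvd (hrest ▸ dvd_mul_right (f i) (r' * r'))
  exact hne j (Finset.mem_of_mem_erase hj) (Finset.ne_of_mem_erase hj) hdvd

theorem exists_eq_pow_two_pow_of_coprime {a b : ℕ} (ha : 0 < a) (hb : 0 < b)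
    (hab : a.Coprime b) (hne : a ≠ b) :
    ∃ k a' b' : ℕ, a = a' ^ 2 ^ k ∧ b = b' ^ 2 ^ k ∧ ¬ IsSquare (a' * b') := by
  induction hN : a + b using Nat.strong_induction_on generalizing a b with
  | _ N ih =>
    by_cases hsq : IsSquare (a * b)
    · obtain ⟨r, hr⟩ := hsq
      rw [← sq] at hr
      obtain ⟨c, rfl⟩ := exists_eq_pow_of_mul_eq_pow (Nat.isUnit_iff.2 hab) hr
      obtain ⟨d, rfl⟩ := exists_eq_pow_of_mul_eq_pow (Nat.isUnit_iff.2 hab.symm)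
        ((mul_comm _ _).trans hr)
      have hc : 0 < c := Nat.pos_of_ne_zero (by rintro rfl; simp at ha)
      have hd : 0 < d := Nat.pos_of_ne_zero (by rintro rfl; simp at hb)
      have hcd : c ≠ d := fun h => hne (h ▸ rfl)
      have hlt : c + d < N := by
        subst hN
        rcases hcd.lt_or_gt with h | h <;> nlinarith
      obtain ⟨k, a', b', rfl, rfl, hsq'⟩ := ih _ hlt hc hd
        ((Nat.coprime_pow_left_iff two_pos _ _).1 ((Nat.coprime_pow_right_iff two_pos _ _).1 hab))
        hcd rfl
      exact ⟨k + 1, a', b', by rw [← pow_mul, pow_succ], by rw [← pow_mul, pow_succ], hsq'⟩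
    · exact ⟨0, a, b, by simp, by simp, hsq⟩

theorem exists_log_sub_log_eq_two_pow_mul {U V : ℕ} (hU : 0 < U) (hV : 0 < V) (hne : U ≠ V) :
    ∃ k U' V' : ℕ, U' ∣ U ∧ V' ∣ V ∧ 2 ^ k ≤ max U V ∧ ¬ IsSquare (U' * V') ∧
      Real.log U - Real.log V = 2 ^ k * (Real.log U' - Real.log V') := by
  obtain ⟨a, b, hab, hUa, hVb⟩ := Nat.exists_coprime U V
  set g := U.gcd V
  have hg : 0 < g := Nat.gcd_pos_of_pos_left V hU
  have ha : 0 < a := Nat.pos_of_mul_pos_right (hUa ▸ hU)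
  have hb : 0 < b := Nat.pos_of_mul_pos_right (hVb ▸ hV)
  obtain ⟨k, U', V', rfl, rfl, hsq⟩ := exists_eq_pow_two_pow_of_coprime ha hb hab
    (by rintro rfl; exact hne (hUa.trans hVb.symm))
  have h2k : 2 ^ k ≠ 0 := by positivity
  have hUdvd : U' ^ 2 ^ k ∣ U := ⟨g, hUa⟩
  have hVdvd : V' ^ 2 ^ k ∣ V := ⟨g, hVb⟩
  refine ⟨k, U', V', (dvd_pow_self _ h2k).trans hUdvd, (dvd_pow_self _ h2k).trans hVdvd, ?_, hsq,
    ?_⟩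
  · have hpow {x : ℕ} (hx : 2 ≤ x) : 2 ^ k ≤ x ^ 2 ^ k :=
      Nat.lt_two_pow_self.le.trans (Nat.pow_le_pow_left hx _)
    have hU' : U' ≠ 0 := by rintro rfl; simp at ha
    have hV' : V' ≠ 0 := by rintro rfl; simp at hb
    by_cases hU2 : 2 ≤ U'
    · exact le_max_of_le_left ((hpow hU2).trans (Nat.le_of_dvd hU hUdvd))
    · refine le_max_of_le_right ((hpow ?_).trans (Nat.le_of_dvd hV hVdvd))
      by_contra! hV2
      obtain rfl : U' = 1 := by omega
      obtain rfl : V' = 1 := by omega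
      simp at hsq
  · have hg' : (g : ℝ) ≠ 0 := Nat.cast_ne_zero.2 hg.ne'
    rw [hUa, hVb, Nat.cast_mul, Nat.cast_mul, Real.log_mul (Nat.cast_ne_zero.2 ha.ne') hg',
      Real.log_mul (Nat.cast_ne_zero.2 hb.ne') hg', Nat.cast_pow, Nat.cast_pow, Real.log_pow,
      Real.log_pow]
    push_cast
    ring

theorem exists_eq_prod_pow_factorization_mul {x : ℕ} (hx : x ≠ 0) {P : Finset ℕ}
    (hP : ∀ p ∈ P, p.Prime) :
    ∃ U, x = (∏ p ∈ P, p ^ x.factorization p) * U ∧ ∀ p ∈ P, ¬ p ∣ U := by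
  refine ⟨∏ p ∈ x.primeFactors \ P, p ^ x.factorization p, ?_, fun p hp hdvd => ?_⟩
  · conv_lhs => rw [← Nat.prod_factorization_pow_eq_self hx]
    rw [Finsupp.prod_of_support_subset (s := P ∪ x.primeFactors) _
      Finset.subset_union_right _ (by simp), ← Finset.union_sdiff_self_eq_union,
      Finset.prod_union Finset.disjoint_sdiff]
  · obtain ⟨r, hr, hpr⟩ := (hP p hp).prime.exists_mem_finset_dvd hdvd
    rw [Finset.mem_sdiff] at hr
    have hpr' := (Nat.prime_dvd_prime_iff_eq (hP p hp) (Nat.prime_of_mem_primeFactors hr.1)).1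
      ((hP p hp).dvd_of_dvd_pow hpr)
    exact hr.2 (hpr' ▸ hp)

theorem exists_log_eq_sum_factorization_mul_log_add_log {x : ℕ} (hx : x ≠ 0) {P : Finset ℕ}
    (hP : ∀ p ∈ P, p.Prime) :
    ∃ U, U ∣ x ∧ (∀ p ∈ P, ¬ p ∣ U) ∧
      Real.log x = ∑ p ∈ P, x.factorization p * Real.log p + Real.log U := by
  obtain ⟨U, hU, hPU⟩ := exists_eq_prod_pow_factorization_mul hx hP
  refine ⟨U, ⟨_, hU.trans (mul_comm _ _)⟩, hPU, ?_⟩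
  have hU0 : (U : ℝ) ≠ 0 := by
    rintro hU0
    rw [Nat.cast_eq_zero.1 hU0, mul_zero] at hU
    exact hx hU
  have hpow (p : ℕ) (hp : p ∈ P) : (p : ℝ) ^ x.factorization p ≠ 0 :=
    pow_ne_zero _ (Nat.cast_ne_zero.2 (hP p hp).ne_zero)
  conv_lhs => rw [hU]
  push_cast
  rw [Real.log_mul (Finset.prod_ne_zero_iff.2 hpow) hU0, Real.log_prod hpow]
  simp only [Real.log_pow]

theorem factorization_le_two_mul_log {x : ℕ} (hx : 0 < x) {p : ℕ} (hp : p.Prime) :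
    (x.factorization p : ℝ) ≤ 2 * Real.log x := by
  have hpow : (2 : ℝ) ^ x.factorization p ≤ x := mod_cast
    (Nat.pow_le_pow_left hp.two_le _).trans (Nat.le_of_dvd hx (Nat.ordProj_dvd x p))
  have hlog := Real.log_le_log (by positivity) hpow
  rw [Real.log_pow] at hlog
  nlinarith [Real.log_two_gt_d9, Nat.cast_nonneg (α := ℝ) (x.factorization p)]

theorem exists_exp_neg_le_abs_sum_mul_log (N : ℕ) :
    ∃ C : ℝ, 0 < C ∧ ∀ᶠ ℓ : ℕ in Filter.atTop, ∀ P : Finset ℕ, (∀ p ∈ P, p.Prime) →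
      P.card ≤ N → ∀ h : ℝ, 1 ≤ h → (∀ p ∈ P, Real.log p ≤ h) → h ^ N ≤ Real.exp ℓ →
      ∀ c : ℕ → ℤ, (∀ p ∈ P, |(c p : ℝ)| ≤ Real.exp ℓ) → ∑ p ∈ P, c p * Real.log p ≠ 0 →
      Real.exp (-(C * ℓ ^ 3 * h ^ N)) ≤ |∑ p ∈ P, c p * Real.log p| := by
  obtain ⟨C, hC, hbound⟩ := LogLinearForm.exists_exp_neg_le_abs_value N
  refine ⟨C, hC, ?_⟩
  filter_upwards [hbound] with ℓ hℓ P hP hcard h hh hPh hhN c hc hne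
  obtain ⟨p₀, hp₀, hcp₀⟩ := Finset.exists_ne_zero_of_sum_ne_zero hne
  let F : LogLinearForm P :=
    { num := fun p => p
      den := 1
      coeff := fun p => c p
      pivot := ⟨p₀, hp₀⟩
      height := fun _ => h
      num_pos := fun p => (hP p p.2).pos
      den_pos := fun _ => one_pos
      coeff_pivot_ne_zero := fun h0 => hcp₀ (by simp [h0])
      one_le_height := fun _ => hh
      log_num_le_height := fun p => hPh p p.2
      log_den_le_height := fun _ => by simpa using zero_le_one.trans hh }
  have hvalue : F.value = ∑ p ∈ P, c p * Real.log p := by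
    rw [LogLinearForm.value, ← Finset.sum_coe_sort P]
    simp [F, LogLinearForm.log]
  have hF : F.SquareIndependent := by
    rintro I ⟨p, hp⟩
    simp only [F, Pi.one_apply, mul_one]
    exact not_isSquare_prod_of_prime (f := fun p : P => (p : ℕ)) hp (hP p p.2) fun r _ hrp hdvd =>
      hrp (Subtype.ext ((Nat.prime_dvd_prime_iff_eq (hP p p.2) (hP r r.2)).1 hdvd).symm)
  have hheight : ∏ p, F.height p ≤ h ^ N := by
    rw [Finset.prod_const, Finset.card_univ, Fintype.card_coe]
    exact pow_le_pow_right₀ hh hcard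
  rw [← hvalue]
  refine le_trans ?_ (hℓ P F (by rwa [Fintype.card_coe]) hF (fun p => hc p p.2)
    (hheight.trans hhN))
  gcongr

theorem not_isSquare_prod_option_elim {P : Finset ℕ} (hP : ∀ p ∈ P, p.Prime) {w : ℕ}
    (hPw : ∀ p ∈ P, ¬ p ∣ w) (hw : ¬ IsSquare w) {I : Finset (Option P)} (hI : I.Nonempty) :
    ¬ IsSquare (∏ i ∈ I, i.elim w fun p => (p : ℕ)) := by
  by_cases hex : ∃ p, some p ∈ I
  · obtain ⟨p, hp⟩ := hex
    refine not_isSquare_prod_of_prime hp (hP p p.2) (Option.forall.2 ⟨fun _ _ => hPw p p.2, ?_⟩)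
    intro r _ hrp hdvd
    exact hrp (congrArg some
      (Subtype.ext ((Nat.prime_dvd_prime_iff_eq (hP p p.2) (hP r r.2)).1 hdvd).symm))
  · obtain rfl : I = {none} := Finset.eq_singleton_iff_nonempty_unique_mem.2
      ⟨hI, Option.forall.2 ⟨fun _ => rfl, fun p hp => absurd ⟨p, hp⟩ hex⟩⟩
    simpa using hw

theorem exists_exp_neg_le_abs_mul_log_sub_log_add (N : ℕ) :
    ∃ C : ℝ, 0 < C ∧ ∀ᶠ ℓ : ℕ in Filter.atTop, ∀ P : Finset ℕ, (∀ p ∈ P, p.Prime) →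
      P.card ≤ N → ∀ U V : ℕ, (∀ p ∈ P, ¬ p ∣ U) → (∀ p ∈ P, ¬ p ∣ V) → ¬ IsSquare (U * V) →
      ∀ h H : ℝ, 1 ≤ h → 1 ≤ H → (∀ p ∈ P, Real.log p ≤ h) → Real.log U ≤ H → Real.log V ≤ H →
      h ^ N * H ≤ Real.exp ℓ → ∀ (c : ℕ → ℤ) (c₀ : ℤ), c₀ ≠ 0 →
      (∀ p ∈ P, |(c p : ℝ)| ≤ Real.exp ℓ) → |(c₀ : ℝ)| ≤ Real.exp ℓ →
      Real.exp (-(C * ℓ ^ 3 * (h ^ N * H))) ≤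
        |c₀ * (Real.log U - Real.log V) + ∑ p ∈ P, c p * Real.log p| := by
  obtain ⟨C, hC, hbound⟩ := LogLinearForm.exists_exp_neg_le_abs_value (N + 1)
  refine ⟨C, hC, ?_⟩
  filter_upwards [hbound]
    with ℓ hℓ P hP hcard U V hPU hPV hsq h H hh hH hPh hUH hVH hhN c c₀ hc₀ hc hc₀ℓ
  have hUV : U * V ≠ 0 := fun h0 => hsq (h0 ▸ IsSquare.zero)
  let F : LogLinearForm (Option P) :=
    { num := fun i => i.elim U fun p => p
      den := fun i => i.elim V fun _ => 1
      coeff := fun i => i.elim c₀ fun p => c p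
      pivot := none
      height := fun i => i.elim H fun _ => h
      num_pos := Option.forall.2
        ⟨Nat.pos_of_ne_zero (left_ne_zero_of_mul hUV), fun p => (hP p p.2).pos⟩
      den_pos := Option.forall.2
        ⟨Nat.pos_of_ne_zero (right_ne_zero_of_mul hUV), fun _ => one_pos⟩
      coeff_pivot_ne_zero := hc₀
      one_le_height := Option.forall.2 ⟨hH, fun _ => hh⟩
      log_num_le_height := Option.forall.2 ⟨hUH, fun p => hPh p p.2⟩
      log_den_le_height := Option.forall.2
        ⟨hVH, fun _ => by simpa using zero_le_one.trans hh⟩ }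
  have hvalue : F.value =
      c₀ * (Real.log U - Real.log V) + ∑ p ∈ P, c p * Real.log p := by
    rw [LogLinearForm.value, Fintype.sum_option, ← Finset.sum_coe_sort P]
    simp [F, LogLinearForm.log]
  have hF : F.SquareIndependent := fun I hI => by
    have hprod (i : Option P) : F.num i * F.den i = i.elim (U * V) fun p => (p : ℕ) := by
      cases i <;> simp [F]
    simp only [hprod]
    exact not_isSquare_prod_option_elim hP
      (fun p hp => (hP p hp).dvd_mul.not.2 (not_or.2 ⟨hPU p hp, hPV p hp⟩)) hsq hI
  have hheight : ∏ i, F.height i ≤ h ^ N * H := by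
    rw [Fintype.prod_option, mul_comm]
    simp only [F, Option.elim_some, Option.elim_none]
    rw [Finset.prod_const, Finset.card_univ, Fintype.card_coe]
    gcongr
  rw [← hvalue]
  refine le_trans ?_ (hℓ (Option P) F (by simpa using hcard) hF
    (Option.forall.2 ⟨hc₀ℓ, fun p => hc p p.2⟩) (hheight.trans hhN))
  gcongr

theorem log_le_log_of_dvd {x y : ℕ} (hy : 0 < y) (hxy : x ∣ y) : Real.log x ≤ Real.log y :=
  Real.log_le_log (Nat.cast_pos.2 (Nat.pos_of_dvd_of_pos hxy hy))
    (Nat.cast_le.2 (Nat.le_of_dvd hy hxy))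

theorem exists_exp_neg_le_abs_sum_mul_log_add_log_sub_log (N : ℕ) :
    ∃ C : ℝ, 0 < C ∧ ∀ᶠ ℓ : ℕ in Filter.atTop, ∀ P : Finset ℕ, (∀ p ∈ P, p.Prime) →
      P.card ≤ N → ∀ U V : ℕ, 0 < U → 0 < V → (∀ p ∈ P, ¬ p ∣ U) → (∀ p ∈ P, ¬ p ∣ V) →
      ∀ h H : ℝ, 1 ≤ h → 1 ≤ H → (∀ p ∈ P, Real.log p ≤ h) → Real.log U ≤ H → Real.log V ≤ H →
      h ^ N * H ≤ Real.exp ℓ → H ≤ ℓ →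
      ∀ c : ℕ → ℤ, (∀ p ∈ P, |(c p : ℝ)| ≤ Real.exp ℓ) →
      ∑ p ∈ P, c p * Real.log p + (Real.log U - Real.log V) ≠ 0 →
      Real.exp (-(C * ℓ ^ 3 * (h ^ N * H))) ≤
        |∑ p ∈ P, c p * Real.log p + (Real.log U - Real.log V)| := by
  obtain ⟨C₁, hC₁, hbound₁⟩ := exists_exp_neg_le_abs_sum_mul_log N
  obtain ⟨C₂, hC₂, hbound₂⟩ := exists_exp_neg_le_abs_mul_log_sub_log_add N
  refine ⟨C₁ + C₂, by positivity, ?_⟩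
  filter_upwards [hbound₁, hbound₂] with ℓ hℓ₁ hℓ₂ P hP hcard U V hU hV hPU hPV h H hh hH hPh hUH
    hVH hhN hHℓ c hc hne
  have hpow : h ^ N ≤ h ^ N * H := le_mul_of_one_le_right (by positivity) hH
  rcases eq_or_ne U V with rfl | hUV
  · rw [sub_self, add_zero] at hne ⊢
    refine le_trans ?_ (hℓ₁ P hP hcard h hh hPh (hpow.trans hhN) c hc hne)
    gcongr
    exact le_add_of_nonneg_right hC₂.le
  · obtain ⟨k, U', V', hUU', hVV', hk, hsq, hlog⟩ := exists_log_sub_log_eq_two_pow_mul hU hV hUV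
    have hle {x : ℕ} (hx : 0 < x) (hxH : Real.log x ≤ H) : (x : ℝ) ≤ Real.exp ℓ :=
      (Real.log_le_iff_le_exp (Nat.cast_pos.2 hx)).1 (hxH.trans hHℓ)
    have hkℓ : (2 : ℝ) ^ k ≤ Real.exp ℓ :=
      (by exact_mod_cast hk : (2 : ℝ) ^ k ≤ max (U : ℝ) V).trans
        (max_le (hle hU hUH) (hle hV hVH))
    have hform : ∑ p ∈ P, c p * Real.log p + (Real.log U - Real.log V) =
        (2 ^ k : ℤ) * (Real.log U' - Real.log V') + ∑ p ∈ P, c p * Real.log p := by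
      rw [hlog]
      push_cast
      ring
    rw [hform]
    refine le_trans ?_ (hℓ₂ P hP hcard U' V' (fun p hp hpU => hPU p hp (hpU.trans hUU'))
      (fun p hp hpV => hPV p hp (hpV.trans hVV')) hsq h H hh hH hPh
      ((log_le_log_of_dvd hU hUU').trans hUH) ((log_le_log_of_dvd hV hVV').trans hVH) hhN c (2 ^ k)
      (by positivity) hc ?_)
    · gcongr
      exact le_add_of_nonneg_left hC₁.le
    · simpa using hkℓ

theorem exists_dvd_log_mul_eq_sum_factorization_add_log {s a : ℕ} (hs : 0 < s) (ha : 0 < a)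
    {P : Finset ℕ} (hP : ∀ p ∈ P, p.Prime) (haP : a.primeFactors ⊆ P) :
    ∃ U, U ∣ s ∧ (∀ p ∈ P, ¬ p ∣ U) ∧ Real.log (s * a : ℕ) =
      ∑ p ∈ P, (s * a).factorization p * Real.log p + Real.log U := by
  obtain ⟨U, hU, hPU, hlog⟩ :=
    exists_log_eq_sum_factorization_mul_log_add_log (Nat.mul_pos hs ha).ne' hP
  have hcop : U.Coprime a := Nat.coprime_of_dvd fun p hp hpU hpa =>
    hPU p (haP (Nat.mem_primeFactors.2 ⟨hp, hpa, ha.ne'⟩)) hpU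
  exact ⟨U, hcop.dvd_of_dvd_mul_right hU, hPU, hlog⟩

theorem exists_exp_neg_le_abs_log_sub_log (N : ℕ) :
    ∃ C : ℝ, 0 < C ∧ ∀ᶠ ℓ : ℕ in Filter.atTop, ∀ P : Finset ℕ, (∀ p ∈ P, p.Prime) →
      P.card ≤ N → ∀ s t a b : ℕ, 0 < s → 0 < t → 0 < a → 0 < b →
      a.primeFactors ⊆ P → b.primeFactors ⊆ P → s * a ≠ t * b →
      ∀ h H : ℝ, 1 ≤ h → 1 ≤ H → (∀ p ∈ P, Real.log p ≤ h) → Real.log s ≤ H → Real.log t ≤ H →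
      h ^ N * H ≤ Real.exp ℓ → H ≤ ℓ → 2 * Real.log (s * a : ℕ) ≤ Real.exp ℓ →
      2 * Real.log (t * b : ℕ) ≤ Real.exp ℓ →
      Real.exp (-(C * ℓ ^ 3 * (h ^ N * H))) ≤
        |Real.log (s * a : ℕ) - Real.log (t * b : ℕ)| := by
  obtain ⟨C, hC, hbound⟩ := exists_exp_neg_le_abs_sum_mul_log_add_log_sub_log N
  refine ⟨C, hC, ?_⟩
  filter_upwards [hbound] with ℓ hℓ P hP hcard s t a b hs ht ha hb haP hbP hne h H hh hH hPh hsH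
    htH hhN hHℓ hsa htb
  obtain ⟨U, hUs, hPU, hlogU⟩ := exists_dvd_log_mul_eq_sum_factorization_add_log hs ha hP haP
  obtain ⟨V, hVt, hPV, hlogV⟩ := exists_dvd_log_mul_eq_sum_factorization_add_log ht hb hP hbP
  have hU := Nat.pos_of_dvd_of_pos hUs hs
  have hV := Nat.pos_of_dvd_of_pos hVt ht
  let c (p : ℕ) : ℤ := (s * a).factorization p - (t * b).factorization p
  have hform : Real.log (s * a : ℕ) - Real.log (t * b : ℕ) =
      ∑ p ∈ P, c p * Real.log p + (Real.log U - Real.log V) := by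
    simp only [hlogU, hlogV, c, Int.cast_sub, Int.cast_natCast, sub_mul, Finset.sum_sub_distrib]
    ring
  have hlogne : Real.log (s * a : ℕ) - Real.log (t * b : ℕ) ≠ 0 := fun heq =>
    hne (Nat.cast_injective (Real.log_injOn_pos (Set.mem_Ioi.2 (by positivity))
      (Set.mem_Ioi.2 (by positivity)) (sub_eq_zero.1 heq)))
  have hc (p : ℕ) (hp : p ∈ P) : |(c p : ℝ)| ≤ Real.exp ℓ := by
    have hfsa := factorization_le_two_mul_log (Nat.mul_pos hs ha) (hP p hp)
    have hftb := factorization_le_two_mul_log (Nat.mul_pos ht hb) (hP p hp)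
    simp only [c, Int.cast_sub, Int.cast_natCast]
    exact abs_sub_le_of_nonneg_of_le (Nat.cast_nonneg _) (hfsa.trans hsa) (Nat.cast_nonneg _)
      (hftb.trans htb)
  rw [hform] at hlogne ⊢
  exact hℓ P hP hcard U V hU hV hPU hPV h H hh hH hPh ((log_le_log_of_dvd hs hUs).trans hsH)
    ((log_le_log_of_dvd ht hVt).trans htH) hhN hHℓ c hc hlogne

section Asymptotics

open Filter Asymptotics

theorem isLittleO_log_pow_mul_rpow (k : ℕ) {r : ℝ} (hr : r < 1) :
    (fun y : ℝ => Real.log y ^ k * y ^ r) =o[atTop] id := by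
  refine ((isLittleO_log_rpow_rpow_atTop k (sub_pos.2 hr)).mul_isBigO
    (isBigO_refl (fun y : ℝ => y ^ r) atTop)).congr' (Eventually.of_forall fun y => ?_) ?_
  · simp only [Real.rpow_natCast]
  · filter_upwards [eventually_gt_atTop 0] with y hy
    rw [← Real.rpow_add hy, sub_add_cancel, Real.rpow_one, id]

theorem eventually_one_add_mul_log_le (c : ℝ) : ∀ᶠ y : ℝ in atTop, 1 + c * Real.log y ≤ y := by
  have hlog : (fun y : ℝ => 1 + c * Real.log y) =o[atTop] id :=
    (isLittleO_const_id_atTop 1).add (Real.isLittleO_log_id_atTop.const_mul_left c)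
  filter_upwards [hlog.def one_pos, eventually_ge_atTop 0] with y hy hy0
  rw [one_mul, id, Real.norm_of_nonneg hy0] at hy
  exact (le_abs_self _).trans hy

theorem eventually_exists_scale {C lam r c : ℝ} (hC : 0 < C) (hlam : 0 ≤ lam) (hr : r < 1)
    (hc : 0 < c) {p : ℕ → Prop} (hp : ∀ᶠ ℓ in atTop, p ℓ) :
    ∀ᶠ y : ℝ in atTop, ∃ ℓ, p ℓ ∧ y ^ 4 ≤ Real.exp ℓ ∧ lam * Real.log y ≤ ℓ ∧
      C * ℓ ^ 3 * (2 * y ^ r * (lam * Real.log y)) < c * y := by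
  set κ := lam + 4
  set K := C * (2 * κ) ^ 3 * 2 * lam + 1
  have hκ : 0 < κ := by positivity
  have hK : 0 < K := by positivity
  have hceil : Tendsto (fun y => ⌈κ * Real.log y⌉₊) atTop atTop :=
    tendsto_nat_ceil_atTop.comp (Real.tendsto_log_atTop.const_mul_atTop hκ)
  filter_upwards [hceil.eventually hp, Real.tendsto_log_atTop.eventually_ge_atTop 1,
    eventually_gt_atTop 0, (isLittleO_log_pow_mul_rpow 4 hr).def (div_pos hc hK)]
    with y hpy hlog hy hsmall
  have hceil_ge : κ * Real.log y ≤ ⌈κ * Real.log y⌉₊ := Nat.le_ceil _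
  have hceil_le : (⌈κ * Real.log y⌉₊ : ℝ) ≤ 2 * κ * Real.log y := by
    have := Nat.ceil_lt_add_one (show 0 ≤ κ * Real.log y by positivity)
    nlinarith
  refine ⟨⌈κ * Real.log y⌉₊, hpy, ?_, by nlinarith, ?_⟩
  · rw [← Real.rpow_natCast, Real.rpow_def_of_pos hy, Real.exp_le_exp]
    push_cast
    nlinarith
  · rw [Real.norm_of_nonneg (by positivity), id, Real.norm_of_nonneg hy.le, div_mul_eq_mul_div,
      le_div_iff₀ hK] at hsmall
    calc C * (⌈κ * Real.log y⌉₊ : ℝ) ^ 3 * (2 * y ^ r * (lam * Real.log y))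
        ≤ C * (2 * κ * Real.log y) ^ 3 * (2 * y ^ r * (lam * Real.log y)) := by gcongr
      _ = Real.log y ^ 4 * y ^ r * (K - 1) := by simp only [K]; ring
      _ < Real.log y ^ 4 * y ^ r * K := by gcongr; exact sub_one_lt K
      _ ≤ c * y := hsmall

end Asymptotics

theorem abs_log_sub_log_le {a x z : ℝ} (ha : 0 < a) (hx : a ≤ x) (hz : a ≤ z) :
    |Real.log x - Real.log z| ≤ |x - z| / a := by
  wlog hxz : z ≤ x generalizing x z
  · rw [abs_sub_comm, abs_sub_comm x]
    exact this hz hx (le_of_not_ge hxz)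
  have hz0 := ha.trans_le hz
  have hx0 := ha.trans_le hx
  rw [abs_of_nonneg (sub_nonneg.2 (Real.log_le_log hz0 hxz)), abs_of_nonneg (sub_nonneg.2 hxz),
    ← Real.log_div hx0.ne' hz0.ne']
  calc Real.log (x / z) ≤ x / z - 1 := Real.log_le_sub_one_of_pos (by positivity)
    _ = (x - z) / z := by field_simp
    _ ≤ (x - z) / a := by gcongr

theorem abs_log_sub_log_lt_exp {a x z α : ℝ} (ha : 0 < a) (hx : a ≤ x) (hz : a ≤ z)
    (hclose : |x - z| < a ^ α) :
    |Real.log x - Real.log z| < Real.exp (-((1 - α) * Real.log a)) := by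
  calc |Real.log x - Real.log z| ≤ |x - z| / a := abs_log_sub_log_le ha hx hz
    _ < a ^ α / a := by gcongr
    _ = a ^ (α - 1) := by rw [Real.rpow_sub_one ha.ne']
    _ = Real.exp (-((1 - α) * Real.log a)) := by rw [Real.rpow_def_of_pos ha]; ring_nf

theorem le_of_abs_mul_sub_mul_lt {a b s t : ℕ} (hab : a ≤ b)
    (hclose : |(s : ℝ) * a - t * b| < a) : t ≤ s := by
  by_contra! hst
  have hmul : ((s + 1 : ℕ) : ℝ) * a ≤ t * b := mod_cast Nat.mul_le_mul hst hab
  push_cast at hmul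
  linarith [(abs_lt.1 hclose).1]

theorem log_mul_le_of_abs_mul_sub_mul_lt {a b s t : ℕ} (ha : 0 < a) (hb : 0 < b) (hs : 0 < s)
    (ht : 0 < t) (hclose : |(s : ℝ) * a - t * b| < a) :
    Real.log (t * b : ℕ) ≤ 1 + Real.log s + Real.log a := by
  have hs1 : (1 : ℝ) ≤ s := Nat.one_le_cast.2 hs
  have hle : (t : ℝ) * b ≤ 2 * (s * a) := by nlinarith [(abs_lt.1 hclose).1]
  calc Real.log (t * b : ℕ) ≤ Real.log (2 * (s * a)) := by
        push_cast
        exact Real.log_le_log (by positivity) hle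
    _ = Real.log 2 + (Real.log s + Real.log a) := by
        rw [Real.log_mul two_ne_zero (by positivity), Real.log_mul (by positivity) (by positivity)]
    _ ≤ 1 + Real.log s + Real.log a := by linarith [Real.log_two_lt_d9]

/-- Condition (ii) of Property D for a single integer `a`: at most `D` prime divisors, each of them
with logarithm at most `(log a) ^ ((1 - ε) / (2 D))`. -/
def HasFewSmallPrimeFactors (D : ℕ) (ε : ℝ) (a : ℕ) : Prop :=
  a.primeFactors.card ≤ D ∧
    ∀ p : ℕ, p.Prime → p ∣ a → Real.log p ≤ Real.log a ^ ((1 - ε) / (2 * (D : ℝ)))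

theorem exists_pow_le_two_mul_rpow_and_log_le {D : ℕ} (hD : 1 ≤ D) {r y : ℝ} (hr0 : 0 ≤ r)
    (hr1 : r ≤ 1) (hy : 1 ≤ y) :
    ∃ h : ℝ, 1 ≤ h ∧ h ^ (2 * D) ≤ 2 * y ^ r ∧ ∀ ε, 1 - ε ≤ r → ∀ a,
      HasFewSmallPrimeFactors D ε a → 1 ≤ Real.log a → Real.log a ≤ 2 * y →
      ∀ p ∈ a.primeFactors, Real.log p ≤ h := by
  have hD0 : (0 : ℝ) < 2 * D := by positivity
  have hr : 0 ≤ r / (2 * D) := by positivity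
  refine ⟨(2 * y) ^ (r / (2 * D)), Real.one_le_rpow (by linarith) hr, ?_,
    fun ε hεr a ha hloga hay p hp => ?_⟩
  · calc ((2 * y) ^ (r / (2 * D))) ^ (2 * D) = (2 * y) ^ r := by
          rw [← Real.rpow_natCast, ← Real.rpow_mul (by positivity)]
          push_cast
          rw [div_mul_cancel₀ _ hD0.ne']
      _ = 2 ^ r * y ^ r := Real.mul_rpow two_pos.le (by positivity)
      _ ≤ 2 * y ^ r := by
          gcongr
          simpa using Real.rpow_le_rpow_of_exponent_le one_le_two hr1
  · calc Real.log p ≤ Real.log a ^ ((1 - ε) / (2 * D)) :=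
          ha.2 p (Nat.prime_of_mem_primeFactors hp) (Nat.dvd_of_mem_primeFactors hp)
      _ ≤ Real.log a ^ (r / (2 * D)) := Real.rpow_le_rpow_of_exponent_le hloga (by gcongr)
      _ ≤ (2 * y) ^ (r / (2 * D)) := Real.rpow_le_rpow (by linarith) hay hr

theorem exists_exp_neg_le_abs_log_sub_log_of_hasFewSmallPrimeFactors {D : ℕ} (hD : 1 ≤ D)
    {ε r : ℝ} (hr0 : 0 ≤ r) (hr1 : r ≤ 1) (hεr : 1 - ε ≤ r) :
    ∃ C : ℝ, 0 < C ∧ ∀ᶠ ℓ : ℕ in Filter.atTop, ∀ a b s t : ℕ, 0 < s → 0 < t →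
      HasFewSmallPrimeFactors D ε a → HasFewSmallPrimeFactors D ε b → s * a ≠ t * b →
      ∀ y H : ℝ, 1 ≤ Real.log a → 1 ≤ Real.log b → 4 ≤ y → Real.log (s * a : ℕ) ≤ 2 * y →
      Real.log (t * b : ℕ) ≤ 2 * y → 1 ≤ H → H ≤ y → Real.log s ≤ H → Real.log t ≤ H →
      y ^ 4 ≤ Real.exp ℓ → H ≤ ℓ →
      Real.exp (-(C * ℓ ^ 3 * (2 * y ^ r * H))) ≤
        |Real.log (s * a : ℕ) - Real.log (t * b : ℕ)| := by
  obtain ⟨C, hC, hbound⟩ := exists_exp_neg_le_abs_log_sub_log (2 * D)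
  refine ⟨C, hC, ?_⟩
  filter_upwards [hbound] with ℓ hℓ a b s t hs ht ha hb hne y H hloga hlogb hy hsa htb hH hHy hsH
    htH hyℓ hHℓ
  have hpos {x : ℕ} (hx : 1 ≤ Real.log x) : 0 < x :=
    Nat.pos_of_ne_zero (by rintro rfl; norm_num at hx)
  have ha0 := hpos hloga
  have hb0 := hpos hlogb
  obtain ⟨h, hh, hhD, hle⟩ :=
    exists_pow_le_two_mul_rpow_and_log_le hD hr0 hr1 (by linarith : 1 ≤ y)
  have hlog_le (p : ℕ) (hp : p ∈ a.primeFactors ∪ b.primeFactors) : Real.log p ≤ h :=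
    (Finset.mem_union.1 hp).elim
      (hle ε hεr a ha hloga
        ((log_le_log_of_dvd (Nat.mul_pos hs ha0) (dvd_mul_left a s)).trans hsa) p)
      (hle ε hεr b hb hlogb
        ((log_le_log_of_dvd (Nat.mul_pos ht hb0) (dvd_mul_left b t)).trans htb) p)
  have hyr : y ^ r ≤ y := by
    simpa using Real.rpow_le_rpow_of_exponent_le (by linarith : 1 ≤ y) hr1
  have hsq : 4 ≤ y ^ 2 := by nlinarith
  have h4y : 4 * y ≤ y ^ 4 := by nlinarith
  have hsize : h ^ (2 * D) * H ≤ Real.exp ℓ := by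
    calc h ^ (2 * D) * H ≤ 2 * y * y := by gcongr; exact hhD.trans (by gcongr)
      _ ≤ y ^ 4 := by nlinarith
      _ ≤ Real.exp ℓ := hyℓ
  refine le_trans ?_ (hℓ _ (fun p hp => (Finset.mem_union.1 hp).elim
      Nat.prime_of_mem_primeFactors Nat.prime_of_mem_primeFactors)
    ((Finset.card_union_le _ _).trans (by linarith [ha.1, hb.1])) s t a b hs ht ha0 hb0
    Finset.subset_union_left Finset.subset_union_right hne h H hh hH hlog_le
    hsH htH hsize hHℓ (by linarith) (by linarith))
  gcongr

theorem eventually_log_rpow_lt_of_abs_mul_sub_mul_lt {D : ℕ} (hD : 1 ≤ D) {ε lam α : ℝ}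
    (hε : 0 < ε) (hlam : 1 ≤ lam) (hα : α < 1) :
    ∀ᶠ a : ℕ in Filter.atTop, ∀ b s t : ℕ, a < b → 0 < s → 0 < t →
      HasFewSmallPrimeFactors D ε a → HasFewSmallPrimeFactors D ε b → s * a ≠ t * b →
      |(s : ℝ) * a - t * b| < (a : ℝ) ^ α → Real.log a ^ lam < s := by
  obtain ⟨r, hr0, hr1, hεr⟩ : ∃ r : ℝ, 0 ≤ r ∧ r < 1 ∧ 1 - ε ≤ r :=
    ⟨max 0 (1 - ε), le_max_left _ _, max_lt one_pos (by linarith), le_max_right _ _⟩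
  obtain ⟨C, hC, hbound⟩ :=
    exists_exp_neg_le_abs_log_sub_log_of_hasFewSmallPrimeFactors hD hr0 hr1.le hεr
  have hlog : Filter.Tendsto (fun a : ℕ => Real.log a) Filter.atTop Filter.atTop :=
    Real.tendsto_log_atTop.comp tendsto_natCast_atTop_atTop
  filter_upwards [hlog.eventually (eventually_exists_scale hC (zero_le_one.trans hlam) hr1
      (sub_pos.2 hα) hbound), hlog.eventually (eventually_one_add_mul_log_le lam),
    hlog.eventually (Real.tendsto_log_atTop.eventually_ge_atTop 1), hlog.eventually_ge_atTop 4,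
    Filter.eventually_gt_atTop 0] with a hscale hlam_log hloglog hy ha b s t hab hs ht hDa hDb hne
    hclose
  obtain ⟨ℓ, hℓ, hyℓ, hHℓ, hlt⟩ := hscale
  set y := Real.log a
  have ha0 : (0 : ℝ) < a := Nat.cast_pos.2 ha
  have hab' : (a : ℝ) ≤ b := Nat.cast_le.2 hab.le
  have hs1 : (1 : ℝ) ≤ s := Nat.one_le_cast.2 hs
  have ht1 : (1 : ℝ) ≤ t := Nat.one_le_cast.2 ht
  have hclose' : |(s : ℝ) * a - t * b| < a := hclose.trans_le (by
    simpa using Real.rpow_le_rpow_of_exponent_le (Nat.one_le_cast.2 ha) hα.le)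
  by_contra! hsy
  have hlogs : Real.log s ≤ lam * Real.log y := by
    rw [← Real.log_rpow (by linarith)]
    exact Real.log_le_log (by linarith) hsy
  have hlogt : Real.log t ≤ lam * Real.log y := (Real.log_le_log (by linarith)
    (Nat.cast_le.2 (le_of_abs_mul_sub_mul_lt hab.le hclose'))).trans hlogs
  have hlogsa : Real.log (s * a : ℕ) ≤ 2 * y := by
    rw [Nat.cast_mul, Real.log_mul (by linarith) ha0.ne']
    linarith
  have hlogtb : Real.log (t * b : ℕ) ≤ 2 * y := by
    linarith [log_mul_le_of_abs_mul_sub_mul_lt ha (ha.trans hab) hs ht hclose']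
  have hlower := hℓ a b s t hs ht hDa hDb hne y (lam * Real.log y) (by linarith)
    (by linarith [Real.log_le_log ha0 hab']) hy hlogsa hlogtb (by nlinarith) (by linarith) hlogs
    hlogt hyℓ hHℓ
  have hupper := abs_log_sub_log_lt_exp ha0 (le_mul_of_one_le_left ha0.le hs1)
    (hab'.trans (le_mul_of_one_le_left (ha0.le.trans hab') ht1)) hclose
  push_cast at hlower
  linarith [Real.exp_lt_exp.1 (hlower.trans_lt hupper)]

theorem lt_log_rpow_of_mul_rpow_lt_log {B C₀ x y : ℝ} (hB : 0 < B) (hC₀ : 0 < C₀) (hx : 0 ≤ x)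
    (hy : C₀⁻¹ ≤ y) (hxy : C₀ * x ^ (1 / B) < y) : x < y ^ (2 * B) := by
  have hy0 : 0 < y := (inv_pos.2 hC₀).trans_le hy
  have hroot : x ^ (1 / B) < y ^ 2 := by
    calc x ^ (1 / B) = C₀⁻¹ * (C₀ * x ^ (1 / B)) := by field_simp
      _ < y * y := mul_lt_mul' hy hxy (by positivity) hy0
      _ = y ^ 2 := (sq y).symm
  calc x = (x ^ (1 / B)) ^ B := by rw [← Real.rpow_mul hx, one_div_mul_cancel hB.ne', Real.rpow_one]
    _ < (y ^ 2) ^ B := Real.rpow_lt_rpow (by positivity) hroot hB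
    _ = y ^ (2 * B) := by rw [← Real.rpow_natCast, ← Real.rpow_mul hy0.le, Nat.cast_two]

theorem tendsto_log_atTop_of_mul_rpow_lt_log {u : ℕ → ℕ} {B C₀ : ℝ} (hB : 0 < B) (hC₀ : 0 < C₀)
    (hgrowth : ∀ᶠ n : ℕ in Filter.atTop, C₀ * (n : ℝ) ^ (1 / B) < Real.log (u n)) :
    Filter.Tendsto (fun n => Real.log (u n)) Filter.atTop Filter.atTop :=
  Filter.tendsto_atTop_mono' _ (hgrowth.mono fun _ h => h.le)
    (((tendsto_rpow_atTop (one_div_pos.2 hB)).comp tendsto_natCast_atTop_atTop).const_mul_atTop hC₀)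

theorem eventually_pow_le_log_rpow {u : ℕ → ℕ} {B C₀ : ℝ} (hB : 0 < B) (hC₀ : 0 < C₀)
    (hgrowth : ∀ᶠ n : ℕ in Filter.atTop, C₀ * (n : ℝ) ^ (1 / B) < Real.log (u n)) (A : ℕ) :
    ∀ᶠ n : ℕ in Filter.atTop, (n : ℝ) ^ A ≤ Real.log (u n) ^ (2 * B * A) := by
  filter_upwards [hgrowth,
    (tendsto_log_atTop_of_mul_rpow_lt_log hB hC₀ hgrowth).eventually_ge_atTop C₀⁻¹] with n hn hinv
  have hy : 0 ≤ Real.log (u n) := (inv_pos.2 hC₀).le.trans hinv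
  rw [Real.rpow_mul hy, Real.rpow_natCast]
  gcongr
  exact (lt_log_rpow_of_mul_rpow_lt_log hB hC₀ (Nat.cast_nonneg n) hinv hn).le

theorem tendsto_atTop_of_tendsto_log {u : ℕ → ℕ}
    (hu : Filter.Tendsto (fun n => Real.log (u n)) Filter.atTop Filter.atTop) :
    Filter.Tendsto u Filter.atTop Filter.atTop :=
  tendsto_natCast_atTop_iff.1
    (Filter.tendsto_atTop_mono (fun _ => Real.log_le_self (Nat.cast_nonneg _)) hu)

theorem statement12_general
    (q : ℕ → ℕ) (hqmono : ∀ n, 1 ≤ n → q n < q (n + 1))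
    (hgrowth : ∃ B : ℝ, 1 ≤ B ∧ ∃ C₀ : ℝ, 0 < C₀ ∧
      ∀ n : ℕ, 2 ≤ n → C₀ * (n : ℝ) ^ ((1 : ℝ) / B) < Real.log (q n))
    (hdiv : ∃ n₀ D : ℕ, 1 ≤ n₀ ∧ 1 ≤ D ∧ ∃ ε : ℝ, 0 < ε ∧ ∀ n, n₀ ≤ n →
      HasFewSmallPrimeFactors D ε (q n))
    (α : ℝ) (hα1 : α < 1) (A : ℕ) :
    ∃ m₀ : ℕ, 1 ≤ m₀ ∧ ∀ m n : ℕ, m₀ ≤ m → m < n →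
      ∀ s t : ℕ, 1 ≤ s → 1 ≤ t →
        1 ≤ |(s : ℝ) * (q m : ℝ) - (t : ℝ) * (q n : ℝ)| →
        |(s : ℝ) * (q m : ℝ) - (t : ℝ) * (q n : ℝ)| < (q m : ℝ) ^ α →
        m ^ A < s := by
  obtain ⟨B, hB, C₀, hC₀, hgrow⟩ := hgrowth
  obtain ⟨n₀, D, hn₀, hD, ε, hε, hsmall⟩ := hdiv
  have hB0 : 0 < B := one_pos.trans_le hB
  have hgrow' := (Filter.eventually_ge_atTop 2).mono hgrow
  have hlam : 1 ≤ 2 * B * (A + 1 : ℕ) := by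
    push_cast
    nlinarith [Nat.cast_nonneg (α := ℝ) A]
  have hsep := (tendsto_atTop_of_tendsto_log
    (tendsto_log_atTop_of_mul_rpow_lt_log hB0 hC₀ hgrow')).eventually
      (eventually_log_rpow_lt_of_abs_mul_sub_mul_lt hD hε hlam hα1)
  obtain ⟨m₁, hm₁⟩ := Filter.eventually_atTop.1
    (hsep.and (eventually_pow_le_log_rpow hB0 hC₀ hgrow' (A + 1)))
  refine ⟨max m₁ n₀, hn₀.trans (le_max_right _ _), fun m n hm hmn s t hs ht hone hclose => ?_⟩
  obtain ⟨hm₁m, hn₀m⟩ := max_le_iff.1 hm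
  obtain ⟨hsepm, hpow⟩ := hm₁ m hm₁m
  have hq : q m < q n := Nat.rel_of_forall_rel_succ_of_le_of_lt (· < ·) hqmono (hn₀.trans hn₀m) hmn
  have hne : s * q m ≠ t * q n := fun heq => by
    rw [← Nat.cast_mul, ← Nat.cast_mul, heq, sub_self, abs_zero] at hone
    exact not_lt_of_ge hone one_pos
  have hs_gt := hpow.trans_lt (hsepm (q n) s t hq hs ht (hsmall m hn₀m)
    (hsmall n (hn₀m.trans hmn.le)) hne hclose)
  exact (Nat.pow_le_pow_right (hn₀.trans hn₀m) A.le_succ).trans_lt (mod_cast hs_gt)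

theorem statement12
    (q : ℕ → ℕ) (hqpos : ∀ n, 1 ≤ n → 0 < q n)
    (hqmono : ∀ n, 1 ≤ n → q n < q (n + 1))
    (hgrowth : ∃ B : ℝ, 1 ≤ B ∧ ∃ C₀ : ℝ, 0 < C₀ ∧
      ∀ n : ℕ, 2 ≤ n → C₀ * (n : ℝ) ^ ((1 : ℝ) / B) < Real.log (q n))
    (hdiv : ∃ n₀ D : ℕ, 1 ≤ n₀ ∧ 1 ≤ D ∧ ∃ ε : ℝ, 0 < ε ∧ ∀ n, n₀ ≤ n →
      (q n).primeFactors.card ≤ D ∧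
      ∀ p : ℕ, p.Prime → p ∣ q n →
        Real.log p ≤ Real.log (q n) ^ ((1 - ε) / (2 * (D : ℝ))))
    (α : ℝ) (hα : 0 < α) (hα1 : α < 1) :
    ∃ m₀ : ℕ, 1 ≤ m₀ ∧ ∀ m n : ℕ, m₀ ≤ m → m < n →
      ∀ s t : ℕ, 1 ≤ s → 1 ≤ t →
        1 ≤ |(s : ℝ) * (q m : ℝ) - (t : ℝ) * (q n : ℝ)| →
        |(s : ℝ) * (q m : ℝ) - (t : ℝ) * (q n : ℝ)| < (q m : ℝ) ^ α →
        m ^ 12 < s :=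
  statement12_general q hqmono hgrowth hdiv α hα1 12
end

section
/- Let S = {p_1, …, p_k} be a set of k distinct primes and let (q_n)_{n≥1} be an increasing sequence of positive integers each of which lies in A_S. Then there exists a constant C, depending only on k, such that for every integer n ≥ 2: ∑_{m=1}^{n−1} gcd(q_m, q_n)/q_n ≤ C. -/
/-!
Every `a ≤ N` satisfies `gcd(a, N) / N ≤ gcd(a, N) / √(a N)`, so it suffices to bound the sum of
`gcd(a, N) / √a` over *all* integers `a` with prime factors in `S`. This summand is multiplicative
in `a`, so the sum is a product of local factors. If `p ^ v` exactly divides `N`, the factor at `p`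
is `√(p ^ v) * ∑ j, (1 / √p) ^ |j - v|`, and the series is at most
`(1 + 1 / √2) / (1 - 1 / √2) = 3 + 2 * √2`. The numbers `√(p ^ v)` multiply to at most `√N`.
-/

open Real

section GeometricSeries

variable {x : ℝ}

lemma hasSum_pow_natAbs (hx₀ : 0 ≤ x) (hx₁ : x < 1) :
    HasSum (fun i : ℤ ↦ x ^ i.natAbs) ((1 + x) / (1 - x)) := by
  have hgeom : HasSum (fun n : ℕ ↦ x ^ n) (1 - x)⁻¹ := hasSum_geometric_of_lt_one hx₀ hx₁
  have hneg : HasSum (fun n : ℕ ↦ x ^ (-(n + 1 : ℤ)).natAbs) (x * (1 - x)⁻¹) := by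
    refine (hgeom.mul_left x).congr_fun fun n ↦ ?_
    rw [show (-(n + 1 : ℤ)).natAbs = n + 1 by omega, pow_succ']
  convert HasSum.of_nat_of_neg_add_one (f := fun i : ℤ ↦ x ^ i.natAbs) hgeom hneg using 1
  ring

lemma summable_pow_natAbs_sub (hx₀ : 0 ≤ x) (hx₁ : x < 1) (v : ℤ) :
    Summable fun j : ℕ ↦ x ^ (j - v).natAbs :=
  (hasSum_pow_natAbs hx₀ hx₁).summable.comp_injective
    ((sub_left_injective (b := v)).comp Nat.cast_injective)

lemma tsum_pow_natAbs_sub_le (hx₀ : 0 ≤ x) (hx₁ : x < 1) (v : ℤ) :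
    ∑' j : ℕ, x ^ (j - v).natAbs ≤ (1 + x) / (1 - x) := by
  have hsum := hasSum_pow_natAbs hx₀ hx₁
  rw [← hsum.tsum_eq]
  exact tsum_comp_le_tsum_of_inj hsum.summable (fun _ ↦ pow_nonneg hx₀ _)
    ((sub_left_injective (b := v)).comp Nat.cast_injective)

end GeometricSeries

lemma inv_sqrt_lt_one {t : ℝ} (ht : 1 < t) : (√t)⁻¹ < 1 :=
  inv_lt_one_of_one_lt₀ (lt_sqrt_of_sq_lt (by rwa [one_pow]))

lemma one_add_inv_sqrt_div_one_sub_inv_sqrt_le {t : ℝ} (ht : 2 ≤ t) :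
    (1 + (√t)⁻¹) / (1 - (√t)⁻¹) ≤ 3 + 2 * √2 := by
  have hsqrt : √2 ≤ √t := sqrt_le_sqrt ht
  have hsq : √2 * √2 = 2 := mul_self_sqrt zero_le_two
  have hinv : (√t)⁻¹ ≤ √2 / 2 := by
    rw [sqrt_div_self']
    simpa using inv_anti₀ (by positivity) hsqrt
  rw [div_le_iff₀ (sub_pos.2 (inv_sqrt_lt_one (one_lt_two.trans_le ht)))]
  nlinarith [sqrt_nonneg 2]

lemma gcd_prime_pow_left {p N : ℕ} (hp : p.Prime) (hN : N ≠ 0) (j : ℕ) :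
    (p ^ j).gcd N = p ^ min j (N.factorization p) := by
  have hcop : (p ^ j).Coprime (N / p ^ N.factorization p) :=
    (Nat.coprime_ordCompl hp hN).pow_left j
  nth_rw 1 [← Nat.ordProj_mul_ordCompl_eq_self N p]
  rw [hcop.symm.gcd_mul_right_cancel_right]
  rcases le_total j (N.factorization p) with hle | hle
  · rw [min_eq_left hle, Nat.gcd_eq_left (pow_dvd_pow p hle)]
  · rw [min_eq_right hle, Nat.gcd_eq_right (pow_dvd_pow p hle)]

lemma prod_primes_pow_factorization_dvd {T : Finset ℕ} (hT : ∀ p ∈ T, p.Prime) (N : ℕ) :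
    ∏ p ∈ T, p ^ N.factorization p ∣ N := by
  refine Finset.prod_dvd_of_isRelPrime (fun p hp r hr hpr ↦ ?_) fun p _ ↦ Nat.ordProj_dvd N p
  exact Nat.coprime_iff_isRelPrime.1
    (((Nat.coprime_primes (hT p hp) (hT r hr)).2 hpr).pow _ _)

/-- The function `a ↦ gcd(a, N) / √a`, i.e. the summand `gcd(a, N) / √(a N)` of a GCD sum
normalised to be multiplicative in `a`. -/
noncomputable def gcdDivSqrt (N a : ℕ) : ℝ := a.gcd N / √a

namespace gcdDivSqrt

variable {N : ℕ}

lemma nonneg (N a : ℕ) : 0 ≤ gcdDivSqrt N a := by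
  unfold gcdDivSqrt; positivity

lemma map_one (N : ℕ) : gcdDivSqrt N 1 = 1 := by
  simp [gcdDivSqrt]

lemma map_mul_of_coprime (N : ℕ) {a b : ℕ} (hab : a.Coprime b) :
    gcdDivSqrt N (a * b) = gcdDivSqrt N a * gcdDivSqrt N b := by
  simp only [gcdDivSqrt, Nat.gcd_comm _ N, hab.gcd_mul, Nat.cast_mul,
    sqrt_mul (Nat.cast_nonneg a), mul_div_mul_comm]

lemma apply_prime_pow {p : ℕ} (hp : p.Prime) (hN : N ≠ 0) (j : ℕ) :
    gcdDivSqrt N (p ^ j) =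
      √(p ^ N.factorization p : ℕ) * (√p)⁻¹ ^ (j - N.factorization p : ℤ).natAbs := by
  set v := N.factorization p
  have hexp : 2 * min j v + (j - v : ℤ).natAbs = v + j := by omega
  have hsqrt : √(p : ℝ) ≠ 0 := (sqrt_pos.2 (Nat.cast_pos.2 hp.pos)).ne'
  have hsq : √(p : ℝ) ^ 2 = p := sq_sqrt (Nat.cast_nonneg p)
  have hpow (i : ℕ) : √(p ^ i : ℕ) = √p ^ i := by
    rw [← sqrt_sq (pow_nonneg (sqrt_nonneg (p : ℝ)) i), pow_right_comm, hsq, Nat.cast_pow]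
  rw [gcdDivSqrt, gcd_prime_pow_left hp hN, hpow, hpow, inv_pow, ← div_eq_mul_inv,
    div_eq_div_iff (pow_ne_zero _ hsqrt) (pow_ne_zero _ hsqrt), ← pow_add, ← hexp, pow_add, pow_mul,
    hsq, Nat.cast_pow]

lemma summable_prime_pow {p : ℕ} (hp : p.Prime) (hN : N ≠ 0) :
    Summable fun j : ℕ ↦ gcdDivSqrt N (p ^ j) := by
  simp only [apply_prime_pow hp hN]
  exact (summable_pow_natAbs_sub (by positivity)
    (inv_sqrt_lt_one (by exact_mod_cast hp.one_lt)) _).mul_left _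

lemma tsum_prime_pow_le {p : ℕ} (hp : p.Prime) (hN : N ≠ 0) :
    ∑' j : ℕ, gcdDivSqrt N (p ^ j) ≤ √(p ^ N.factorization p : ℕ) * (3 + 2 * √2) := by
  have htwo : (2 : ℝ) ≤ p := by exact_mod_cast hp.two_le
  simp only [apply_prime_pow hp hN, tsum_mul_left]
  gcongr
  calc ∑' j : ℕ, (√(p : ℝ))⁻¹ ^ (j - N.factorization p : ℤ).natAbs
      ≤ (1 + (√(p : ℝ))⁻¹) / (1 - (√(p : ℝ))⁻¹) :=
        tsum_pow_natAbs_sub_le (by positivity) (inv_sqrt_lt_one (one_lt_two.trans_le htwo)) _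
    _ ≤ 3 + 2 * √2 := one_add_inv_sqrt_div_one_sub_inv_sqrt_le htwo

lemma hasSum_factoredNumbers (hN : N ≠ 0) (S : Finset ℕ) :
    HasSum (fun a : Nat.factoredNumbers S ↦ gcdDivSqrt N a)
      (∏ p ∈ S with p.Prime, ∑' j : ℕ, gcdDivSqrt N (p ^ j)) :=
  (EulerProduct.summable_and_hasSum_factoredNumbers_prod_filter_prime_tsum (map_one N)
    (map_mul_of_coprime N) (fun hp ↦ (summable_prime_pow hp hN).norm) S).2

lemma tsum_factoredNumbers_le (hN : N ≠ 0) (S : Finset ℕ) :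
    ∑' a : Nat.factoredNumbers S, gcdDivSqrt N a ≤ √N * (3 + 2 * √2) ^ S.card := by
  have hprime : ∀ p ∈ S.filter Nat.Prime, p.Prime := fun p hp ↦ (Finset.mem_filter.1 hp).2
  have hone : 1 ≤ 3 + 2 * √2 := by linarith [sqrt_nonneg 2]
  calc ∑' a : Nat.factoredNumbers S, gcdDivSqrt N a
      = ∏ p ∈ S with p.Prime, ∑' j : ℕ, gcdDivSqrt N (p ^ j) :=
        (hasSum_factoredNumbers hN S).tsum_eq
    _ ≤ ∏ p ∈ S with p.Prime, √(p ^ N.factorization p : ℕ) * (3 + 2 * √2) :=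
        Finset.prod_le_prod (fun p _ ↦ tsum_nonneg fun _ ↦ nonneg N _)
          fun p hp ↦ tsum_prime_pow_le (hprime p hp) hN
    _ = √(∏ p ∈ S with p.Prime, p ^ N.factorization p : ℕ) *
          (3 + 2 * √2) ^ (S.filter Nat.Prime).card := by
        rw [Finset.prod_mul_distrib, Finset.prod_const, Nat.cast_prod,
          sqrt_prod _ fun _ _ ↦ Nat.cast_nonneg _]
    _ ≤ √N * (3 + 2 * √2) ^ S.card := by
        gcongr
        · exact Nat.le_of_dvd (Nat.pos_of_ne_zero hN) (prod_primes_pow_factorization_dvd hprime N)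
        · exact Finset.filter_subset _ _

lemma sum_le_tsum_factoredNumbers (hN : N ≠ 0) (S : Finset ℕ) {ι : Type*} {I : Finset ι}
    {q : ι → ℕ} (hinj : Set.InjOn q I) (hq : ∀ i ∈ I, q i ∈ Nat.factoredNumbers S) :
    ∑ i ∈ I, gcdDivSqrt N (q i) ≤ ∑' a : Nat.factoredNumbers S, gcdDivSqrt N a := by
  let φ : I → Nat.factoredNumbers S := fun i ↦ ⟨q i, hq i i.2⟩
  have hφ : Function.Injective φ := fun i j hij ↦
    Subtype.ext (hinj i.2 j.2 (congrArg Subtype.val hij))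
  rw [← Finset.sum_coe_sort, ← tsum_fintype (L := .unconditional I)]
  exact tsum_comp_le_tsum_of_inj (hasSum_factoredNumbers hN S).summable (fun a ↦ nonneg N a) hφ

lemma gcd_div_le_div_sqrt {a : ℕ} (ha : a ≠ 0) (haN : a ≤ N) :
    (a.gcd N : ℝ) / N ≤ gcdDivSqrt N a / √N := by
  have ha_pos : (0 : ℝ) < √a := sqrt_pos.2 (Nat.cast_pos.2 (Nat.pos_of_ne_zero ha))
  have hsqrt : √(a : ℝ) * √N ≤ N := by
    calc √(a : ℝ) * √N ≤ √N * √N := by gcongr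
      _ = N := mul_self_sqrt (Nat.cast_nonneg N)
  rw [gcdDivSqrt, div_div]
  have hN_pos : (0 : ℝ) < √N := ha_pos.trans_le (by gcongr)
  gcongr

end gcdDivSqrt

theorem statement13_general (S : Finset ℕ) {ι : Type*} {I : Finset ι} {q : ι → ℕ} {N : ℕ}
    (hinj : Set.InjOn q I) (hq : ∀ i ∈ I, q i ∈ Nat.factoredNumbers S) (hle : ∀ i ∈ I, q i ≤ N) :
    ∑ i ∈ I, ((q i).gcd N : ℝ) / N ≤ (3 + 2 * √2) ^ S.card := by
  rcases eq_or_ne N 0 with rfl | hN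
  · simp only [Nat.cast_zero, div_zero, Finset.sum_const_zero]
    positivity
  calc ∑ i ∈ I, ((q i).gcd N : ℝ) / N
      ≤ ∑ i ∈ I, gcdDivSqrt N (q i) / √N := Finset.sum_le_sum fun i hi ↦
        gcdDivSqrt.gcd_div_le_div_sqrt (Nat.ne_zero_of_mem_factoredNumbers (hq i hi)) (hle i hi)
    _ = (∑ i ∈ I, gcdDivSqrt N (q i)) / √N := (Finset.sum_div _ _ _).symm
    _ ≤ (3 + 2 * √2) ^ S.card := by
        rw [div_le_iff₀' (sqrt_pos.2 (Nat.cast_pos.2 (Nat.pos_of_ne_zero hN)))]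
        exact (gcdDivSqrt.sum_le_tsum_factoredNumbers hN S hinj hq).trans
          (gcdDivSqrt.tsum_factoredNumbers_le hN S)

theorem statement13 (k : ℕ) (hk : 1 ≤ k) :
    ∃ C : ℝ, ∀ (S : Finset ℕ), (∀ p ∈ S, p.Prime) → S.card = k →
      ∀ q : ℕ → ℕ, (∀ n, 1 ≤ n → 0 < q n) → (∀ n, 1 ≤ n → q n < q (n + 1)) →
        (∀ n, 1 ≤ n → ∀ p : ℕ, p.Prime → p ∣ q n → p ∈ S) →
        ∀ n : ℕ, 2 ≤ n →
          ∑ m ∈ Finset.Ico 1 n, (Nat.gcd (q m) (q n) : ℝ) / (q n : ℝ) ≤ C := by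
  refine ⟨(3 + 2 * √2) ^ k, ?_⟩
  rintro S - rfl q - hlt hfac n -
  have hmono : StrictMonoOn q (Set.Ici 1) :=
    strictMonoOn_of_lt_add_one Set.ordConnected_Ici fun m _ hm _ ↦ hlt m hm
  have hone {m : ℕ} (hm : m ∈ Finset.Ico 1 n) : 1 ≤ m := (Finset.mem_Ico.1 hm).1
  have hlt_n {m : ℕ} (hm : m ∈ Finset.Ico 1 n) : m < n := (Finset.mem_Ico.1 hm).2
  exact statement13_general S (hmono.injOn.mono fun m hm ↦ hone hm)
    (fun m hm ↦ Nat.mem_factoredNumbers'.2 (hfac m (hone hm)))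
    fun m hm ↦ (hmono (hone hm) ((hone hm).trans (hlt_n hm).le) (hlt_n hm)).le
end

section
/- For every s ∈ ℝ there exists a constant C_s > 0 such that for every r ∈ ℕ and all pairwise distinct integers n_1, …, n_r with n_i ≥ 2 for each i: ∑_{t_1=1}^∞ ⋯ ∑_{t_r=1}^∞ (t_1 log₂ n_1 + ⋯ + t_r log₂ n_r)^s / (n_1^{t_1} ⋯ n_r^{t_r}) < C_s. -/
/-!
With `P = ∏ nᵢ ^ (tᵢ + 1)` the summand is `(log P) ^ s / P`, and since powers of the logarithm grow
more slowly than `P ^ (1/2)` it is at most `K * P ^ (-1/2)`. The sum over `t` of `P ^ (-1/2)` is a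
product of geometric series, with value `∏ (nᵢ ^ (1/2) - 1)⁻¹`. As the `nᵢ` are distinct, only
boundedly many of these factors exceed `1`, so the product is bounded independently of `r`.
The integers enter only through the fact that finitely many of them lie below any given bound.
-/

open Filter Topology

theorem exists_logb_self_rpow_le_mul_rpow {a : ℝ} (ha : 1 < a) (s : ℝ) {ε : ℝ} (hε : 0 < ε) :
    ∃ K : ℝ, 0 < K ∧ ∀ x : ℝ, a ≤ x → Real.logb a x ^ s ≤ K * x ^ ε := by
  have hloga : 0 < Real.log a := Real.log_pos ha
  obtain ⟨m, hsm, hm⟩ : ∃ m : ℝ, s ≤ m ∧ 0 < m := ⟨max s 1, le_max_left _ _, by positivity⟩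
  refine ⟨(ε / m * Real.log a)⁻¹ ^ m, by positivity, fun x hax => ?_⟩
  have hx : 0 ≤ x := by linarith
  have hone : 1 ≤ Real.logb a x := by
    rwa [Real.le_logb_iff_rpow_le ha (by linarith), Real.rpow_one]
  have hlogb : Real.logb a x ≤ (ε / m * Real.log a)⁻¹ * x ^ (ε / m) := by
    rw [Real.logb, mul_inv, mul_right_comm, inv_mul_eq_div, ← div_eq_mul_inv]
    exact div_le_div_of_nonneg_right (Real.log_le_rpow_div hx (by positivity)) hloga.le
  calc Real.logb a x ^ s
      ≤ Real.logb a x ^ m := Real.rpow_le_rpow_of_exponent_le hone hsm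
    _ ≤ ((ε / m * Real.log a)⁻¹ * x ^ (ε / m)) ^ m := by gcongr
    _ = (ε / m * Real.log a)⁻¹ ^ m * x ^ ε := by
        rw [Real.mul_rpow (by positivity) (by positivity), ← Real.rpow_mul hx,
          div_mul_cancel₀ _ hm.ne']

theorem exists_logb_rpow_le_mul_rpow {a b : ℝ} (ha : 1 < a) (hb : 1 < b) (s : ℝ) {ε : ℝ}
    (hε : 0 < ε) : ∃ K : ℝ, 0 < K ∧ ∀ x : ℝ, a ≤ x → Real.logb b x ^ s ≤ K * x ^ ε := by
  obtain ⟨K, hK, hbound⟩ := exists_logb_self_rpow_le_mul_rpow ha s hε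
  have hba : 0 < Real.logb b a := Real.logb_pos hb ha
  refine ⟨Real.logb b a ^ s * K, by positivity, fun x hax => ?_⟩
  have hax' : 0 ≤ Real.logb a x := Real.logb_nonneg ha (by linarith)
  calc Real.logb b x ^ s
      = Real.logb b a ^ s * Real.logb a x ^ s := by
        rw [← Real.mul_rpow hba.le hax',
          Real.mul_logb (by linarith) (by linarith) (by linarith)]
    _ ≤ Real.logb b a ^ s * (K * x ^ ε) := by gcongr; exact hbound x hax
    _ = Real.logb b a ^ s * K * x ^ ε := (mul_assoc _ _ _).symm

theorem hasSum_inv_pow_succ {𝕜 : Type*} [NormedDivisionRing 𝕜] {x : 𝕜} (hx : 1 < ‖x‖) :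
    HasSum (fun k : ℕ => x⁻¹ ^ (k + 1)) (x - 1)⁻¹ := by
  have hx0 : x ≠ 0 := norm_pos_iff.1 (one_pos.trans hx)
  have hgeom := (hasSum_geometric_of_norm_lt_one (ξ := x⁻¹)
    (by rw [norm_inv]; exact inv_lt_one_of_one_lt₀ hx)).mul_right x⁻¹
  have hvalue : (1 - x⁻¹)⁻¹ * x⁻¹ = (x - 1)⁻¹ := by
    rw [← mul_inv_rev, mul_sub, mul_one, mul_inv_cancel₀ hx0]
  simpa only [← pow_succ, hvalue] using hgeom

theorem summable_norm_and_hasSum_prod_pi {R : Type*} [NormedCommRing R] :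
    ∀ {ι : Type*} [Fintype ι] {α : ι → Type*} {f : ∀ i, α i → R} {a : ι → R},
      (∀ i, HasSum (f i) (a i)) → (∀ i, Summable fun k => ‖f i k‖) →
      (Summable fun t : ∀ i, α i => ‖∏ i, f i (t i)‖) ∧
        HasSum (fun t : ∀ i, α i => ∏ i, f i (t i)) (∏ i, a i) := by
  apply Fintype.induction_empty_option
  case of_equiv =>
    intro ι κ _ e ih α f a hf hf'
    let _ := Fintype.ofEquiv κ e.symm
    have hreindex (t : ∀ i, α (e i)) :
        ∏ j, f j (Equiv.piCongrLeft α e t j) = ∏ i, f (e i) (t i) := by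
      simp only [← e.prod_comp, Equiv.piCongrLeft_apply_apply]
    rw [← (Equiv.piCongrLeft α e).summable_iff, ← (Equiv.piCongrLeft α e).hasSum_iff,
      ← e.prod_comp]
    simpa only [Function.comp_def, hreindex] using ih (fun i => hf (e i)) fun i => hf' (e i)
  case h_empty =>
    intro α _ _ _ _
    simp only [Fintype.prod_empty]
    exact ⟨.of_finite, by simp [hasSum_unique]⟩
  case h_option =>
    intro ι _ ih α f a hf hf'
    let P (t : ∀ i, α (some i)) : R := ∏ i, f (some i) (t i)
    obtain ⟨hnorm, hsum⟩ : (Summable fun t => ‖P t‖) ∧ HasSum P (∏ i, a (some i)) :=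
      ih (fun i => hf (some i)) fun i => hf' (some i)
    have hsplit (p : α none × ∀ i, α (some i)) :
        ∏ j, f j (Equiv.piOptionEquivProd.symm p j) = f none p.1 * P p.2 :=
      Fintype.prod_option _
    rw [← Equiv.piOptionEquivProd.symm.summable_iff, ← Equiv.piOptionEquivProd.symm.hasSum_iff,
      Fintype.prod_option]
    simp only [Function.comp_def, hsplit]
    exact ⟨(hf' none).mul_norm hnorm, (hf none).mul hsum
      (summable_mul_of_summable_norm' (hf' none) (hf none).summable hnorm hsum.summable)⟩

section ProdPow

variable {ι : Type*} [Fintype ι] {x : ι → ℝ}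

theorem hasSum_prod_pow_succ_rpow_neg {ε : ℝ} (hε : 0 < ε) (hx : ∀ i, 1 < x i) :
    HasSum (fun t : ι → ℕ => (∏ i, x i ^ (t i + 1)) ^ (-ε)) (∏ i, (x i ^ ε - 1)⁻¹) := by
  have hx0 (i) : 0 ≤ x i := by linarith [hx i]
  have hgeom (i) : HasSum (fun k : ℕ => (x i ^ ε)⁻¹ ^ (k + 1)) (x i ^ ε - 1)⁻¹ :=
    hasSum_inv_pow_succ ((Real.one_lt_rpow (hx i) hε).trans_le (le_abs_self _))
  have hfactor (t : ι → ℕ) :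
      (∏ i, x i ^ (t i + 1)) ^ (-ε) = ∏ i, (x i ^ ε)⁻¹ ^ (t i + 1) := by
    rw [← Real.finsetProd_rpow _ _ fun i _ => pow_nonneg (hx0 i) _]
    refine Finset.prod_congr rfl fun i _ => ?_
    rw [← Real.rpow_neg (hx0 i), ← Real.rpow_pow_comm (hx0 i)]
  simpa only [hfactor] using
    (summable_norm_and_hasSum_prod_pi hgeom fun i => (hgeom i).summable.norm).2

theorem sum_succ_mul_logb (b : ℝ) (hx : ∀ i, x i ≠ 0) (t : ι → ℕ) :
    ∑ i, ((t i : ℝ) + 1) * Real.logb b (x i) = Real.logb b (∏ i, x i ^ (t i + 1)) := by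
  rw [Real.logb_prod _ _ fun i _ => pow_ne_zero _ (hx i)]
  simp only [Real.logb_pow, Nat.cast_add_one]

theorem le_prod_pow_succ [Nonempty ι] {a : ℝ} (ha : 1 ≤ a) (hx : ∀ i, a ≤ x i) (t : ι → ℕ) :
    a ≤ ∏ i, x i ^ (t i + 1) := by
  obtain ⟨i⟩ := ‹Nonempty ι›
  have hone (j) : 1 ≤ x j := ha.trans (hx j)
  calc a ≤ x i := hx i
    _ ≤ x i ^ (t i + 1) := le_self_pow₀ (hone i) (t i).succ_ne_zero
    _ = ∏ j ∈ {i}, x j ^ (t j + 1) := (Finset.prod_singleton _ _).symm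
    _ ≤ ∏ j, x j ^ (t j + 1) := Finset.prod_le_prod_of_subset_of_one_le (Finset.subset_univ _)
        (fun j _ => pow_nonneg (zero_le_one.trans (hone j)) _) fun j _ _ => one_le_pow₀ (hone j)

end ProdPow

theorem prod_le_prod_max_one {ι R : Type*} [CommMonoidWithZero R] [LinearOrder R]
    [ZeroLEOneClass R] [PosMulMono R] {f : ι → R} {S T : Finset ι} (hf : ∀ i ∈ S, 0 ≤ f i)
    (hfT : ∀ i ∈ S, i ∉ T → f i ≤ 1) : ∏ i ∈ S, f i ≤ ∏ i ∈ T, max (f i) 1 := by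
  classical
  calc ∏ i ∈ S, f i
      ≤ ∏ i ∈ S ∩ T, f i := Finset.prod_le_prod_of_subset_of_le_one Finset.inter_subset_left hf
        fun i hi hiT => hfT i hi fun h => hiT (Finset.mem_inter.2 ⟨hi, h⟩)
    _ ≤ ∏ i ∈ S ∩ T, max (f i) 1 := Finset.prod_le_prod
        (fun i hi => hf i (Finset.mem_of_mem_inter_left hi)) fun i _ => le_max_left _ _
    _ ≤ ∏ i ∈ T, max (f i) 1 := Finset.prod_le_prod_of_subset_of_one_le Finset.inter_subset_right
        (fun i _ => zero_le_one.trans (le_max_right _ _)) fun i _ _ => le_max_right _ _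

section TendstoCofinite

variable {ι : Type*} {g : ι → ℝ}

theorem exists_prod_inv_sub_one_le (hg : Tendsto g cofinite atTop) :
    ∃ M : ℝ, 0 < M ∧ ∀ S : Finset ι, (∀ i ∈ S, 1 < g i) → ∏ i ∈ S, (g i - 1)⁻¹ ≤ M := by
  have hfin : {i | ¬2 ≤ g i}.Finite := hg.eventually_ge_atTop 2
  refine ⟨∏ i ∈ hfin.toFinset, max (g i - 1)⁻¹ 1, by positivity, fun S hS => ?_⟩
  refine prod_le_prod_max_one (fun i hi => ?_) fun i _ hi => inv_le_one_of_one_le₀ ?_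
  · exact inv_nonneg.2 (sub_nonneg.2 (hS i hi).le)
  · have : 2 ≤ g i := by simpa using hi
    linarith

theorem exists_lt_forall_le_of_lt (hg : Tendsto g cofinite atTop) (c : ℝ) :
    ∃ a : ℝ, c < a ∧ ∀ i, c < g i → a ≤ g i := by
  have hfin : {i | ¬c + 1 ≤ g i}.Finite := hg.eventually_ge_atTop (c + 1)
  have hsmall : ∀ᶠ a in 𝓝[>] c, ∀ i ∈ {i | ¬c + 1 ≤ g i}, c < g i → a ≤ g i := by
    rw [hfin.eventually_all]
    intro i _
    by_cases hi : c < g i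
    · filter_upwards [Ioc_mem_nhdsGT hi] with a ha _ using ha.2
    · exact .of_forall fun _ h => absurd h hi
  obtain ⟨a, ha, haS, hac⟩ :=
    (eventually_mem_nhdsWithin.and (hsmall.and (Ioc_mem_nhdsGT (lt_add_one c)))).exists
  refine ⟨a, ha, fun i hi => ?_⟩
  by_cases hlarge : c + 1 ≤ g i
  · exact hac.2.trans hlarge
  · exact haS i hlarge hi

end TendstoCofinite

theorem exists_tsum_sum_logb_rpow_div_prod_le {a b : ℝ} (ha : 1 < a) (hb : 1 < b) (s : ℝ) :
    ∃ K : ℝ, 0 < K ∧ ∀ (κ : Type*) [Fintype κ] [Nonempty κ] (x : κ → ℝ), (∀ i, a ≤ x i) →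
      Summable (fun t : κ → ℕ =>
        (∑ i, ((t i : ℝ) + 1) * Real.logb b (x i)) ^ s / ∏ i, x i ^ (t i + 1)) ∧
      ∑' t : κ → ℕ, (∑ i, ((t i : ℝ) + 1) * Real.logb b (x i)) ^ s / ∏ i, x i ^ (t i + 1) ≤
        K * ∏ i, (x i ^ (1 / 2 : ℝ) - 1)⁻¹ := by
  obtain ⟨K, hK, hbound⟩ := exists_logb_rpow_le_mul_rpow ha hb s one_half_pos
  refine ⟨K, hK, fun κ _ _ x hx => ?_⟩
  have hx1 (i) : 1 < x i := ha.trans_le (hx i)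
  have hprod (t : κ → ℕ) : a ≤ ∏ i, x i ^ (t i + 1) := le_prod_pow_succ ha.le hx t
  simp only [sum_succ_mul_logb b fun i => (one_pos.trans (hx1 i)).ne']
  have hmajorant := (hasSum_prod_pow_succ_rpow_neg one_half_pos hx1).mul_left K
  have hnonneg (t : κ → ℕ) :
      0 ≤ Real.logb b (∏ i, x i ^ (t i + 1)) ^ s / ∏ i, x i ^ (t i + 1) :=
    div_nonneg (Real.rpow_nonneg (Real.logb_nonneg hb (by linarith [hprod t])) s)
      (by linarith [hprod t])
  have hle (t : κ → ℕ) : Real.logb b (∏ i, x i ^ (t i + 1)) ^ s / ∏ i, x i ^ (t i + 1) ≤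
      K * (∏ i, x i ^ (t i + 1)) ^ (-(1 / 2 : ℝ)) := by
    have hpos : 0 < ∏ i, x i ^ (t i + 1) := by linarith [hprod t]
    rw [div_le_iff₀ hpos, mul_assoc, ← Real.rpow_add_one hpos.ne']
    norm_num only
    exact hbound _ (hprod t)
  have hsummable := hmajorant.summable.of_nonneg_of_le hnonneg hle
  exact ⟨hsummable, hasSum_le hle hsummable.hasSum hmajorant⟩

theorem statement14_general {ι : Type*} {g : ι → ℝ} (hg : Tendsto g cofinite atTop) {b : ℝ}
    (hb : 1 < b) (s : ℝ) :
    ∃ C : ℝ, 0 < C ∧ ∀ r : ℕ, 1 ≤ r → ∀ n : Fin r → ι,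
      Function.Injective n → (∀ i, 1 < g (n i)) →
      Summable (fun t : Fin r → ℕ =>
        (∑ i, ((t i : ℝ) + 1) * Real.logb b (g (n i))) ^ s /
          ∏ i, g (n i) ^ (t i + 1)) ∧
      ∑' t : Fin r → ℕ,
          (∑ i, ((t i : ℝ) + 1) * Real.logb b (g (n i))) ^ s /
            ∏ i, g (n i) ^ (t i + 1) < C := by
  classical
  obtain ⟨a, ha, hga⟩ := exists_lt_forall_le_of_lt hg 1
  obtain ⟨K, hK, hsum⟩ := exists_tsum_sum_logb_rpow_div_prod_le ha hb s
  obtain ⟨M, hM, hprod⟩ :=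
    exists_prod_inv_sub_one_le ((tendsto_rpow_atTop one_half_pos).comp hg)
  refine ⟨K * M + 1, by positivity, fun r hr n hinj hn => ?_⟩
  have : Nonempty (Fin r) := ⟨⟨0, hr⟩⟩
  have hfactors : ∏ i, (g (n i) ^ (1 / 2 : ℝ) - 1)⁻¹ ≤ M := by
    rw [← Finset.prod_image (f := fun j => (g j ^ (1 / 2 : ℝ) - 1)⁻¹) hinj.injOn]
    refine hprod _ fun j hj => ?_
    obtain ⟨i, -, rfl⟩ := Finset.mem_image.1 hj
    exact Real.one_lt_rpow (hn i) one_half_pos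
  obtain ⟨hsummable, hle⟩ := hsum (Fin r) (fun i => g (n i)) fun i => hga _ (hn i)
  refine ⟨hsummable, lt_add_of_le_of_pos (hle.trans ?_) one_pos⟩
  gcongr

theorem statement14 (s : ℝ) :
    ∃ C : ℝ, 0 < C ∧ ∀ r : ℕ, 1 ≤ r → ∀ n : Fin r → ℕ,
      Function.Injective n → (∀ i, 2 ≤ n i) →
      Summable (fun t : Fin r → ℕ =>
        (∑ i, ((t i : ℝ) + 1) * Real.logb 2 (n i)) ^ s /
          ∏ i, (n i : ℝ) ^ (t i + 1)) ∧
      ∑' t : Fin r → ℕ,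
          (∑ i, ((t i : ℝ) + 1) * Real.logb 2 (n i)) ^ s /
            ∏ i, (n i : ℝ) ^ (t i + 1) < C := by
  have hcast : Tendsto (Nat.cast : ℕ → ℝ) cofinite atTop :=
    Nat.cofinite_eq_atTop ▸ tendsto_natCast_atTop_atTop
  obtain ⟨C, hC, hbound⟩ := statement14_general hcast one_lt_two s
  exact ⟨C, hC, fun r hr n hinj hn => hbound r hr n hinj fun i => Nat.one_lt_cast.2 (hn i)⟩
end

section
/- Let S = {p_1, …, p_k} be a set of k distinct primes, let q ∈ A_S, and let K ≥ 1 be a real number. Then ∑_{d} d/q ≤ ((log₂ K + 2)^{k−1}/K) · ∏_{i=1}^k p_i/(p_i − 1), where the sum is over all positive divisors d of q with d·K < q. -/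
/-!
The map `d ↦ q / d` turns the sum into `T(q, K) = ∑ 1/e` over the divisors `e > K` of `q`. Peel off
a prime power: if `q = p ^ n * m` with `p ∤ m`, then `T(q, K) = ∑ₐ p⁻ᵃ T(m, K / pᵃ)`. The exponents
with `pᵃ > K` contribute at most a geometric tail times `∑_{e ∣ m} 1/e`, which is
`O(1 / K)`. There are at most `L + 1` exponents with `pᵃ ≤ K`, where `L = log K`, and each of them
contributes as much as the inductive bound for `T(m, K)`, because a bound of the form `C / y` on
`T(m, y)` is invariant under this rescaling. Hence each new prime replaces the constant `G` in the
bound by `(L + 1) G + 1`, and `k` primes lead to `∑_{i < k} (L + 1)ⁱ ≤ (L + 2)ᵏ⁻¹`.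
-/

open Finset Real

section Geometric

lemma geom_sum_succ_le_add_one_pow {R : Type*} [CommSemiring R] [PartialOrder R]
    [IsOrderedRing R] {x : R} (hx : 0 ≤ x) (n : ℕ) :
    ∑ i ∈ range (n + 1), x ^ i ≤ (x + 1) ^ n := by
  induction n with
  | zero => simp
  | succ n ih =>
    calc ∑ i ∈ range (n + 1 + 1), x ^ i = x * ∑ i ∈ range (n + 1), x ^ i + 1 := geom_sum_succ
      _ ≤ x * (x + 1) ^ n + (x + 1) ^ n := by
        gcongr
        exact one_le_pow₀ (le_add_of_nonneg_left hx)
      _ = (x + 1) ^ (n + 1) := by ring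

variable {F : Type*} [Field F] [LinearOrder F] [IsStrictOrderedRing F] {x : F}

lemma one_le_div_sub_one (hx : 1 < x) : 1 ≤ x / (x - 1) := by
  rw [one_le_div (sub_pos.2 hx)]
  linarith

lemma geom_sum_Ico_inv_le (hx : 1 < x) (m n : ℕ) :
    ∑ a ∈ Ico m n, x⁻¹ ^ a ≤ (x ^ m)⁻¹ * (x / (x - 1)) := by
  have hx0 : x ≠ 0 := by positivity
  calc ∑ a ∈ Ico m n, x⁻¹ ^ a ≤ x⁻¹ ^ m / (1 - x⁻¹) :=
        geom_sum_Ico_le_of_lt_one (by positivity) (inv_lt_one_of_one_lt₀ hx)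
    _ = (x ^ m)⁻¹ * (x / (x - 1)) := by
        rw [inv_pow, div_eq_mul_inv, ← inv_div, sub_div, div_self hx0, one_div]

lemma geom_sum_inv_le (hx : 1 < x) (n : ℕ) : ∑ a ∈ range n, x⁻¹ ^ a ≤ x / (x - 1) := by
  simpa using geom_sum_Ico_inv_le hx 0 n

lemma sum_inv_pow_filter_lt_pow_le [Archimedean F] (hx : 1 < x) {K : F} (hK : 0 < K) (n : ℕ) :
    ∑ a ∈ range n with K < x ^ a, x⁻¹ ^ a ≤ K⁻¹ * (x / (x - 1)) := by
  have hlarge : ∃ a : ℕ, K < x ^ a := pow_unbounded_of_one_lt K hx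
  calc ∑ a ∈ range n with K < x ^ a, x⁻¹ ^ a ≤ ∑ a ∈ Ico (Nat.find hlarge) n, x⁻¹ ^ a := by
        refine sum_le_sum_of_subset_of_nonneg (fun a ha => ?_) fun _ _ _ => by positivity
        obtain ⟨han, hKa⟩ := mem_filter.1 ha
        exact mem_Ico.2 ⟨Nat.find_min' hlarge hKa, mem_range.1 han⟩
    _ ≤ (x ^ Nat.find hlarge)⁻¹ * (x / (x - 1)) := geom_sum_Ico_inv_le hx _ n
    _ ≤ K⁻¹ * (x / (x - 1)) := by
        refine mul_le_mul_of_nonneg_right ?_ (zero_le_one.trans (one_le_div_sub_one hx))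
        exact inv_anti₀ hK (Nat.find_spec hlarge).le

lemma card_filter_pow_le_le_logb {b x K : ℝ} (hb : 1 < b) (hbx : b ≤ x) (hK : 1 ≤ K) (n : ℕ) :
    (#{a ∈ range n | x ^ a ≤ K} : ℝ) ≤ logb b K + 1 := by
  have hlog : 0 ≤ logb b K := logb_nonneg hb hK
  have hsub : {a ∈ range n | x ^ a ≤ K} ⊆ range (⌊logb b K⌋₊ + 1) := fun a ha => by
    have hba : b ^ a ≤ K := (pow_le_pow_left₀ (by positivity) hbx a).trans (mem_filter.1 ha).2
    rw [mem_range, Nat.lt_succ_iff, Nat.le_floor_iff hlog,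
      le_logb_iff_rpow_le hb (by positivity), rpow_natCast]
    exact hba
  calc (#{a ∈ range n | x ^ a ≤ K} : ℝ) ≤ (⌊logb b K⌋₊ + 1 : ℕ) :=
        mod_cast card_range (⌊logb b K⌋₊ + 1) ▸ card_le_card hsub
    _ ≤ logb b K + 1 := by
        push_cast
        gcongr
        exact Nat.floor_le hlog

end Geometric

section Divisors

/-- The sum of the reciprocals of the divisors of `q` that exceed `K`. Replacing each divisor `d` by
`q / d` shows that it equals `∑ d / q` over the divisors with `d * K < q`. -/
noncomputable def recipDivisorTail (q : ℕ) (K : ℝ) : ℝ :=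
  ∑ e ∈ q.divisors with K < ((e : ℕ) : ℝ), (e : ℝ)⁻¹

lemma sum_filter_divisors_div_eq_recipDivisorTail (q : ℕ) (K : ℝ) :
    ∑ d ∈ q.divisors with ((d : ℕ) : ℝ) * K < q, (d : ℝ) / q = recipDivisorTail q K := by
  rw [recipDivisorTail, sum_filter, sum_filter,
    ← Nat.sum_div_divisors q fun e : ℕ => if K < e then (e : ℝ)⁻¹ else 0]
  refine sum_congr rfl fun d hd => ?_
  have hd0 : (0 : ℝ) < d := mod_cast Nat.pos_of_mem_divisors hd
  simp only [Nat.cast_div (Nat.dvd_of_mem_divisors hd) hd0.ne', inv_div, lt_div_iff₀ hd0,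
    mul_comm K]

lemma recipDivisorTail_le_sum_inv_divisors (q : ℕ) (K : ℝ) :
    recipDivisorTail q K ≤ ∑ e ∈ q.divisors, (e : ℝ)⁻¹ :=
  sum_le_sum_of_subset_of_nonneg (filter_subset _ _) fun _ _ _ => by positivity

variable {p m : ℕ}

lemma sum_divisors_prime_pow_mul {M : Type*} [AddCommMonoid M] (hp : p.Prime) (hpm : ¬ p ∣ m)
    (n : ℕ) (f : ℕ → M) :
    ∑ e ∈ (p ^ n * m).divisors, f e =
      ∑ a ∈ range (n + 1), ∑ e ∈ m.divisors, f (p ^ a * e) := by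
  have hcop : (p ^ n).Coprime m := (hp.coprime_iff_not_dvd.2 hpm).pow_left n
  rw [Nat.divisors_mul, mul_def, sum_image hcop.mul_injOn_divisors, sum_product,
    Nat.sum_divisors_prime_pow hp]

lemma primeFactors_prime_pow_mul (hp : p.Prime) (hpm : ¬ p ∣ m) {n : ℕ} (hn : n ≠ 0) :
    (p ^ n * m).primeFactors =
      cons p m.primeFactors fun h => hpm (Nat.dvd_of_mem_primeFactors h) := by
  rw [((hp.coprime_iff_not_dvd.2 hpm).pow_left n).primeFactors_mul,
    Nat.primeFactors_prime_pow hn hp, cons_eq_insert, insert_eq]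

lemma one_le_prod_primeFactors_div_sub_one (q : ℕ) :
    1 ≤ ∏ p ∈ q.primeFactors, (p : ℝ) / (p - 1) :=
  Finset.one_le_prod fun _ hp =>
    one_le_div_sub_one (mod_cast (Nat.prime_of_mem_primeFactors hp).one_lt)

lemma sum_inv_divisors_le (q : ℕ) :
    ∑ e ∈ q.divisors, (e : ℝ)⁻¹ ≤ ∏ p ∈ q.primeFactors, (p : ℝ) / (p - 1) := by
  induction q using Nat.recOnPrimePow with
  | zero => simp
  | one => simp
  | prime_pow_mul m p n hp hpm hn ih =>
    have hp1 : (1 : ℝ) < p := mod_cast hp.one_lt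
    rw [primeFactors_prime_pow_mul hp hpm hn.ne', prod_cons, sum_divisors_prime_pow_mul hp hpm]
    calc ∑ a ∈ range (n + 1), ∑ e ∈ m.divisors, ((p ^ a * e : ℕ) : ℝ)⁻¹
        = (∑ a ∈ range (n + 1), (p : ℝ)⁻¹ ^ a) * ∑ e ∈ m.divisors, (e : ℝ)⁻¹ := by
          simp only [sum_mul_sum, Nat.cast_mul, Nat.cast_pow, mul_inv, inv_pow]
      _ ≤ (p : ℝ) / (p - 1) * ∏ r ∈ m.primeFactors, (r : ℝ) / (r - 1) := by
          refine mul_le_mul (geom_sum_inv_le hp1 (n + 1)) ih (by positivity) ?_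
          exact zero_le_one.trans (one_le_div_sub_one hp1)

lemma recipDivisorTail_prime_pow_mul (hp : p.Prime) (hpm : ¬ p ∣ m) (n : ℕ) (K : ℝ) :
    recipDivisorTail (p ^ n * m) K =
      ∑ a ∈ range (n + 1), (p : ℝ)⁻¹ ^ a * recipDivisorTail m (K / (p : ℝ) ^ a) := by
  simp only [recipDivisorTail, sum_filter, sum_divisors_prime_pow_mul hp hpm, mul_sum]
  refine sum_congr rfl fun a _ => sum_congr rfl fun e _ => ?_
  have hpa : (0 : ℝ) < (p : ℝ) ^ a := pow_pos (mod_cast hp.pos) a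
  simp only [Nat.cast_mul, Nat.cast_pow, div_lt_iff₀' hpa, mul_ite, mul_zero, mul_inv, inv_pow]

lemma sum_filter_lt_pow_recipDivisorTail_le {x : ℝ} (hx : 1 < x) {K : ℝ} (hK : 0 < K)
    (m n : ℕ) :
    ∑ a ∈ range n with K < x ^ a, x⁻¹ ^ a * recipDivisorTail m (K / x ^ a) ≤
      K⁻¹ * (x / (x - 1)) * ∑ e ∈ m.divisors, (e : ℝ)⁻¹ := by
  calc ∑ a ∈ range n with K < x ^ a, x⁻¹ ^ a * recipDivisorTail m (K / x ^ a)
      ≤ (∑ a ∈ range n with K < x ^ a, x⁻¹ ^ a) * ∑ e ∈ m.divisors, (e : ℝ)⁻¹ := by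
        rw [sum_mul]
        gcongr
        exact recipDivisorTail_le_sum_inv_divisors _ _
    _ ≤ K⁻¹ * (x / (x - 1)) * ∑ e ∈ m.divisors, (e : ℝ)⁻¹ := by
        gcongr
        exact sum_inv_pow_filter_lt_pow_le hx hK n

lemma sum_filter_pow_le_recipDivisorTail_le {b x K C : ℝ} (hb : 1 < b) (hbx : b ≤ x)
    (hK : 1 ≤ K) (hC : 0 ≤ C)
    (hm : ∀ y ∈ Set.Icc 1 K, recipDivisorTail m y ≤ C / y) (n : ℕ) :
    ∑ a ∈ range n with x ^ a ≤ K, x⁻¹ ^ a * recipDivisorTail m (K / x ^ a) ≤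
      (logb b K + 1) * (C / K) := by
  have hx : 1 < x := hb.trans_le hbx
  have hterm : ∀ a ∈ {a ∈ range n | x ^ a ≤ K},
      x⁻¹ ^ a * recipDivisorTail m (K / x ^ a) ≤ C / K := fun a ha => by
    have hy : K / x ^ a ∈ Set.Icc 1 K :=
      ⟨(one_le_div (by positivity)).2 (mem_filter.1 ha).2,
        div_le_self (by positivity) (one_le_pow₀ hx.le)⟩
    calc x⁻¹ ^ a * recipDivisorTail m (K / x ^ a) ≤ x⁻¹ ^ a * (C / (K / x ^ a)) := by
          gcongr
          exact hm _ hy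
      _ = C / K := by rw [inv_pow]; field_simp
  calc ∑ a ∈ range n with x ^ a ≤ K, x⁻¹ ^ a * recipDivisorTail m (K / x ^ a)
      ≤ #{a ∈ range n | x ^ a ≤ K} * (C / K) := by
        simpa only [nsmul_eq_mul] using sum_le_card_nsmul _ _ _ hterm
    _ ≤ (logb b K + 1) * (C / K) := by
        gcongr
        exact card_filter_pow_le_le_logb hb hbx hK n

lemma recipDivisorTail_prime_pow_mul_le (hp : p.Prime) (hpm : ¬ p ∣ m) {b K C : ℝ} (hb : 1 < b)
    (hbp : b ≤ p) (hK : 1 ≤ K) (hC : 0 ≤ C)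
    (hm : ∀ y ∈ Set.Icc 1 K, recipDivisorTail m y ≤ C / y) (n : ℕ) :
    recipDivisorTail (p ^ n * m) K ≤
      ((logb b K + 1) * C + (p : ℝ) / (p - 1) * ∑ e ∈ m.divisors, (e : ℝ)⁻¹) / K := by
  have hsmall := sum_filter_pow_le_recipDivisorTail_le hb hbp hK hC hm (n + 1)
  have hlarge := sum_filter_lt_pow_recipDivisorTail_le (hb.trans_le hbp)
    (zero_lt_one.trans_le hK) m (n + 1)
  rw [recipDivisorTail_prime_pow_mul hp hpm,
    ← sum_filter_add_sum_filter_not _ fun a => (p : ℝ) ^ a ≤ K]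
  simp only [not_le]
  exact (add_le_add hsmall hlarge).trans_eq (by ring)

theorem recipDivisorTail_le {b : ℝ} (hb : 1 < b) {q : ℕ} (hbq : ∀ p ∈ q.primeFactors, b ≤ p)
    {K : ℝ} (hK : 1 ≤ K) :
    recipDivisorTail q K ≤ (∑ i ∈ range #q.primeFactors, (logb b K + 1) ^ i) / K *
      ∏ p ∈ q.primeFactors, (p : ℝ) / (p - 1) := by
  induction q using Nat.recOnPrimePow generalizing K with
  | zero => simp [recipDivisorTail]
  | one => simp [recipDivisorTail, filter_singleton, hK.not_gt]
  | prime_pow_mul m p n hp hpm hn ih =>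
    rw [primeFactors_prime_pow_mul hp hpm hn.ne'] at hbq ⊢
    rw [forall_mem_cons] at hbq
    rw [prod_cons, card_cons, geom_sum_succ]
    set P := ∏ r ∈ m.primeFactors, (r : ℝ) / (r - 1)
    set G : ℝ → ℝ := fun y => ∑ i ∈ range #m.primeFactors, (logb b y + 1) ^ i
    have hratio : 1 ≤ (p : ℝ) / (p - 1) := one_le_div_sub_one (mod_cast hp.one_lt)
    have hlog : 0 ≤ logb b K := logb_nonneg hb hK
    have hP : 0 ≤ P := zero_le_one.trans (one_le_prod_primeFactors_div_sub_one m)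
    have hG : 0 ≤ G K := sum_nonneg fun _ _ => by positivity
    have hm : ∀ y ∈ Set.Icc 1 K, recipDivisorTail m y ≤ G K * P / y := fun y ⟨hy, hyK⟩ => by
      have hlogy : 0 ≤ logb b y := logb_nonneg hb hy
      have hGy : G y ≤ G K := sum_le_sum fun i _ => by gcongr
      calc recipDivisorTail m y ≤ G y / y * P := ih hbq.2 hy
        _ = G y * P / y := by ring
        _ ≤ G K * P / y := by gcongr
    calc recipDivisorTail (p ^ n * m) K
        ≤ ((logb b K + 1) * (G K * P) + p / (p - 1) * ∑ e ∈ m.divisors, (e : ℝ)⁻¹) / K :=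
          recipDivisorTail_prime_pow_mul_le hp hpm hb hbq.1 hK (by positivity) hm n
      _ ≤ (p / (p - 1) * ((logb b K + 1) * (G K * P)) + p / (p - 1) * P) / K := by
          refine div_le_div_of_nonneg_right (add_le_add ?_ ?_) (by positivity)
          · exact le_mul_of_one_le_left (by positivity) hratio
          · exact mul_le_mul_of_nonneg_left (sum_inv_divisors_le m) (by positivity)
      _ = ((logb b K + 1) * G K + 1) / K * (p / (p - 1) * P) := by ring

end Divisors

theorem statement15_general {S : Finset ℕ} (hS : S.Nonempty) {b : ℝ} (hb : 1 < b)
    (hbS : ∀ p ∈ S, b ≤ p) {q : ℕ} (hqS : ∀ p : ℕ, p.Prime → p ∣ q → p ∈ S)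
    {K : ℝ} (hK : 1 ≤ K) :
    ∑ d ∈ q.divisors with ((d : ℕ) : ℝ) * K < q, (d : ℝ) / q ≤
      (logb b K + 2) ^ (#S - 1) / K * ∏ p ∈ S, (p : ℝ) / (p - 1) := by
  have hsub : q.primeFactors ⊆ S := fun p hp =>
    hqS p (Nat.prime_of_mem_primeFactors hp) (Nat.dvd_of_mem_primeFactors hp)
  have hlog : 0 ≤ logb b K := logb_nonneg hb hK
  have hgeom : ∑ i ∈ range #q.primeFactors, (logb b K + 1) ^ i ≤ (logb b K + 2) ^ (#S - 1) :=
    calc ∑ i ∈ range #q.primeFactors, (logb b K + 1) ^ i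
        ≤ ∑ i ∈ range (#S - 1 + 1), (logb b K + 1) ^ i := by
          rw [Nat.sub_add_cancel hS.card_pos]
          exact sum_le_sum_of_subset_of_nonneg (range_mono (card_le_card hsub))
            fun _ _ _ => by positivity
      _ ≤ (logb b K + 1 + 1) ^ (#S - 1) := geom_sum_succ_le_add_one_pow (by positivity) _
      _ = (logb b K + 2) ^ (#S - 1) := by ring
  have hprod : ∏ p ∈ q.primeFactors, (p : ℝ) / (p - 1) ≤ ∏ p ∈ S, (p : ℝ) / (p - 1) :=
    prod_le_prod_of_subset_of_one_le hsub
      (fun p hp => zero_le_one.trans (one_le_div_sub_one (hb.trans_le (hbS p (hsub hp)))))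
      fun p hp _ => one_le_div_sub_one (hb.trans_le (hbS p hp))
  rw [sum_filter_divisors_div_eq_recipDivisorTail]
  calc recipDivisorTail q K
      ≤ (∑ i ∈ range #q.primeFactors, (logb b K + 1) ^ i) / K *
          ∏ p ∈ q.primeFactors, (p : ℝ) / (p - 1) :=
        recipDivisorTail_le hb (fun p hp => hbS p (hsub hp)) hK
    _ ≤ (logb b K + 2) ^ (#S - 1) / K * ∏ p ∈ S, (p : ℝ) / (p - 1) :=
        mul_le_mul (div_le_div_of_nonneg_right hgeom (by positivity)) hprod
          (zero_le_one.trans (one_le_prod_primeFactors_div_sub_one q)) (by positivity)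

open scoped Classical in
theorem statement15
    (k : ℕ) (hk : 1 ≤ k)
    (S : Finset ℕ) (hS : ∀ p ∈ S, p.Prime) (hcard : S.card = k)
    (q : ℕ) (hq : 0 < q) (hqS : ∀ p : ℕ, p.Prime → p ∣ q → p ∈ S)
    (K : ℝ) (hK : 1 ≤ K) :
    ∑ d ∈ q.divisors.filter (fun d : ℕ => (d : ℝ) * K < (q : ℝ)), (d : ℝ) / (q : ℝ) ≤
      (Real.logb 2 K + 2) ^ (k - 1) / K * ∏ p ∈ S, (p : ℝ) / ((p : ℝ) - 1) := by
  subst hcard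
  exact statement15_general (card_pos.1 hk) one_lt_two
    (fun p hp => mod_cast (hS p hp).two_le) hqS hK
end
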